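/- arXiv:2312.15303 — 2 statements merged into one kernel-verified Lean document; each statement's English description precedes it below -/
import Mathlib

section
/- For every interval D ⊆ [0,1] and every integer n ≥ 0, the integral ∫_D (log q_min(x,δ) + (1/2)·log δ)^n dx converges, as δ → 0⁺, to μ_n·Leb(D), where μ_n = ∫_ℝ s^n·η_log(s) ds. -/
open MeasureTheory Filter

/-- The limiting density of the logarithm of smallest denominators. -/
noncomputable def etaLog (s : ℝ) : ℝ :=
  if s ≤ 0 then 6 / Real.pi ^ 2 * Real.exp (2 * s)
  else if s ≤ Real.log 2 then 6 / Real.pi ^ 2 * (-Real.exp (2 * s) + 2 + 4 * s)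
  else 6 / Real.pi ^ 2 * (-Real.exp (2 * s) + 2
    + 2 * Real.exp (2 * s) * Real.sqrt (1 / 4 - Real.exp (-2 * s))
    - 4 * Real.log (1 / 2 + Real.sqrt (1 / 4 - Real.exp (-2 * s))))

/-- The smallest denominator of all rationals in the interval `(x - δ/2, x + δ/2)`. -/
noncomputable def qmin (x δ : ℝ) : ℕ :=
  sInf {q : ℕ | 0 < q ∧ ∃ p : ℤ, x - δ / 2 < (p : ℝ) / q ∧ (p : ℝ) / q < x + δ / 2}



open Finset in
/-- number of solutions of `c * z = 0` in `ZMod q` -/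
def kerCard (q : ℕ) [NeZero q] (c : ZMod q) : ℕ := (univ.filter (fun z : ZMod q => c * z = 0)).card

open Finset in
lemma kerCard_fiber {q : ℕ} [NeZero q] (c e : ZMod q) :
    (univ.filter (fun z : ZMod q => c * z = e)).card ≤ kerCard q c := by
  classical
  by_cases h : ∃ z0 : ZMod q, c * z0 = e
  · obtain ⟨z0, hz0⟩ := h
    unfold kerCard
    apply card_le_card_of_injOn (fun z => z - z0)
    · intro z hz
      simp only [coe_filter, mem_univ, true_and, Set.mem_ofPred_eq] at hz ⊢
      rw [mul_sub, hz, hz0, sub_self]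
    · intro a _ b _ hab
      simpa using hab
  · push Not at h
    rw [filter_false_of_mem]
    · simp
    · intro z _; exact h z

open Finset in
lemma kerCard_mul {q : ℕ} [NeZero q] (b c : ZMod q) :
    kerCard q (b * c) ≤ kerCard q b * kerCard q c := by
  classical
  have h : ∀ y ∈ univ.filter (fun y : ZMod q => b * y = 0),
      ((univ.filter (fun z : ZMod q => (b * c) * z = 0)).filter (fun z => c * z = y)).card
        ≤ kerCard q c := by
    intro y _
    refine le_trans (card_le_card ?_) (kerCard_fiber c y)
    intro z; simp
  have := card_le_mul_card_image_of_maps_to (f := fun z => c * z)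
    (s := univ.filter (fun z : ZMod q => (b * c) * z = 0))
    (t := univ.filter (fun y : ZMod q => b * y = 0))
    (by intro z hz; simpa [mul_assoc] using hz) (kerCard q c) h
  unfold kerCard at this ⊢
  rw [mul_comm (Finset.card _)]; exact this

open Finset in
lemma kerCard_natCast_le {q : ℕ} [NeZero q] (n : ℕ) (hn : 0 < n) : kerCard q (n : ZMod q) ≤ n := by
  classical
  have := IsAddCyclic.card_nsmul_eq_zero_le (α := ZMod q) hn
  unfold kerCard
  simpa [nsmul_eq_mul] using this

lemma kerCard_intCast_le {q : ℕ} [NeZero q] (n : ℤ) (hn : n ≠ 0) :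
    kerCard q (n : ZMod q) ≤ n.natAbs := by
  have h := kerCard_natCast_le (q := q) n.natAbs (Int.natAbs_pos.2 hn)
  refine le_trans (le_of_eq ?_) h
  rcases Int.natAbs_eq n with h1 | h1
  · have h2 : (n : ZMod q) = ((n.natAbs : ℕ) : ZMod q) := by
      conv_lhs => rw [h1]
      rw [Int.cast_natCast]
    rw [h2]
  · have h2 : (n : ZMod q) = -((n.natAbs : ℕ) : ZMod q) := by
      conv_lhs => rw [h1]
      rw [Int.cast_neg, Int.cast_natCast]
    rw [h2]
    unfold kerCard; congr 1; ext z; simp only [neg_mul, neg_eq_zero]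

lemma kerCard_le_gcd {q : ℕ} [NeZero q] (a : ZMod q) : kerCard q a ≤ Nat.gcd q a.val := by
  have hq : 0 < q := NeZero.pos q
  refine le_trans ?_ (kerCard_natCast_le (q := q) (Nat.gcd q a.val) (Nat.gcd_pos_of_pos_left _ hq))
  unfold kerCard
  apply Finset.card_le_card
  intro z hz
  simp only [Finset.mem_filter, Finset.mem_univ, true_and] at hz ⊢
  have hb : ((Nat.gcd q a.val : ℤ) : ZMod q) = a * (Nat.gcdB q a.val : ℤ) := by
    rw [Nat.gcd_eq_gcd_ab]; push_cast; simp
  have hb' : ((Nat.gcd q a.val : ℕ) : ZMod q) = a * (Nat.gcdB q a.val : ℤ) := by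
    rw [← hb]; simp
  rw [hb', mul_right_comm, hz, zero_mul]

open Finset in
lemma sum_kerCard_le (q : ℕ) [NeZero q] : ∑ a : ZMod q, kerCard q a ≤ q * q.divisors.card := by
  have hq : 0 < q := NeZero.pos q
  calc ∑ a : ZMod q, kerCard q a ≤ ∑ a : ZMod q, Nat.gcd q a.val :=
        sum_le_sum fun a _ => kerCard_le_gcd a
    _ = ∑ k ∈ range q, Nat.gcd q k := by
        refine sum_bij (fun a _ => a.val) ?_ ?_ ?_ ?_
        · intro a _; simpa using a.val_lt
        · intro a _ b _ h; exact ZMod.val_injective q h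
        · intro k hk; exact ⟨(k : ZMod q), mem_univ _, ZMod.val_cast_of_lt (mem_range.1 hk)⟩
        · intro a _; rfl
    _ = ∑ d ∈ q.divisors, ∑ k ∈ range q with q.gcd k = d, Nat.gcd q k := by
        rw [sum_fiberwise_of_maps_to]
        intro k _
        simp [Nat.gcd_dvd_left, hq.ne']
    _ ≤ ∑ d ∈ q.divisors, q := by
        refine sum_le_sum fun d hd => ?_
        have hd' := Nat.dvd_of_mem_divisors hd
        rw [sum_congr rfl (g := fun _ => d) (fun k hk => (mem_filter.1 hk).2), sum_const,
          ← Nat.totient_div_of_dvd hd', smul_eq_mul]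
        calc (q / d).totient * d ≤ (q / d) * d := Nat.mul_le_mul_right _ (Nat.totient_le _)
          _ ≤ q := Nat.div_mul_le_self q d
    _ = q * q.divisors.card := by rw [sum_const, smul_eq_mul, mul_comm]

/-- Kloosterman sum -/
noncomputable def kloo (q : ℕ) [NeZero q] (a b : ZMod q) : ℂ :=
  ∑ y : (ZMod q)ˣ, ZMod.stdAddChar (a * ((y⁻¹ : (ZMod q)ˣ) : ZMod q) + b * (y : ZMod q))

lemma kloo_symm (q : ℕ) [NeZero q] (a b : ZMod q) : kloo q a b = kloo q b a := by
  unfold kloo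
  rw [← Equiv.sum_comp (Equiv.inv (ZMod q)ˣ)]
  refine Finset.sum_congr rfl fun y _ => ?_
  simp [add_comm]

lemma kloo_shift (q : ℕ) [NeZero q] (a b : ZMod q) (l : (ZMod q)ˣ) :
    kloo q (a * l) (b * (l⁻¹ : (ZMod q)ˣ)) = kloo q a b := by
  unfold kloo
  rw [← Equiv.sum_comp (Equiv.mulLeft l)]
  refine Finset.sum_congr rfl fun y _ => ?_
  congr 1
  have h1 : (l : ZMod q) * ((l⁻¹ : (ZMod q)ˣ) : ZMod q) = 1 := by simp
  simp only [Equiv.coe_mulLeft, mul_inv_rev, Units.val_mul]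
  linear_combination (a * ((y⁻¹ : (ZMod q)ˣ) : ZMod q) + b * y) * h1

/-- number of additive-energy quadruples -/
noncomputable def klooE (q : ℕ) [NeZero q] : ℕ :=
  (Finset.univ.filter (fun x : (ZMod q)ˣ × (ZMod q)ˣ × (ZMod q)ˣ × (ZMod q)ˣ =>
    (((x.1)⁻¹ : (ZMod q)ˣ) : ZMod q) + ((x.2.1⁻¹ : (ZMod q)ˣ) : ZMod q)
      - ((x.2.2.1⁻¹ : (ZMod q)ˣ) : ZMod q) - ((x.2.2.2⁻¹ : (ZMod q)ˣ) : ZMod q) = 0 ∧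
    (x.1 : ZMod q) + (x.2.1 : ZMod q) - (x.2.2.1 : ZMod q) - (x.2.2.2 : ZMod q) = 0)).card

lemma conj_stdAddChar (q : ℕ) [NeZero q] (a : ZMod q) :
    (starRingEnd ℂ) (ZMod.stdAddChar a) = ZMod.stdAddChar (-a) := by
  rw [ZMod.stdAddChar_apply, ZMod.stdAddChar_apply, AddChar.map_neg_eq_inv, Circle.coe_inv_eq_conj]

lemma kloo_pow_four (q : ℕ) [NeZero q] (a b : ZMod q) :
    ((‖kloo q a b‖ ^ 4 : ℝ) : ℂ) =
      ∑ x : (ZMod q)ˣ × (ZMod q)ˣ × (ZMod q)ˣ × (ZMod q)ˣ,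
        ZMod.stdAddChar (a * ((((x.1)⁻¹ : (ZMod q)ˣ) : ZMod q) + ((x.2.1⁻¹ : (ZMod q)ˣ) : ZMod q)
      - ((x.2.2.1⁻¹ : (ZMod q)ˣ) : ZMod q) - ((x.2.2.2⁻¹ : (ZMod q)ˣ) : ZMod q))) *
        ZMod.stdAddChar (b * ((x.1 : ZMod q) + (x.2.1 : ZMod q) - (x.2.2.1 : ZMod q) - (x.2.2.2 : ZMod q))) := by
  have h1 : ((‖kloo q a b‖ ^ 4 : ℝ) : ℂ) = kloo q a b * (kloo q a b *
      ((starRingEnd ℂ) (kloo q a b) * (starRingEnd ℂ) (kloo q a b))) := by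
    have := Complex.mul_conj' (kloo q a b)
    push_cast
    linear_combination (-(kloo q a b * (starRingEnd ℂ) (kloo q a b)) - (‖kloo q a b‖:ℂ)^2) * this
  rw [h1]
  have h2 : (starRingEnd ℂ) (kloo q a b) = ∑ y : (ZMod q)ˣ,
      ZMod.stdAddChar (-(a * ((y⁻¹ : (ZMod q)ˣ) : ZMod q) + b * (y : ZMod q))) := by
    unfold kloo; rw [map_sum]
    exact Finset.sum_congr rfl fun y _ => conj_stdAddChar q _
  rw [h2]
  unfold kloo
  simp_rw [Fintype.sum_prod_type]
  rw [Finset.sum_mul]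
  refine Finset.sum_congr rfl fun x1 _ => ?_
  rw [Finset.sum_mul, Finset.mul_sum]
  refine Finset.sum_congr rfl fun x2 _ => ?_
  rw [Finset.sum_mul, Finset.mul_sum, Finset.mul_sum]
  refine Finset.sum_congr rfl fun x3 _ => ?_
  rw [Finset.mul_sum, Finset.mul_sum, Finset.mul_sum]
  refine Finset.sum_congr rfl fun x4 _ => ?_
  rw [← AddChar.map_add_eq_mul, ← AddChar.map_add_eq_mul, ← AddChar.map_add_eq_mul,
    ← AddChar.map_add_eq_mul]
  congr 1
  ring

lemma sum_kloo_pow_four (q : ℕ) [NeZero q] :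
    ∑ a : ZMod q, ∑ b : ZMod q, ‖kloo q a b‖ ^ 4 = (q : ℝ) ^ 2 * klooE q := by
  have : ((∑ a : ZMod q, ∑ b : ZMod q, ‖kloo q a b‖ ^ 4 : ℝ) : ℂ) = (q : ℂ) ^ 2 * klooE q := by
    push_cast
    have h := kloo_pow_four q
    push_cast at h
    simp_rw [h]
    have e1 : ∀ a : ZMod q, ∑ b : ZMod q, ∑ x : (ZMod q)ˣ × (ZMod q)ˣ × (ZMod q)ˣ × (ZMod q)ˣ,
        ZMod.stdAddChar (a * ((((x.1)⁻¹ : (ZMod q)ˣ) : ZMod q) + ((x.2.1⁻¹ : (ZMod q)ˣ) : ZMod q)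
      - ((x.2.2.1⁻¹ : (ZMod q)ˣ) : ZMod q) - ((x.2.2.2⁻¹ : (ZMod q)ˣ) : ZMod q))) *
        ZMod.stdAddChar (b * ((x.1 : ZMod q) + (x.2.1 : ZMod q) - (x.2.2.1 : ZMod q)
          - (x.2.2.2 : ZMod q))) =
        ∑ x : (ZMod q)ˣ × (ZMod q)ˣ × (ZMod q)ˣ × (ZMod q)ˣ,
        ZMod.stdAddChar (a * ((((x.1)⁻¹ : (ZMod q)ˣ) : ZMod q) + ((x.2.1⁻¹ : (ZMod q)ˣ) : ZMod q)
      - ((x.2.2.1⁻¹ : (ZMod q)ˣ) : ZMod q) - ((x.2.2.2⁻¹ : (ZMod q)ˣ) : ZMod q))) *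
        ∑ b : ZMod q, ZMod.stdAddChar (b * ((x.1 : ZMod q) + (x.2.1 : ZMod q) - (x.2.2.1 : ZMod q)
          - (x.2.2.2 : ZMod q))) := by
      intro a
      rw [Finset.sum_comm]
      simp_rw [Finset.mul_sum]
    simp_rw [e1]
    rw [Finset.sum_comm]
    simp_rw [← Finset.sum_mul,
      AddChar.sum_mulShift _ (ZMod.isPrimitive_stdAddChar q)]
    unfold klooE
    rw [Finset.card_filter]
    push_cast
    rw [Finset.mul_sum]
    refine Finset.sum_congr rfl fun x _ => ?_
    split_ifs <;> simp_all [sq]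
  exact_mod_cast this

open Finset in
lemma klooE_le (q : ℕ) [NeZero q] : klooE q ≤ 2 * (q * q.divisors.card) ^ 2 := by
  classical
  let S : Finset (ZMod q × ZMod q × ZMod q) :=
    univ.filter (fun x => (2 * (x.1 * x.2.1)) * x.2.2 = - (x.1 + x.2.1) * (x.1 * x.2.1))
  have h1 : klooE q ≤ S.card := by
    unfold klooE
    apply card_le_card_of_injOn (fun x => ((x.1 : ZMod q) - x.2.2.1, (x.2.1 : ZMod q) - x.2.2.1,
      (x.2.2.1 : ZMod q)))
    · rintro ⟨x1, x2, x3, x4⟩ hx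
      simp only [coe_filter, mem_univ, true_and, Set.mem_ofPred_eq, S] at hx ⊢
      obtain ⟨e1, e2⟩ := hx
      have u1 : (x1 : ZMod q) * ((x1⁻¹ : (ZMod q)ˣ) : ZMod q) = 1 := by simp
      have u2 : (x2 : ZMod q) * ((x2⁻¹ : (ZMod q)ˣ) : ZMod q) = 1 := by simp
      have u3 : (x3 : ZMod q) * ((x3⁻¹ : (ZMod q)ˣ) : ZMod q) = 1 := by simp
      have u4 : (x4 : ZMod q) * ((x4⁻¹ : (ZMod q)ˣ) : ZMod q) = 1 := by simp
      generalize (x1 : ZMod q) = X1 at *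
      generalize (x2 : ZMod q) = X2 at *
      generalize (x3 : ZMod q) = X3 at *
      generalize (x4 : ZMod q) = X4 at *
      generalize ((x1⁻¹ : (ZMod q)ˣ) : ZMod q) = Y1 at *
      generalize ((x2⁻¹ : (ZMod q)ˣ) : ZMod q) = Y2 at *
      generalize ((x3⁻¹ : (ZMod q)ˣ) : ZMod q) = Y3 at *
      generalize ((x4⁻¹ : (ZMod q)ˣ) : ZMod q) = Y4 at *
      -- (X1+X2) * (X1 - X3) * (X2 - X3) = 0
      have hX4 : X4 = X1 + X2 - X3 := by linear_combination -e2
      have k1 : X1 * X2 * (Y1 + Y2) = X1 + X2 := by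
        linear_combination X2 * u1 + X1 * u2
      have k2 : X3 * X4 * (Y3 + Y4) = X3 + X4 := by
        linear_combination X4 * u3 + X3 * u4
      have k3 : (X1 + X2) * (X3 * X4) = (X1 + X2) * (X1 * X2) := by
        linear_combination (-(X3*X4)) * k1 + X1*X2*k2 - X1*X2*e2 + X1*X2*X3*X4*e1
      rw [hX4] at k3
      linear_combination -k3
    · rintro ⟨x1, x2, x3, x4⟩ hx ⟨y1, y2, y3, y4⟩ hy hxy
      simp only [coe_filter, mem_univ, true_and, Set.mem_ofPred_eq] at hx hy
      simp only [Prod.mk.injEq] at hxy ⊢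
      obtain ⟨a1, a2, a3⟩ := hxy
      have b1 : (x1 : ZMod q) = y1 := by linear_combination a1 + a3
      have b2 : (x2 : ZMod q) = y2 := by linear_combination a2 + a3
      refine ⟨Units.ext b1, Units.ext b2, Units.ext a3, Units.ext ?_⟩
      linear_combination -hx.2 + hy.2 + b1 + b2 - a3
  have h2 : S.card ≤ ∑ a : ZMod q, ∑ b : ZMod q, 2 * (kerCard q a * kerCard q b) := by
    simp only [S]
    rw [card_filter, Fintype.sum_prod_type]
    refine sum_le_sum fun a _ => ?_
    rw [Fintype.sum_prod_type]
    refine sum_le_sum fun b _ => ?_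
    rw [← card_filter]
    refine (kerCard_fiber (2 * (a * b)) (- (a + b) * (a * b))).trans ((kerCard_mul _ _).trans ?_)
    have h3 : kerCard q (2 : ZMod q) ≤ 2 := by
      have := kerCard_natCast_le (q := q) 2 (by norm_num)
      simpa using this
    exact Nat.mul_le_mul h3 (kerCard_mul _ _)
  refine h1.trans (h2.trans ?_)
  simp_rw [← mul_sum, ← sum_mul]
  rw [← sq]
  exact Nat.mul_le_mul_left _ (Nat.pow_le_pow_left (sum_kerCard_le q) 2)

open Finset in
lemma kloo_bound (q : ℕ) [NeZero q] (a b : ZMod q) :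
    (q.totient : ℝ) * ‖kloo q a b‖ ^ 4 ≤
      kerCard q a * ((q : ℝ) ^ 2 * (2 * (q * q.divisors.card) ^ 2)) := by
  classical
  have h1 : (q.totient : ℝ) * ‖kloo q a b‖ ^ 4 =
      ∑ l : (ZMod q)ˣ, ‖kloo q (a * l) (b * (l⁻¹ : (ZMod q)ˣ))‖ ^ 4 := by
    simp_rw [kloo_shift]
    rw [sum_const, card_univ, ZMod.card_units_eq_totient, nsmul_eq_mul]
  have h2 : ∀ l : (ZMod q)ˣ, ‖kloo q (a * l) (b * (l⁻¹ : (ZMod q)ˣ))‖ ^ 4 ≤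
      ∑ b' : ZMod q, ‖kloo q (a * l) b'‖ ^ 4 := fun l =>
    single_le_sum (f := fun b' => ‖kloo q (a * l) b'‖ ^ 4) (fun _ _ => by positivity) (mem_univ _)
  rw [h1]
  calc _ ≤ ∑ l : (ZMod q)ˣ, ∑ b' : ZMod q, ‖kloo q (a * l) b'‖ ^ 4 := sum_le_sum fun l _ => h2 l
    _ = ∑ a' : ZMod q, ∑ l ∈ (univ : Finset (ZMod q)ˣ).filter (fun l : (ZMod q)ˣ => a * (l : ZMod q) = a'),
          ∑ b' : ZMod q, ‖kloo q (a * l) b'‖ ^ 4 := by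
        rw [sum_fiberwise]
    _ ≤ ∑ a' : ZMod q, kerCard q a * ∑ b' : ZMod q, ‖kloo q a' b'‖ ^ 4 := by
        refine sum_le_sum fun a' _ => ?_
        rw [sum_congr rfl (g := fun _ => ∑ b' : ZMod q, ‖kloo q a' b'‖ ^ 4)
          (fun l hl => by rw [(mem_filter.1 hl).2]), sum_const, nsmul_eq_mul]
        refine mul_le_mul_of_nonneg_right ?_ (by positivity)
        have : (univ.filter (fun l : (ZMod q)ˣ => a * (l : ZMod q) = a')).card ≤ kerCard q a := by
          refine le_trans ?_ (kerCard_fiber a a')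
          apply card_le_card_of_injOn (fun l : (ZMod q)ˣ => (l : ZMod q))
          · intro l hl; simpa using hl
          · intro x _ y _ h; exact Units.ext h
        exact_mod_cast this
    _ = kerCard q a * ((q : ℝ) ^ 2 * klooE q) := by
        rw [← mul_sum, sum_kloo_pow_four]
    _ ≤ _ := by
        have := klooE_le q
        have h : (klooE q : ℝ) ≤ 2 * (q * q.divisors.card) ^ 2 := by exact_mod_cast this
        gcongr

lemma pow_four_le_two (a : ℕ) : (a + 1) ^ 4 ≤ 4096 * 2 ^ a := by
  by_cases h : a < 6
  · interval_cases a <;> norm_num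
  · push Not at h
    induction a, h using Nat.le_induction with
    | base => norm_num
    | succ n hn ih =>
      rw [pow_succ 2]
      have : (n + 1 + 1) ^ 4 ≤ 2 * (n + 1) ^ 4 := by
        obtain ⟨m, rfl⟩ := Nat.exists_eq_add_of_le hn
        ring_nf
        nlinarith [sq_nonneg m, pow_pos (show 0 < m + 1 by omega) 3, Nat.zero_le (m^3), Nat.zero_le (m^4)]
      omega

open Finset in
lemma card_divisors_pow_four (n : ℕ) (hn : n ≠ 0) : n.divisors.card ^ 4 ≤ 4096 ^ 16 * n := by
  rw [Nat.card_divisors hn, ← Finset.prod_pow]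
  have h : ∀ p ∈ n.primeFactors, (n.factorization p + 1) ^ 4 ≤
      (if p ∈ range 16 then 4096 else 1) * p ^ (n.factorization p) := by
    intro p hp
    have hp2 := (Nat.prime_of_mem_primeFactors hp).two_le
    split_ifs with h16
    · exact (pow_four_le_two _).trans (Nat.mul_le_mul_left _ (Nat.pow_le_pow_left hp2 _))
    · rw [one_mul]
      have h16 : 16 ≤ p := by simpa using h16
      calc (n.factorization p + 1) ^ 4 ≤ (2 ^ n.factorization p) ^ 4 :=
            Nat.pow_le_pow_left (Nat.lt_two_pow_self) _
        _ = 16 ^ n.factorization p := by rw [← pow_mul, mul_comm, pow_mul]; norm_num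
        _ ≤ _ := Nat.pow_le_pow_left h16 _
  refine (prod_le_prod' h).trans ?_
  rw [prod_mul_distrib]
  have e2 : ∏ p ∈ n.primeFactors, p ^ n.factorization p = n :=
    Nat.prod_factorization_pow_eq_self hn
  rw [e2]
  refine Nat.mul_le_mul_right _ ?_
  rw [prod_ite, prod_const, prod_const_one, mul_one]
  refine Nat.pow_le_pow_right (by norm_num) ?_
  calc _ ≤ (range 16).card := card_le_card (by intro x; simp)
    _ = 16 := by simp

open Finset in
lemma le_card_divisors_mul_totient (q : ℕ) (hq : 0 < q) : q ≤ q.divisors.card * q.totient := by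
  conv_lhs => rw [← Nat.sum_totient q]
  rw [← smul_eq_mul]
  refine sum_le_card_nsmul _ _ _ fun d hd => ?_
  exact Nat.le_of_dvd (Nat.totient_pos.2 hq) (Nat.totient_dvd_of_dvd (Nat.dvd_of_mem_divisors hd))

lemma kloo_bound_sixteen (q : ℕ) [NeZero q] (a b : ZMod q) (M : ℕ) (hM : kerCard q a ≤ M) :
    (‖kloo q a b‖ / q) ^ 16 ≤ (2 * M) ^ 4 * (4096 ^ 16) ^ 3 / q := by
  have hq : 0 < q := NeZero.pos q
  have hq' : (0 : ℝ) < q := by exact_mod_cast hq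
  have h1 := kloo_bound q a b
  have h2 : (q : ℝ) ≤ q.divisors.card * q.totient := by
    exact_mod_cast le_card_divisors_mul_totient q hq
  have h3 : (q.divisors.card : ℝ) ^ 4 ≤ 4096 ^ 16 * q := by
    exact_mod_cast card_divisors_pow_four q hq.ne'
  set d : ℝ := (q.divisors.card : ℝ)
  set f : ℝ := (q.totient : ℝ)
  set X := ‖kloo q a b‖
  have hX : 0 ≤ X := norm_nonneg _
  have hd : 0 ≤ d := by positivity
  have hM' : (kerCard q a : ℝ) ≤ M := by exact_mod_cast hM
  have h4 : q * X ^ 4 ≤ 2 * M * q ^ 4 * d ^ 3 := by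
    calc q * X ^ 4 ≤ d * f * X ^ 4 := by gcongr
      _ = d * (f * X ^ 4) := by ring
      _ ≤ d * (kerCard q a * ((q : ℝ) ^ 2 * (2 * (q * d) ^ 2))) := by gcongr
      _ ≤ d * (M * ((q : ℝ) ^ 2 * (2 * (q * d) ^ 2))) := by gcongr
      _ = _ := by ring
  have h5 : (q * X ^ 4) ^ 4 ≤ (2 * M * q ^ 4 * d ^ 3) ^ 4 := by gcongr
  have h6 : (2 * M * q ^ 4 * d ^ 3) ^ 4 ≤ (2 * M) ^ 4 * q ^ 16 * (4096 ^ 16 * q) ^ 3 := by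
    calc (2 * M * q ^ 4 * d ^ 3) ^ 4 = (2 * M) ^ 4 * q ^ 16 * (d ^ 4) ^ 3 := by ring
      _ ≤ _ := by gcongr
  have h7 := h5.trans h6
  rw [div_pow, div_le_div_iff₀ (by positivity) hq']
  have h8 : (q:ℝ)^3 * (X ^ 16 * q) ≤ (q:ℝ)^3 * ((2 * M) ^ 4 * (4096 ^ 16) ^ 3 * q ^ 16) := by
    generalize (4096 : ℝ) ^ 16 = c at *
    nlinarith [h7]
  exact le_of_mul_le_mul_left h8 (by positivity)

open Filter Topology in
/-- Kloosterman sums with integer parameters, not both zero, are `o(q)`. -/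
lemma kloo_tendsto (m n : ℤ) (hmn : m ≠ 0 ∨ n ≠ 0) (ε : ℝ) (hε : 0 < ε) :
    ∃ Q0 : ℕ, ∀ q : ℕ, ∀ [NeZero q], Q0 ≤ q → ‖kloo q (m : ZMod q) (n : ZMod q)‖ ≤ ε * q := by
  obtain ⟨M, hM⟩ : ∃ M : ℕ, ∀ q : ℕ, ∀ [NeZero q],
      (‖kloo q (m : ZMod q) (n : ZMod q)‖ / q) ^ 16 ≤ (2 * M) ^ 4 * (4096 ^ 16) ^ 3 / q := by
    rcases hmn with h | h
    · exact ⟨m.natAbs, fun q _ => kloo_bound_sixteen q _ _ _ (kerCard_intCast_le m h)⟩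
    · refine ⟨n.natAbs, fun q _ => ?_⟩
      rw [kloo_symm]
      exact kloo_bound_sixteen q _ _ _ (kerCard_intCast_le n h)
  obtain ⟨Q0, hQ0⟩ := exists_nat_gt ((2 * (M:ℝ)) ^ 4 * (4096 ^ 16) ^ 3 / ε ^ 16)
  refine ⟨Q0, fun q _ hq => ?_⟩
  have hq' : (0 : ℝ) < q := by exact_mod_cast NeZero.pos q
  have h1 := hM q
  have hqq : (Q0 : ℝ) ≤ q := by exact_mod_cast hq
  rw [← div_le_iff₀ hq']
  refine le_of_pow_le_pow_left₀ (n := 16) (by norm_num) hε.le (h1.trans ?_)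
  rw [div_lt_iff₀ (by positivity)] at hQ0
  rw [div_le_iff₀ hq']
  refine hQ0.le.trans ?_
  rw [mul_comm]
  gcongr


/-- Riemann sum -/
noncomputable def rsum (K : ℝ) (G : ℝ → ℂ) (h : ℝ) : ℂ :=
  (h : ℂ) * ∑ k ∈ Finset.Icc 1 ⌊K / h⌋₊, G (h * k)

lemma mem_Icc_floor {K h : ℝ} (hK : 0 < K) (hh : 0 < h) {k : ℕ} (hk : k ∈ Finset.Icc 1 ⌊K / h⌋₊) :
    0 ≤ h * k ∧ h * k ≤ K ∧ 1 ≤ k := by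
  rw [Finset.mem_Icc] at hk
  refine ⟨by positivity, ?_, hk.1⟩
  have : (k : ℝ) ≤ K / h := (Nat.le_floor_iff (by positivity)).1 hk.2
  rw [le_div_iff₀ hh] at this
  linarith

lemma rsum_norm_le {K : ℝ} (hK : 0 < K) {G : ℝ → ℂ} {B : ℝ}
    (hB : ∀ t ∈ Set.Icc 0 K, ‖G t‖ ≤ B) {h : ℝ} (hh : 0 < h) : ‖rsum K G h‖ ≤ K * B := by
  have hB0 : 0 ≤ B := (norm_nonneg _).trans (hB 0 ⟨le_rfl, hK.le⟩)
  unfold rsum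
  rw [norm_mul, Complex.norm_real, Real.norm_of_nonneg hh.le]
  have h1 : ‖∑ k ∈ Finset.Icc 1 ⌊K / h⌋₊, G (h * k)‖ ≤ ∑ k ∈ Finset.Icc 1 ⌊K / h⌋₊, B := by
    refine norm_sum_le_of_le _ fun k hk => ?_
    have := mem_Icc_floor hK hh hk
    exact hB _ ⟨this.1, this.2.1⟩
  rw [Finset.sum_const, Nat.card_Icc, Nat.add_sub_cancel, nsmul_eq_mul] at h1
  have h2 : (⌊K / h⌋₊ : ℝ) ≤ K / h := Nat.floor_le (by positivity)
  calc h * ‖∑ k ∈ Finset.Icc 1 ⌊K / h⌋₊, G (h * k)‖ ≤ h * (K / h * B) := by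
        gcongr; exact h1.trans (by gcongr)
    _ = K * B := by field_simp

open Filter Topology in
lemma rsum_tendsto {K : ℝ} (hK : 0 < K) {G : ℝ → ℂ} (hG : Continuous G) :
    Tendsto (rsum K G) (𝓝[>] 0) (𝓝 (∫ t in (0:ℝ)..K, G t)) := by
  obtain ⟨B, hB⟩ : ∃ B : ℝ, ∀ t ∈ Set.Icc 0 K, ‖G t‖ ≤ B :=
    isCompact_Icc.exists_bound_of_continuousOn hG.continuousOn
  have hB0 : 0 ≤ B := (norm_nonneg _).trans (hB 0 ⟨le_rfl, hK.le⟩)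
  have huc := isCompact_Icc.uniformContinuousOn_of_continuous (hG.continuousOn (s := Set.Icc 0 K))
  rw [Metric.uniformContinuousOn_iff] at huc
  rw [Metric.tendsto_nhdsWithin_nhds]
  intro ε hε
  obtain ⟨r, hr, hur⟩ := huc (ε / (2 * K)) (by positivity)
  refine ⟨min r (ε / (2 * (B + 1))), by positivity, ?_⟩
  intro h hh hhr
  have hh : 0 < h := hh
  rw [dist_zero_right, Real.norm_of_nonneg hh.le, lt_min_iff] at hhr
  set N := ⌊K / h⌋₊ with hN
  have hNle : h * N ≤ K := by
    have : (N : ℝ) ≤ K / h := Nat.floor_le (by positivity)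
    rw [le_div_iff₀ hh] at this; linarith
  have hNgt : K < h * N + h := by
    have : K / h < N + 1 := Nat.lt_floor_add_one _
    rw [div_lt_iff₀ hh] at this; linarith
  have hint : ∀ a b : ℝ, IntervalIntegrable G MeasureTheory.volume a b :=
    fun a b => hG.intervalIntegrable a b
  have e1 : ∫ t in (0:ℝ)..(h * N), G t = ∑ k ∈ Finset.range N, ∫ t in (h * k)..(h * (k + 1 : ℕ)), G t := by
    have := intervalIntegral.sum_integral_adjacent_intervals (f := G) (μ := MeasureTheory.volume)
      (a := fun k : ℕ => h * k) (n := N) (fun k _ => hint _ _)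
    rw [this]; simp
  have e2 : rsum K G h = ∑ k ∈ Finset.range N, (h : ℂ) * G (h * (k + 1 : ℕ)) := by
    unfold rsum
    rw [Finset.mul_sum, ← hN, Finset.range_eq_Ico,
      Finset.sum_Ico_add' (fun k : ℕ => (h : ℂ) * G (h * k)) 0 N 1]
    rfl
  have e3 : ∀ k ∈ Finset.range N, ‖(h : ℂ) * G (h * (k + 1 : ℕ)) - ∫ t in (h * k)..(h * (k + 1 : ℕ)), G t‖
      ≤ ε / (2 * K) * h := by
    intro k hk
    have hk' : (k : ℝ) + 1 ≤ N := by exact_mod_cast Finset.mem_range.1 hk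
    have hkK : h * (k + 1) ≤ K := le_trans (by gcongr) hNle
    have hlen : h * (k + 1 : ℕ) - h * k = h := by push_cast; ring
    have : (h : ℂ) * G (h * (k + 1 : ℕ)) = ∫ t in (h * k)..(h * (k + 1 : ℕ)), G (h * (k + 1 : ℕ)) := by
      rw [intervalIntegral.integral_const, hlen, Complex.real_smul]
    rw [this, ← intervalIntegral.integral_sub (by simp) (hint _ _)]
    have := intervalIntegral.norm_integral_le_of_norm_le_const (a := h * k) (b := h * (k + 1 : ℕ))
      (f := fun t => G (h * (k + 1 : ℕ)) - G t) (C := ε / (2 * K)) ?_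
    · rw [hlen, abs_of_pos hh] at this; exact this
    · intro t ht
      push_cast at ht ⊢
      rw [Set.uIoc_of_le (by nlinarith)] at ht
      rw [← dist_eq_norm]
      refine (hur _ ⟨by positivity, hkK⟩ _ ⟨?_, ht.2.trans hkK⟩ ?_).le
      · have : 0 ≤ h * k := by positivity
        linarith [ht.1]
      · rw [Real.dist_eq, abs_of_nonneg (by linarith [ht.2])]
        have := ht.1
        nlinarith
  have e4 : ‖rsum K G h - ∫ t in (0:ℝ)..(h * N), G t‖ ≤ ε / 2 := by
    rw [e1, e2, ← Finset.sum_sub_distrib]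
    refine (norm_sum_le_of_le _ e3).trans ?_
    rw [Finset.sum_const, Finset.card_range, nsmul_eq_mul]
    calc (N : ℝ) * (ε / (2 * K) * h) = ε / (2 * K) * (h * N) := by ring
      _ ≤ ε / (2 * K) * K := by gcongr
      _ = ε / 2 := by field_simp
  have e5 : ‖∫ t in (h * N)..K, G t‖ ≤ B * h := by
    refine (intervalIntegral.norm_integral_le_of_norm_le_const (C := B) ?_).trans ?_
    · intro t ht
      rw [Set.uIoc_of_le hNle] at ht
      have : 0 ≤ h * N := by positivity
      exact hB t ⟨by linarith [ht.1], ht.2⟩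
    · rw [abs_of_nonneg (by linarith)]
      gcongr; linarith
  have e6 : ∫ t in (0:ℝ)..K, G t = (∫ t in (0:ℝ)..(h * N), G t) + ∫ t in (h * N)..K, G t :=
    (intervalIntegral.integral_add_adjacent_intervals (hint _ _) (hint _ _)).symm
  rw [dist_eq_norm, e6, ← sub_sub]
  refine (norm_sub_le _ _).trans_lt ?_
  have e7 : B * h < ε / 2 := by
    have := hhr.2
    rw [lt_div_iff₀ (by positivity)] at this
    nlinarith
  linarith

lemma totient_eq_sum_moebius (n : ℕ) (hn : 0 < n) :
    (n.totient : ℂ) = ∑ x ∈ n.divisorsAntidiagonal, (ArithmeticFunction.moebius x.1 : ℂ) * x.2 := by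
  have h := (ArithmeticFunction.sum_eq_iff_sum_mul_moebius_eq (R := ℂ)
    (f := fun n => (n.totient : ℂ)) (g := fun n => (n : ℂ))).1 ?_ n hn
  · exact h.symm
  · intro n _
    exact_mod_cast Nat.sum_totient n

lemma sum_divisorsAntidiagonal_swap (N : ℕ) (F : ℕ → ℕ → ℂ) :
    ∑ q ∈ Finset.Icc 1 N, ∑ x ∈ q.divisorsAntidiagonal, F x.1 x.2 =
      ∑ d ∈ Finset.Icc 1 N, ∑ k ∈ Finset.Icc 1 (N / d), F d k := by
  rw [Finset.sum_sigma', Finset.sum_sigma']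
  refine Finset.sum_bij' (fun x _ => (⟨x.2.1, x.2.2⟩ : (_ : ℕ) × ℕ))
    (fun x _ => (⟨x.1 * x.2, (x.1, x.2)⟩ : (_ : ℕ) × (ℕ × ℕ))) ?_ ?_ ?_ ?_ ?_
  · rintro ⟨q, d, k⟩ hx
    simp only [Finset.mem_sigma, Finset.mem_Icc, Nat.mem_divisorsAntidiagonal] at hx ⊢
    obtain ⟨⟨h1, h2⟩, h3, h4⟩ := hx
    have hd : 0 < d := Nat.pos_of_ne_zero (by rintro rfl; simp at h3; omega)
    have hk : 0 < k := Nat.pos_of_ne_zero (by rintro rfl; simp at h3; omega)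
    refine ⟨⟨hd, ?_⟩, hk, ?_⟩
    · nlinarith
    · rw [Nat.le_div_iff_mul_le hd]; nlinarith
  · rintro ⟨d, k⟩ hx
    simp only [Finset.mem_sigma, Finset.mem_Icc, Nat.mem_divisorsAntidiagonal] at hx ⊢
    obtain ⟨⟨h1, h2⟩, h3, h4⟩ := hx
    rw [Nat.le_div_iff_mul_le (by omega)] at h4
    refine ⟨⟨Nat.mul_pos (by omega) (by omega), by nlinarith⟩, trivial, ?_⟩
    exact (Nat.mul_pos (by omega) (by omega)).ne'
  · rintro ⟨q, d, k⟩ hx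
    simp only [Finset.mem_sigma, Finset.mem_Icc, Nat.mem_divisorsAntidiagonal] at hx ⊢
    simp [hx.2.1]
  · rintro ⟨d, k⟩ hx; rfl
  · rintro ⟨q, d, k⟩ hx; rfl

lemma tsum_moebius_div_sq : ∑' d : ℕ, (ArithmeticFunction.moebius d : ℂ) / (d : ℂ) ^ 2 = 6 / (Real.pi : ℂ) ^ 2 := by
  have h2 : (1 : ℝ) < (2 : ℂ).re := by norm_num
  have h := LSeries_one_mul_Lseries_moebius h2
  rw [LSeries_one_eq_riemannZeta h2, riemannZeta_two] at h
  have hpi : (Real.pi : ℂ) ≠ 0 := by exact_mod_cast Real.pi_ne_zero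
  have e : ∑' d : ℕ, (ArithmeticFunction.moebius d : ℂ) / (d : ℂ) ^ 2 =
      LSeries (fun n => (ArithmeticFunction.moebius n : ℂ)) 2 := by
    unfold LSeries
    refine tsum_congr fun d => ?_
    rw [LSeries.term_def]
    split_ifs with hd
    · simp [hd]
    · norm_cast
  rw [e]
  field_simp
  field_simp at h
  linear_combination h

open Filter Topology in
lemma totient_sum_tendsto {K : ℝ} (hK : 0 < K) {c : ℝ → ℂ} (hc : Continuous c) :
    Tendsto (fun h : ℝ => (h : ℂ) ^ 2 * ∑ q ∈ Finset.Icc 1 ⌊K / h⌋₊, (q.totient : ℂ) * c (h * q))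
      (𝓝[>] 0) (𝓝 (6 / (Real.pi : ℂ) ^ 2 * ∫ t in (0:ℝ)..K, (t : ℂ) * c t)) := by
  set G : ℝ → ℂ := fun t => (t : ℂ) * c t with hGdef
  have hG : Continuous G := Complex.continuous_ofReal.mul hc
  obtain ⟨B, hB⟩ : ∃ B : ℝ, ∀ t ∈ Set.Icc 0 K, ‖G t‖ ≤ B :=
    isCompact_Icc.exists_bound_of_continuousOn hG.continuousOn
  have hB0 : 0 ≤ B := (norm_nonneg _).trans (hB 0 ⟨le_rfl, hK.le⟩)
  have key : Tendsto (fun h : ℝ => ∑' d : ℕ, (ArithmeticFunction.moebius d : ℂ) / (d : ℂ) ^ 2 * rsum K G (h * d))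
      (𝓝[>] 0) (𝓝 (∑' d : ℕ, (ArithmeticFunction.moebius d : ℂ) / (d : ℂ) ^ 2 * ∫ t in (0:ℝ)..K, G t)) := by
    refine tendsto_tsum_of_dominated_convergence (bound := fun d : ℕ => 1 / (d : ℝ) ^ 2 * (K * B)) ?_ ?_ ?_
    · exact (Real.summable_one_div_nat_pow.2 one_lt_two).mul_right _
    · intro d
      rcases Nat.eq_zero_or_pos d with rfl | hd
      · simp
      refine Tendsto.const_mul _ ((rsum_tendsto hK hG).comp ?_)
      have hd' : (0 : ℝ) < d := by exact_mod_cast hd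
      refine tendsto_nhdsWithin_iff.2 ⟨?_, ?_⟩
      · have : Tendsto (fun h : ℝ => h * d) (𝓝 0) (𝓝 (0 * d)) := tendsto_id.mul_const _
        rw [zero_mul] at this
        exact this.mono_left nhdsWithin_le_nhds
      · filter_upwards [self_mem_nhdsWithin] with h hh
        exact mul_pos hh hd'
    · filter_upwards [self_mem_nhdsWithin] with h hh d
      rcases Nat.eq_zero_or_pos d with rfl | hd
      · simp
      have hd' : (0 : ℝ) < d := by exact_mod_cast hd
      rw [norm_mul, norm_div, norm_pow, Complex.norm_natCast]
      have h1 : ‖(ArithmeticFunction.moebius d : ℂ)‖ ≤ 1 := by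
        rw [Complex.norm_intCast]
        exact_mod_cast ArithmeticFunction.abs_moebius_le_one
      have h2 := rsum_norm_le hK hB (h := h * d) (mul_pos hh hd')
      gcongr
  rw [tsum_mul_right, tsum_moebius_div_sq] at key
  refine key.congr' ?_
  filter_upwards [self_mem_nhdsWithin] with h hh
  have hh : 0 < h := hh
  set N := ⌊K / h⌋₊ with hN
  have e1 : ∑ q ∈ Finset.Icc 1 N, (q.totient : ℂ) * c (h * q) =
      ∑ q ∈ Finset.Icc 1 N, ∑ x ∈ q.divisorsAntidiagonal,
        (fun d k : ℕ => (ArithmeticFunction.moebius d : ℂ) * k * c (h * (d * k : ℕ))) x.1 x.2 := by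
    refine Finset.sum_congr rfl fun q hq => ?_
    rw [totient_eq_sum_moebius q (Finset.mem_Icc.1 hq).1, Finset.sum_mul]
    refine Finset.sum_congr rfl fun x hx => ?_
    rw [Nat.mem_divisorsAntidiagonal] at hx
    simp only [hx.1]
  rw [e1, sum_divisorsAntidiagonal_swap N
    (fun d k : ℕ => (ArithmeticFunction.moebius d : ℂ) * k * c (h * (d * k : ℕ))), Finset.mul_sum]
  rw [tsum_eq_sum (s := Finset.Icc 1 N)]
  · refine Finset.sum_congr rfl fun d hd => ?_
    have hd1 := (Finset.mem_Icc.1 hd).1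
    have hd' : (d : ℂ) ≠ 0 := by exact_mod_cast (by omega : d ≠ 0)
    unfold rsum
    have : ⌊K / (h * d)⌋₊ = N / d := by
      rw [← div_div, Nat.floor_div_natCast]
    rw [this, Finset.mul_sum, Finset.mul_sum, Finset.mul_sum]
    refine Finset.sum_congr rfl fun k _ => ?_
    simp only [hGdef]
    have : h * d * k = h * ((d * k : ℕ) : ℝ) := by push_cast; ring
    rw [this]
    push_cast
    field_simp
  · intro d hd
    rcases Nat.eq_zero_or_pos d with rfl | hd0
    · simp
    have : N < d := by
      rw [Finset.mem_Icc] at hd; omega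
    unfold rsum
    have : ⌊K / (h * d)⌋₊ = 0 := by
      rw [← div_div, Nat.floor_div_natCast]
      exact Nat.div_eq_of_lt this
    simp [this]



open Topology in
lemma closure_tendsto {E : Type*} [NormedAddCommGroup E] [NormedSpace ℂ E] {ι : Type*}
    {l : Filter ι} (T : ι → E →ₗ[ℂ] ℂ) (T0 : E →ₗ[ℂ] ℂ) (C : ℝ)
    (hT : ∀ᶠ i in l, ∀ x, ‖T i x‖ ≤ C * ‖x‖) (hT0 : ∀ x, ‖T0 x‖ ≤ C * ‖x‖)
    (S : Set E) (hS : (Submodule.span ℂ S).topologicalClosure = ⊤)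
    (h : ∀ x ∈ S, Tendsto (fun i => T i x) l (𝓝 (T0 x))) (x : E) :
    Tendsto (fun i => T i x) l (𝓝 (T0 x)) := by
  have hspan : ∀ x ∈ Submodule.span ℂ S, Tendsto (fun i => T i x) l (𝓝 (T0 x)) := by
    intro x hx
    induction hx using Submodule.span_induction with
    | mem x hx => exact h x hx
    | zero => simpa using tendsto_const_nhds
    | add x y _ _ hx hy => simpa using hx.add hy
    | smul a x _ hx => simpa using hx.const_mul a
  rw [Metric.tendsto_nhds]
  intro ε hε
  have hx : x ∈ closure (Submodule.span ℂ S : Set E) := by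
    have : x ∈ (Submodule.span ℂ S).topologicalClosure := by rw [hS]; trivial
    exact this
  set C' := max C 1 with hC'
  have hC'0 : 0 < C' := lt_of_lt_of_le one_pos (le_max_right _ _)
  obtain ⟨y, hy, hxy⟩ := Metric.mem_closure_iff.1 hx (ε / (3 * C')) (by positivity)
  have h1 := Metric.tendsto_nhds.1 (hspan y hy) (ε / 3) (by positivity)
  filter_upwards [h1, hT] with i h1 hT
  have e1 : ‖T i x - T i y‖ < ε / 3 := by
    rw [← map_sub]
    calc _ ≤ C * ‖x - y‖ := hT _
      _ ≤ C' * ‖x - y‖ := by gcongr; exact le_max_left _ _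
      _ < C' * (ε / (3 * C')) := by rw [dist_eq_norm] at hxy; gcongr
      _ = ε / 3 := by field_simp
  have e2 : ‖T0 x - T0 y‖ < ε / 3 := by
    rw [← map_sub]
    calc _ ≤ C * ‖x - y‖ := hT0 _
      _ ≤ C' * ‖x - y‖ := by gcongr; exact le_max_left _ _
      _ < C' * (ε / (3 * C')) := by rw [dist_eq_norm] at hxy; gcongr
      _ = ε / 3 := by field_simp
  rw [dist_eq_norm] at h1 ⊢
  calc ‖T i x - T0 x‖ = ‖(T i x - T i y) + (T i y - T0 y) - (T0 x - T0 y)‖ := by congr 1; ring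
    _ ≤ ‖T i x - T i y‖ + ‖T i y - T0 y‖ + ‖T0 x - T0 y‖ :=
        (norm_sub_le _ _).trans (by gcongr; exact norm_add_le _ _)
    _ < ε := by linarith

/-- product functions `c(t) e(n θ)` -/
noncomputable def prodFn {X : Type*} [TopologicalSpace X] (c : C(X, ℂ)) (n : ℤ) :
    C(X × UnitAddCircle, ℂ) :=
  (c.comp ⟨Prod.fst, continuous_fst⟩) * ((fourier n).comp ⟨Prod.snd, continuous_snd⟩)

lemma prodFn_apply {X : Type*} [TopologicalSpace X] (c : C(X, ℂ)) (n : ℤ) (p : X × UnitAddCircle) :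
    prodFn c n p = c p.1 * fourier n p.2 := rfl

/-- the set of product functions -/
def prodSet (X : Type*) [TopologicalSpace X] : Set C(X × UnitAddCircle, ℂ) :=
  {f | ∃ c n, f = prodFn c n}

/-- the star subalgebra generated by products -/
noncomputable def prodAlg (X : Type*) [TopologicalSpace X] : StarSubalgebra ℂ C(X × UnitAddCircle, ℂ) where
  toSubalgebra := Algebra.adjoin ℂ (prodSet X)
  star_mem' := by
    change Algebra.adjoin ℂ (prodSet X) ≤ star (Algebra.adjoin ℂ (prodSet X))
    refine Algebra.adjoin_le ?_
    rintro - ⟨c, n, rfl⟩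
    refine Algebra.subset_adjoin ⟨star c, -n, ?_⟩
    ext p
    simp only [ContinuousMap.star_apply, prodFn_apply, star_mul', fourier_neg]
    rfl

lemma prodAlg_coe (X : Type*) [TopologicalSpace X] :
    Subalgebra.toSubmodule (prodAlg X).toSubalgebra = Submodule.span ℂ (prodSet X) := by
  apply Algebra.adjoin_eq_span_of_subset
  refine Set.Subset.trans ?_ Submodule.subset_span
  intro x hx
  refine Submonoid.closure_induction (fun _ => id) ⟨1, 0, ?_⟩ ?_ hx
  · ext z; simp [prodFn_apply]
  · rintro - - - - ⟨c, m, rfl⟩ ⟨d, n, rfl⟩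
    refine ⟨c * d, m + n, ?_⟩
    ext z
    simp only [ContinuousMap.mul_apply, prodFn_apply, fourier_add]
    ring

lemma prodAlg_sep (K : ℝ) : (prodAlg (Set.Icc 0 K)).SeparatesPoints := by
  rintro ⟨x, θ⟩ ⟨y, φ⟩ hxy
  by_cases h : x = y
  · subst h
    have hne : θ ≠ φ := fun h => hxy (by rw [h])
    refine ⟨_, ⟨prodFn 1 1, Algebra.subset_adjoin ⟨1, 1, rfl⟩, rfl⟩, ?_⟩
    simp only [prodFn_apply, ContinuousMap.one_apply, one_mul]
    rw [fourier_one, fourier_one]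
    contrapose hne
    exact AddCircle.injective_toCircle one_ne_zero (Circle.ext hne)
  · refine ⟨_, ⟨prodFn ⟨fun t => ((t : ℝ) : ℂ), by fun_prop⟩ 0, Algebra.subset_adjoin ⟨_, _, rfl⟩,
      rfl⟩, ?_⟩
    simp only [prodFn_apply, ContinuousMap.coe_mk, fourier_zero, mul_one]
    intro hh
    exact h (Subtype.ext (Complex.ofReal_injective hh))

lemma span_prodSet (K : ℝ) :
    (Submodule.span ℂ (prodSet (Set.Icc 0 K))).topologicalClosure = ⊤ := by
  rw [← prodAlg_coe]
  exact congr_arg (Subalgebra.toSubmodule <| StarSubalgebra.toSubalgebra ·)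
    (ContinuousMap.starSubalgebra_topologicalClosure_eq_top_of_separatesPoints (prodAlg _)
      (prodAlg_sep K))



/-- the discrete functional -/
noncomputable def LF (K : ℝ) (hK : 0 ≤ K) (m : ℤ) (h : ℝ) :
    C(Set.Icc 0 K × UnitAddCircle, ℂ) →ₗ[ℂ] ℂ where
  toFun Ψ := (h:ℂ)^2 * ∑ k ∈ Finset.range ⌊K / h⌋₊, ∑ v : (ZMod (k+1))ˣ,
    ZMod.stdAddChar ((m : ZMod (k+1)) * (v : ZMod (k+1))) *
      Ψ (Set.projIcc 0 K hK (h * ((k + 1 : ℕ) : ℝ)), ZMod.toAddCircle ((v⁻¹ : (ZMod (k+1))ˣ) : ZMod (k+1)))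
  map_add' f g := by
    simp only [ContinuousMap.add_apply, mul_add, Finset.sum_add_distrib]
  map_smul' a f := by
    simp only [ContinuousMap.smul_apply, smul_eq_mul, RingHom.id_apply, Finset.mul_sum]
    refine Finset.sum_congr rfl fun _ _ => Finset.sum_congr rfl fun _ _ => by ring

lemma cont_inner {K : ℝ} (hK : 0 ≤ K) (Ψ : C(Set.Icc 0 K × UnitAddCircle, ℂ)) :
    Continuous (fun t : ℝ => ∫ θ : UnitAddCircle, Ψ (Set.projIcc 0 K hK t, θ)) := by
  have := continuous_parametric_integral_of_continuous (X := ℝ) (Y := UnitAddCircle) (E := ℂ)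
    (μ := volume)
    (f := fun t θ => Ψ (Set.projIcc 0 K hK t, θ))
    (by
      refine Ψ.continuous.comp ?_
      exact (continuous_projIcc.comp continuous_fst).prodMk continuous_snd) isCompact_univ
  simpa using this

lemma int_inner {K : ℝ} (hK : 0 ≤ K) (Ψ : C(Set.Icc 0 K × UnitAddCircle, ℂ)) (t : ℝ) :
    Integrable (fun θ : UnitAddCircle => Ψ (Set.projIcc 0 K hK t, θ)) := by
  have : Continuous (fun θ : UnitAddCircle => Ψ (Set.projIcc 0 K hK t, θ)) := by fun_prop
  exact this.integrable_of_hasCompactSupport (HasCompactSupport.of_compactSpace _)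

/-- the limit functional -/
noncomputable def LF0 (K : ℝ) (hK : 0 ≤ K) (m : ℤ) :
    C(Set.Icc 0 K × UnitAddCircle, ℂ) →ₗ[ℂ] ℂ where
  toFun Ψ := if m = 0 then 6 / (Real.pi:ℂ)^2 * ∫ t in (0:ℝ)..K, (t:ℂ) *
      ∫ θ : UnitAddCircle, Ψ (Set.projIcc 0 K hK t, θ) else 0
  map_add' f g := by
    split_ifs
    · rw [← mul_add, ← intervalIntegral.integral_add]
      · congr 2
        ext t
        rw [← mul_add, ← integral_add (int_inner hK f t) (int_inner hK g t)]
        rfl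
      · exact ((Complex.continuous_ofReal).mul (cont_inner hK f)).intervalIntegrable _ _
      · exact ((Complex.continuous_ofReal).mul (cont_inner hK g)).intervalIntegrable _ _
    · simp
  map_smul' a f := by
    split_ifs
    · simp only [ContinuousMap.smul_apply, smul_eq_mul, RingHom.id_apply]
      simp_rw [integral_const_mul]
      rw [mul_left_comm, ← intervalIntegral.integral_const_mul]
      congr 1
      simp_rw [mul_left_comm _ a]
      rw [intervalIntegral.integral_const_mul, intervalIntegral.integral_const_mul]
    · simp

lemma LF_bound {K : ℝ} (hK : 0 ≤ K) (m : ℤ) {h : ℝ} (hh : 0 < h)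
    (Ψ : C(Set.Icc 0 K × UnitAddCircle, ℂ)) : ‖LF K hK m h Ψ‖ ≤ K^2 * ‖Ψ‖ := by
  have hN : h * ⌊K / h⌋₊ ≤ K := by
    have := Nat.floor_le (show 0 ≤ K / h by positivity)
    rw [le_div_iff₀ hh] at this
    linarith
  simp only [LF, LinearMap.coe_mk, AddHom.coe_mk]
  rw [norm_mul, norm_pow, Complex.norm_real, Real.norm_of_nonneg hh.le]
  have : ‖∑ k ∈ Finset.range ⌊K / h⌋₊, ∑ v : (ZMod (k+1))ˣ,
    ZMod.stdAddChar ((m : ZMod (k+1)) * (v : ZMod (k+1))) *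
      Ψ (Set.projIcc 0 K hK (h * ((k + 1 : ℕ) : ℝ)), ZMod.toAddCircle ((v⁻¹ : (ZMod (k+1))ˣ) : ZMod (k+1)))‖
      ≤ ∑ k ∈ Finset.range ⌊K / h⌋₊, (⌊K / h⌋₊ : ℝ) * ‖Ψ‖ := by
    refine (norm_sum_le _ _).trans (Finset.sum_le_sum fun k hk => ?_)
    have h1 : ((Fintype.card (ZMod (k+1))ˣ : ℕ) : ℝ) ≤ ⌊K / h⌋₊ := by
      rw [ZMod.card_units_eq_totient]
      have := Finset.mem_range.1 hk
      exact_mod_cast (Nat.totient_le _).trans this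
    calc _ ≤ ∑ v : (ZMod (k+1))ˣ, ‖Ψ‖ := by
          refine (norm_sum_le _ _).trans (Finset.sum_le_sum fun v _ => ?_)
          rw [norm_mul, ZMod.stdAddChar_apply, Circle.norm_coe, one_mul]
          exact Ψ.norm_coe_le_norm _
      _ = (Fintype.card (ZMod (k+1))ˣ : ℕ) * ‖Ψ‖ := by simp
      _ ≤ _ := by gcongr
  calc _ ≤ h^2 * ∑ k ∈ Finset.range ⌊K / h⌋₊, (⌊K / h⌋₊ : ℝ) * ‖Ψ‖ := by gcongr
    _ = (h * ⌊K / h⌋₊)^2 * ‖Ψ‖ := by simp; ring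
    _ ≤ _ := by gcongr

lemma LF0_bound {K : ℝ} (hK : 0 ≤ K) (m : ℤ)
    (Ψ : C(Set.Icc 0 K × UnitAddCircle, ℂ)) : ‖LF0 K hK m Ψ‖ ≤ K^2 * ‖Ψ‖ := by
  simp only [LF0, LinearMap.coe_mk, AddHom.coe_mk]
  split_ifs
  · rw [norm_mul]
    have h1 : ‖(6 / (Real.pi:ℂ)^2)‖ ≤ 1 := by
      rw [norm_div, norm_pow, Complex.norm_real, Real.norm_of_nonneg Real.pi_pos.le]
      have := Real.pi_gt_three
      rw [div_le_one (by positivity)]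
      norm_num
      nlinarith
    have h2 : ‖∫ t in (0:ℝ)..K, (t:ℂ) * ∫ θ : UnitAddCircle, Ψ (Set.projIcc 0 K hK t, θ)‖
        ≤ (K * ‖Ψ‖) * |K - 0| := by
      refine intervalIntegral.norm_integral_le_of_norm_le_const fun t ht => ?_
      rw [Set.uIoc_of_le hK] at ht
      rw [norm_mul, Complex.norm_real, Real.norm_of_nonneg ht.1.le]
      have : ‖∫ θ : UnitAddCircle, Ψ (Set.projIcc 0 K hK t, θ)‖ ≤ ‖Ψ‖ := by
        have := norm_integral_le_of_norm_le_const (μ := (volume : Measure UnitAddCircle))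
          (f := fun θ => Ψ (Set.projIcc 0 K hK t, θ)) (C := ‖Ψ‖)
          (Eventually.of_forall fun θ => Ψ.norm_coe_le_norm _)
        simpa [Measure.real] using this
      gcongr
      exact ht.2
    calc _ ≤ 1 * ((K * ‖Ψ‖) * |K - 0|) := by gcongr
      _ = _ := by rw [sub_zero, abs_of_nonneg hK]; ring
  · simp; positivity

lemma fourier_toAddCircle {q : ℕ} [NeZero q] (n : ℤ) (v : ZMod q) :
    fourier n (ZMod.toAddCircle v) = ZMod.stdAddChar ((n : ZMod q) * v) := by
  rw [fourier_apply, ZMod.stdAddChar_apply, ← map_zsmul, zsmul_eq_mul]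
  rfl

lemma LF_prod {K : ℝ} (hK : 0 ≤ K) (m : ℤ) (h : ℝ) (c : C(Set.Icc 0 K, ℂ)) (n : ℤ) :
    LF K hK m h (prodFn c n) = (h:ℂ)^2 * ∑ k ∈ Finset.range ⌊K / h⌋₊,
      c (Set.projIcc 0 K hK (h * ((k + 1 : ℕ) : ℝ))) * kloo (k+1) (n : ZMod (k+1)) (m : ZMod (k+1)) := by
  simp only [LF, LinearMap.coe_mk, AddHom.coe_mk]
  congr 1
  refine Finset.sum_congr rfl fun k _ => ?_
  rw [kloo, Finset.mul_sum]
  refine Finset.sum_congr rfl fun v _ => ?_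
  rw [prodFn_apply, fourier_toAddCircle, AddChar.map_add_eq_mul]
  ring

lemma kloo_le (q : ℕ) [NeZero q] (a b : ZMod q) : ‖kloo q a b‖ ≤ q := by
  unfold kloo
  refine (norm_sum_le _ _).trans ?_
  simp only [ZMod.stdAddChar_apply, Circle.norm_coe]
  simp only [Finset.sum_const, Finset.card_univ, ZMod.card_units_eq_totient]
  simpa using Nat.totient_le q

open Topology in
lemma LF_prod_tendsto_zero {K : ℝ} (hK : 0 < K) (m n : ℤ) (hmn : n ≠ 0 ∨ m ≠ 0)
    (c : C(Set.Icc 0 K, ℂ)) :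
    Tendsto (fun h => LF K hK.le m h (prodFn c n)) (𝓝[>] 0) (𝓝 0) := by
  simp_rw [LF_prod]
  rw [Metric.tendsto_nhds]
  intro ε hε
  set C := ‖c‖ + 1 with hC
  have hC0 : 0 < C := by positivity
  obtain ⟨Q0, hQ⟩ := kloo_tendsto n m hmn (ε / (2 * C * K^2)) (by positivity)
  have hlim : Tendsto (fun h : ℝ => C * (h * Q0)^2) (𝓝[>] 0) (𝓝 0) := by
    have : Continuous (fun h : ℝ => C * (h * Q0)^2) := by fun_prop
    have := this.tendsto 0
    simp at this
    exact this.mono_left nhdsWithin_le_nhds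
  have h3 := (Metric.tendsto_nhds.1 hlim) (ε/2) (by positivity)
  filter_upwards [h3, self_mem_nhdsWithin] with h h3 hh
  have hh : 0 < h := hh
  rw [dist_zero_right] at h3 ⊢
  have hN : h * ⌊K / h⌋₊ ≤ K := by
    have := Nat.floor_le (show 0 ≤ K / h by positivity)
    rw [le_div_iff₀ hh] at this
    linarith
  set N := ⌊K / h⌋₊ with hNdef
  have hk : ∀ k, ‖kloo (k+1) (n : ZMod (k+1)) (m : ZMod (k+1))‖ ≤
      (if k < Q0 then (Q0 : ℝ) else 0) + ε / (2 * C * K^2) * (k + 1 : ℕ) := by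
    intro k
    split_ifs with hk
    · have h1 := kloo_le (k+1) (n : ZMod (k+1)) (m : ZMod (k+1))
      have h2 : ((k+1 : ℕ) : ℝ) ≤ Q0 := by exact_mod_cast hk
      have : 0 ≤ ε / (2 * C * K^2) * (k + 1 : ℕ) := by positivity
      linarith
    · rw [zero_add]
      exact hQ (k+1) (by omega)
  rw [norm_mul, norm_pow, Complex.norm_real, Real.norm_of_nonneg hh.le]
  have h5 : ‖∑ k ∈ Finset.range N,
      c (Set.projIcc 0 K hK.le (h * ((k + 1 : ℕ) : ℝ))) * kloo (k+1) (n : ZMod (k+1)) (m : ZMod (k+1))‖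
      ≤ ∑ k ∈ Finset.range N, C * ((if k < Q0 then (Q0 : ℝ) else 0) + ε / (2 * C * K^2) * N) := by
    refine (norm_sum_le _ _).trans (Finset.sum_le_sum fun k hkN => ?_)
    rw [norm_mul]
    have h6 : ((k+1 : ℕ) : ℝ) ≤ N := by
      have := Finset.mem_range.1 hkN
      exact_mod_cast this
    have h7 : ‖c (Set.projIcc 0 K hK.le (h * ((k + 1 : ℕ) : ℝ)))‖ ≤ C :=
      (c.norm_coe_le_norm _).trans (by rw [hC]; linarith)
    have h8 := hk k
    gcongr
    refine h8.trans ?_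
    gcongr
  have h9 : ∑ k ∈ Finset.range N, (if k < Q0 then (Q0 : ℝ) else 0) ≤ (Q0:ℝ)^2 := by
    rw [← Finset.sum_filter, Finset.sum_const, nsmul_eq_mul, sq]
    gcongr
    have : ((Finset.range N).filter (· < Q0)) ⊆ Finset.range Q0 := by
      intro k; simp
    simpa using Finset.card_le_card this
  have h10 : C * (h * Q0)^2 < ε / 2 := by
    rw [Real.norm_of_nonneg (by positivity)] at h3; exact h3
  calc _ ≤ h^2 * ∑ k ∈ Finset.range N, C * ((if k < Q0 then (Q0 : ℝ) else 0) + ε / (2 * C * K^2) * N) := by gcongr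
    _ = h^2 * (C * (∑ k ∈ Finset.range N, (if k < Q0 then (Q0 : ℝ) else 0) + ε / (2 * C * K^2) * N * N)) := by
        rw [← Finset.mul_sum, Finset.sum_add_distrib, Finset.sum_const]
        simp only [Finset.card_range, nsmul_eq_mul]
        ring
    _ ≤ h^2 * (C * ((Q0:ℝ)^2 + ε / (2 * C * K^2) * N * N)) := by gcongr
    _ = C * (h * Q0)^2 + ε / (2 * K^2) * (h * N)^2 := by field_simp
    _ ≤ C * (h * Q0)^2 + ε / (2 * K^2) * K^2 := by gcongr
    _ = C * (h * Q0)^2 + ε / 2 := by field_simp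
    _ < ε := by linarith

open Topology in
lemma LF_tendsto {K : ℝ} (hK : 0 < K) (m : ℤ) (Ψ : C(Set.Icc 0 K × UnitAddCircle, ℂ)) :
    Tendsto (fun h => LF K hK.le m h Ψ) (𝓝[>] 0) (𝓝 (LF0 K hK.le m Ψ)) := by
  refine closure_tendsto (fun h => LF K hK.le m h) (LF0 K hK.le m) (K^2) ?_ (LF0_bound hK.le m)
    (prodSet (Set.Icc 0 K)) (span_prodSet K) ?_ Ψ
  · filter_upwards [self_mem_nhdsWithin] with h hh x using LF_bound hK.le m hh x
  rintro - ⟨c, n, rfl⟩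
  by_cases hmn : n ≠ 0 ∨ m ≠ 0
  · have h0 : LF0 K hK.le m (prodFn c n) = 0 := by
      simp only [LF0, LinearMap.coe_mk, AddHom.coe_mk]
      split_ifs with hm
      · have hn : n ≠ 0 := by tauto
        have : ∫ θ : UnitAddCircle, fourier n θ = 0 :=
          integral_eq_zero_of_add_right_eq_neg (fourier_add_half_inv_index hn one_pos)
        simp only [prodFn_apply]
        simp_rw [integral_const_mul, this]
        simp
      · rfl
    rw [h0]
    exact LF_prod_tendsto_zero hK m n hmn c
  · push Not at hmn
    obtain ⟨rfl, rfl⟩ := hmn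
    have hc : Continuous (fun t : ℝ => c (Set.projIcc 0 K hK.le t)) :=
      c.continuous.comp continuous_projIcc
    have := totient_sum_tendsto hK hc
    simp_rw [LF_prod]
    have e1 : LF0 K hK.le 0 (prodFn c 0) = 6 / (Real.pi:ℂ)^2 * ∫ t in (0:ℝ)..K, (t:ℂ) *
        c (Set.projIcc 0 K hK.le t) := by
      simp only [LF0, LinearMap.coe_mk, AddHom.coe_mk, prodFn_apply, fourier_zero]
      simp [Measure.real]
    rw [e1]
    convert this using 3 with h
    rw [← Finset.Ico_add_one_right_eq_Icc (1 : ℕ), Finset.sum_Ico_eq_sum_range, Nat.add_sub_cancel]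
    refine Finset.sum_congr rfl fun k _ => ?_
    simp only [kloo, Int.cast_zero, zero_mul, add_zero, AddChar.map_zero_eq_one, Finset.sum_const,
      Finset.card_univ, ZMod.card_units_eq_totient]
    rw [add_comm 1 k]
    simp
    ring



/-- membership predicate -/
def hitsQ (x δ : ℝ) (q : ℕ) : Prop := 0 < q ∧ ∃ p : ℤ, |x - (p:ℝ) / q| < δ / 2

lemma qmin_eq_sInf (x δ : ℝ) : qmin x δ = sInf {q : ℕ | hitsQ x δ q} := by
  unfold qmin hitsQ
  congr 1
  ext q
  simp only [Set.mem_ofPred_eq, abs_lt]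
  constructor
  · rintro ⟨h, p, h1, h2⟩; exact ⟨h, p, by linarith, by linarith⟩
  · rintro ⟨h, p, h1, h2⟩; exact ⟨h, p, by linarith, by linarith⟩

lemma hitsQ_of_large {δ : ℝ} (x : ℝ) {N : ℕ} (hN0 : 0 < N) (hN : 1 / (N:ℝ) < δ) : hitsQ x δ N := by
  refine ⟨hN0, round (x * N), ?_⟩
  have hN' : (0:ℝ) < N := by exact_mod_cast hN0
  have h1 := abs_sub_round (x * N)
  have h2 : x - (round (x * N) : ℝ) / N = (x * N - round (x * N)) / N := by field_simp
  rw [h2, abs_div, abs_of_pos hN', div_lt_iff₀ hN']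
  rw [div_lt_iff₀ hN'] at hN
  linarith

lemma exists_hitsQ {δ : ℝ} (hδ : 0 < δ) (x : ℝ) : ∃ q, hitsQ x δ q := by
  obtain ⟨n, hn⟩ := exists_nat_one_div_lt hδ
  exact ⟨n+1, hitsQ_of_large x (Nat.succ_pos n) (by exact_mod_cast hn)⟩

lemma qmin_hits {δ : ℝ} (hδ : 0 < δ) (x : ℝ) : hitsQ x δ (qmin x δ) := by
  rw [qmin_eq_sInf]
  exact Nat.sInf_mem (s := {q : ℕ | hitsQ x δ q}) (exists_hitsQ hδ x)

lemma qmin_le {δ x : ℝ} {q : ℕ} (h : hitsQ x δ q) : qmin x δ ≤ q := by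
  rw [qmin_eq_sInf]
  exact Nat.sInf_le h

lemma qmin_eq_iff {δ : ℝ} (hδ : 0 < δ) (x : ℝ) (q : ℕ) :
    qmin x δ = q ↔ hitsQ x δ q ∧ ∀ s < q, ¬ hitsQ x δ s := by
  constructor
  · rintro rfl
    exact ⟨qmin_hits hδ x, fun s hs h => absurd (qmin_le h) (by omega)⟩
  · rintro ⟨h1, h2⟩
    refine le_antisymm (qmin_le h1) ?_
    by_contra h
    exact h2 _ (by omega) (qmin_hits hδ x)

lemma hitsQ_add_one (x δ : ℝ) (q : ℕ) : hitsQ (x + 1) δ q ↔ hitsQ x δ q := by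
  unfold hitsQ
  refine and_congr_right fun hq => ?_
  have hq' : (q:ℝ) ≠ 0 := by positivity
  constructor
  · rintro ⟨p, hp⟩
    refine ⟨p - q, ?_⟩
    push_cast
    convert hp using 2
    field_simp
    ring
  · rintro ⟨p, hp⟩
    refine ⟨p + q, ?_⟩
    push_cast
    convert hp using 2
    field_simp
    ring

lemma qmin_periodic (δ : ℝ) : Function.Periodic (fun x => qmin x δ) 1 := by
  intro x
  simp only [qmin_eq_sInf, hitsQ_add_one]

lemma measurableSet_hitsQ (δ : ℝ) (q : ℕ) : MeasurableSet {x | hitsQ x δ q} := by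
  unfold hitsQ
  refine MeasurableSet.inter (MeasurableSet.const _) ?_
  have : {x : ℝ | ∃ p : ℤ, |x - (p:ℝ) / q| < δ / 2} = ⋃ p : ℤ, {x | |x - (p:ℝ) / q| < δ / 2} := by
    ext; simp
  change MeasurableSet {x : ℝ | ∃ p : ℤ, |x - (p:ℝ) / q| < δ / 2}
  rw [this]
  refine MeasurableSet.iUnion fun p => ?_
  exact measurableSet_lt (by fun_prop) measurable_const

lemma measurable_qmin {δ : ℝ} (hδ : 0 < δ) : Measurable (fun x => qmin x δ) := by
  refine measurable_to_countable' fun q => ?_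
  have : (fun x => qmin x δ) ⁻¹' {q} = {x | hitsQ x δ q} ∩ ⋂ s ∈ Set.Iio q, {x | hitsQ x δ s}ᶜ := by
    ext x
    simp [qmin_eq_iff hδ]
  rw [this]
  refine (measurableSet_hitsQ δ q).inter ?_
  exact MeasurableSet.biInter (Set.to_countable _) fun s _ => (measurableSet_hitsQ δ s).compl

lemma qmin_neighbor {δ : ℝ} (hδ : 0 < δ) {q : ℕ} {p r b : ℤ} (hb : 0 < b) (hbq : b < q)
    (hpb : p * b - q * r = 1) {x : ℝ} (hx : |x - (p:ℝ) / q| < δ / 2) :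
    qmin x δ = q ↔ δ / 2 - 1 / ((q:ℝ) * b) ≤ x - (p:ℝ) / q ∧
      x - (p:ℝ) / q ≤ 1 / ((q:ℝ) * (q - b)) - δ / 2 := by
  have hq : 0 < q := by omega
  have hqR : (0:ℝ) < q := by exact_mod_cast hq
  have hbR : (0:ℝ) < b := by exact_mod_cast hb
  have hbR' : (0:ℝ) < (q:ℝ) - b := by
    have : (b:ℝ) < q := by exact_mod_cast hbq
    linarith
  have hpbR : (p:ℝ) * b - q * r = 1 := by exact_mod_cast hpb
  have e1 : (p:ℝ) / q - (r:ℝ) / b = 1 / (q * b) := by field_simp; linarith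
  have e2 : ((p:ℝ) - r) / (q - b) - (p:ℝ) / q = 1 / (q * (q - b)) := by field_simp; linarith
  have e1p : 0 < 1 / ((q:ℝ) * b) := by positivity
  have e2p : 0 < 1 / ((q:ℝ) * (q - b)) := by positivity
  have hx' := abs_lt.1 hx
  rw [qmin_eq_iff hδ]
  constructor
  · rintro ⟨-, h⟩
    constructor
    · by_contra hc
      push Not at hc
      apply h b.toNat (by omega)
      have hcast : ((b.toNat : ℕ) : ℝ) = b := by
        have : ((b.toNat : ℕ) : ℤ) = b := Int.toNat_of_nonneg hb.le
        exact_mod_cast this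
      refine ⟨by omega, r, ?_⟩
      rw [hcast, abs_lt]
      constructor <;> linarith
    · by_contra hc
      push Not at hc
      apply h (q - b).toNat (by omega)
      have hcast : (((q - b).toNat : ℕ) : ℝ) = q - b := by
        have : (((q - b).toNat : ℕ) : ℤ) = q - b := Int.toNat_of_nonneg (by omega)
        exact_mod_cast this
      refine ⟨by omega, p - r, ?_⟩
      rw [hcast, abs_lt]
      push_cast
      constructor <;> linarith
  · rintro ⟨h1, h2⟩
    refine ⟨⟨hq, p, hx⟩, ?_⟩
    rintro s hs ⟨hs0, u, hu⟩
    have hu' := abs_lt.1 hu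
    have hsR : (0:ℝ) < s := by exact_mod_cast hs0
    rcases lt_trichotomy (u * q) (p * s) with hlt | heq | hgt
    · have key : 0 ≤ r * s - u * b := by
        by_contra hneg
        have hn : r * s - u * b ≤ -1 := by omega
        have e : (q:ℤ) * (r * s - u * b) = b * (p * s - u * q) - s := by linear_combination (-(s:ℤ)) * hpb
        have : b ≤ b * (p * s - u * q) := by nlinarith
        nlinarith
      have keyR : (0:ℝ) ≤ r * s - u * b := by exact_mod_cast key
      have : (u:ℝ) / s ≤ (r:ℝ) / b := by rw [div_le_div_iff₀ hsR hbR]; linarith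
      linarith
    · -- impossible
      have hdvd : (q:ℤ) ∣ s := by
        have hc : IsCoprime (q:ℤ) p := ⟨-r, b, by linarith⟩
        exact hc.dvd_of_dvd_mul_left ⟨u, by linarith⟩
      have := Int.le_of_dvd (by omega) hdvd
      omega
    · have key : 0 ≤ u * (q - b) - (p - r) * s := by
        by_contra hneg
        have hn : u * (q - b) - (p - r) * s ≤ -1 := by omega
        have e : (q:ℤ) * (u * (q - b) - (p - r) * s) = (q - b) * (u * q - p * s) - s := by
          linear_combination (-(s:ℤ)) * hpb
        have : (q - b) ≤ (q - b) * (u * q - p * s) := by nlinarith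
        nlinarith
      have keyR : (0:ℝ) ≤ u * (q - b) - (p - r) * s := by exact_mod_cast key
      have : ((p:ℝ) - r) / (q - b) ≤ (u:ℝ) / s := by rw [div_le_div_iff₀ hbR' hsR]; linarith
      linarith

/-- from a coprime pair get the neighbour data -/
lemma near_of_qmin {δ : ℝ} (hδ : 0 < δ) (hδ1 : δ < 1) {q : ℕ} {p : ℤ} (hpq : IsCoprime p (q:ℤ))
    {x : ℝ} (hx : |x - (p:ℝ) / q| < δ / 2) (hq : qmin x δ = q) :
    |x - (p:ℝ) / q| < 1 / (2 * q) := by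
  have hq0 : 0 < q := by rw [← hq]; exact (qmin_hits hδ x).1
  have hqR : (0:ℝ) < q := by exact_mod_cast hq0
  rcases Nat.lt_or_ge 1 q with h1 | h1
  · obtain ⟨a, c, hac⟩ := hpq
    set b := a % q with hb
    have hb0 : 0 ≤ b := Int.emod_nonneg _ (by omega)
    have hbq : b < q := Int.emod_lt_of_pos _ (by omega)
    have hab := Int.emod_add_mul_ediv a q
    have hbp : p * b - q * (-c - p * (a / q)) = 1 := by
      rw [← hb] at hab
      linear_combination hac + p * hab
    have hbpos : 0 < b := by
      rcases hb0.lt_or_eq with h | h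
      · exact h
      · exfalso
        rw [← h] at hbp
        have : (q:ℤ) ∣ 1 := ⟨(c + p * (a / q)), by linarith⟩
        have := Int.le_of_dvd (by norm_num) this
        omega
    obtain ⟨h3, h4⟩ := (qmin_neighbor hδ hbpos hbq hbp hx).1 hq
    have hbR : (1:ℝ) ≤ b := by exact_mod_cast hbpos
    have hbR' : (1:ℝ) ≤ (q:ℝ) - b := by
      have : (b:ℝ) + 1 ≤ q := by exact_mod_cast hbq
      linarith
    have e1 : 1 / ((q:ℝ) * b) ≤ 1 / q := one_div_le_one_div_of_le hqR (by nlinarith)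
    have e2 : 1 / ((q:ℝ) * (q - b)) ≤ 1 / q := one_div_le_one_div_of_le hqR (by nlinarith)
    have e3 : 1 / (2 * (q:ℝ)) = (1 / q) / 2 := by field_simp
    have hx' := abs_lt.1 hx
    rw [e3, abs_lt]
    constructor <;> linarith
  · have : q = 1 := by omega
    subst this
    refine hx.trans ?_
    norm_num
    linarith

lemma coprime_of_qmin {δ : ℝ} {q : ℕ} {p : ℤ} 
    {x : ℝ} (hx : |x - (p:ℝ) / q| < δ / 2) (hq0 : 0 < q) (hq : qmin x δ = q) : IsCoprime p (q:ℤ) := by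
  rw [Int.isCoprime_iff_gcd_eq_one]
  by_contra hg
  set g := Int.gcd p q with hgdef
  have hgq : g ∣ q := by
    have := Int.gcd_dvd_right p q
    exact_mod_cast this
  have hgp : (g:ℤ) ∣ p := Int.gcd_dvd_left p q
  obtain ⟨q', hq'⟩ := hgq
  obtain ⟨p', hp'⟩ := hgp
  have hg0 : 0 < g := Nat.pos_of_ne_zero (by rintro h; rw [h] at hq'; omega)
  have hq'0 : 0 < q' := Nat.pos_of_ne_zero (by rintro h; rw [h] at hq'; omega)
  have hgR : (g:ℝ) ≠ 0 := by positivity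
  have : hitsQ x δ q' := by
    refine ⟨hq'0, p', ?_⟩
    convert hx using 3
    rw [hq', hp']
    push_cast
    field_simp
  have h1 := qmin_le this
  rw [hq] at h1
  have : 2 ≤ g := by omega
  nlinarith



/-- normalized length function -/
noncomputable def Phi (t a : ℝ) : ℝ := max 0 (1 / max 1 (t^2 * a) + 1 / max 1 (t^2 * (1 - a)) - 1)

lemma Phi_symm (t a : ℝ) : Phi t (1 - a) = Phi t a := by
  unfold Phi
  rw [sub_sub_cancel, add_comm (1 / max 1 (t^2 * (1 - a)))]

lemma Phi_norm (t : ℝ) {a : ℝ} (h0 : 0 ≤ a) (h1 : a < 1) : Phi t ‖(a : UnitAddCircle)‖ = Phi t a := by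
  rw [UnitAddCircle.norm_eq, abs_sub_round_eq_min, Int.fract_eq_self.2 ⟨h0, h1⟩]
  rcases min_cases a (1 - a) with ⟨h, _⟩ | ⟨h, _⟩ <;> rw [h]
  exact Phi_symm t a

lemma Phi_nonneg (t a : ℝ) : 0 ≤ Phi t a := le_max_left _ _

lemma Phi_continuous : Continuous (fun p : ℝ × ℝ => Phi p.1 p.2) := by
  unfold Phi
  have h : ∀ x : ℝ, max 1 x ≠ 0 := fun x => (lt_of_lt_of_le one_pos (le_max_left _ _)).ne'
  refine continuous_const.max (((continuous_const.div (by fun_prop) fun _ => h _).add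
    (continuous_const.div (by fun_prop) fun _ => h _)).sub continuous_const)

/-- the piece of `{qmin = q}` around `p/q` -/
def Jset (δ : ℝ) (q : ℕ) (v : (ZMod q)ˣ) : Set ℝ :=
  {x | |x - (((v : ZMod q).val : ℕ) : ℝ) / q| < δ / 2 ∧ qmin x δ = q}

lemma volume_piece (c d l u : ℝ) :
    volume.real {x : ℝ | |x - c| < d ∧ l ≤ x - c ∧ x - c ≤ u} = max 0 (min d u - max (-d) l) := by
  set S := {x : ℝ | |x - c| < d ∧ l ≤ x - c ∧ x - c ≤ u} with hS
  have h1 : Set.Ioo (c + max (-d) l) (c + min d u) ⊆ S := by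
    rintro x ⟨hx1, hx2⟩
    have a1 := le_max_left (-d) l
    have a2 := le_max_right (-d) l
    have a3 := min_le_left d u
    have a4 := min_le_right d u
    refine ⟨abs_lt.2 ⟨by linarith, by linarith⟩, by linarith, by linarith⟩
  have h2 : S ⊆ Set.Icc (c + max (-d) l) (c + min d u) := by
    rintro x ⟨hx1, hx2, hx3⟩
    rw [abs_lt] at hx1
    constructor
    · have := max_le hx1.1.le hx2; linarith
    · have := le_min hx1.2.le hx3; linarith
  have h3 : volume S = ENNReal.ofReal (min d u - max (-d) l) := by
    apply le_antisymm
    · refine (measure_mono h2).trans ?_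
      rw [Real.volume_Icc]; apply le_of_eq; congr 1; ring
    · refine le_trans ?_ (measure_mono h1)
      rw [Real.volume_Ioo]; apply le_of_eq; congr 1; ring
  rw [Measure.real, h3, ENNReal.toReal_ofReal', max_comm]

lemma phi_algebra {δ : ℝ} (hδ : 0 < δ) {X Y : ℝ} (hX : 0 < X) (hY : 0 < Y) :
    max 0 (min (δ/2) (1 / Y - δ/2) - max (-(δ/2)) (δ/2 - 1 / X)) =
      δ * max 0 (1 / max 1 (δ * X) + 1 / max 1 (δ * Y) - 1) := by
  have key : ∀ Z : ℝ, 0 < Z → δ * (1 / max 1 (δ * Z)) = min δ (1 / Z) := by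
    intro Z hZ
    rcases le_total (δ * Z) 1 with h | h
    · rw [max_eq_left h, min_eq_left]
      · simp
      · rw [le_div_iff₀ hZ]; exact h
    · rw [max_eq_right h, min_eq_right]
      · field_simp
      · rw [div_le_iff₀ hZ]; exact h
  rw [mul_max_of_nonneg _ _ hδ.le, mul_zero]
  congr 1
  rw [mul_sub, mul_add, key X hX, key Y hY]
  have e1 : min (δ/2) (1 / Y - δ/2) = min δ (1/Y) - δ/2 := by
    rw [← min_sub_sub_right]; congr 1; ring
  have e2 : max (-(δ/2)) (δ/2 - 1 / X) = δ/2 - min δ (1/X) := by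
    rw [← max_sub_sub_left]; congr 1; ring
  rw [e1, e2]; ring

lemma unit_data {q : ℕ} (hq : 1 < q) (v : (ZMod q)ˣ) :
    0 < ((v⁻¹ : (ZMod q)ˣ) : ZMod q).val ∧ ((v⁻¹ : (ZMod q)ˣ) : ZMod q).val < q ∧
    ∃ r : ℤ, ((v : ZMod q).val : ℤ) * (((v⁻¹ : (ZMod q)ˣ) : ZMod q).val : ℤ) - q * r = 1 := by
  have : NeZero q := ⟨by omega⟩
  have : Fact (1 < q) := ⟨hq⟩
  refine ⟨?_, ZMod.val_lt _, ?_⟩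
  · refine Nat.pos_of_ne_zero fun h => ?_
    rw [ZMod.val_eq_zero] at h
    exact (v⁻¹).ne_zero h
  · have h : ((((v : ZMod q).val : ℤ) * (((v⁻¹ : (ZMod q)ˣ) : ZMod q).val : ℤ) : ℤ) : ZMod q) = ((1 : ℤ) : ZMod q) := by
      push_cast
      rw [ZMod.natCast_zmod_val, ZMod.natCast_zmod_val]
      simp
    have h2 := (ZMod.intCast_eq_intCast_iff_dvd_sub _ _ q).1 h
    obtain ⟨r, hr⟩ := h2
    exact ⟨-r, by linarith⟩

lemma Jset_volume {δ : ℝ} (hδ : 0 < δ) (hδ1 : δ < 1) {q : ℕ} [NeZero q] (v : (ZMod q)ˣ) :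
    volume.real (Jset δ q v) =
      δ * Phi (Real.sqrt δ * q) ‖ZMod.toAddCircle ((v⁻¹ : (ZMod q)ˣ) : ZMod q)‖ := by
  have hq0 : 0 < q := Nat.pos_of_ne_zero (NeZero.ne q)
  have hqR : (0:ℝ) < q := by exact_mod_cast hq0
  set b := ((v⁻¹ : (ZMod q)ˣ) : ZMod q).val with hb
  have hblt : b < q := ZMod.val_lt _
  have hbltR : (b:ℝ) < q := by exact_mod_cast hblt
  rw [ZMod.toAddCircle_apply, ← hb, Phi_norm _ (by positivity) (by rw [div_lt_one hqR]; exact hbltR)]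
  rcases Nat.lt_or_ge 1 q with h1 | h1
  · obtain ⟨hb0, -, r, hr⟩ := unit_data h1 v
    rw [← hb] at hr hb0
    have e : Jset δ q v = {x : ℝ | |x - (((v : ZMod q).val : ℕ) : ℝ) / q| < δ / 2 ∧
        δ / 2 - 1 / ((q:ℝ) * b) ≤ x - (((v : ZMod q).val : ℕ) : ℝ) / q ∧
        x - (((v : ZMod q).val : ℕ) : ℝ) / q ≤ 1 / ((q:ℝ) * (q - b)) - δ / 2} := by
      ext x
      simp only [Jset, Set.mem_ofPred_eq]
      refine and_congr_right fun hx => ?_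
      have := qmin_neighbor (x := x) (p := ((v : ZMod q).val : ℤ)) (b := (b:ℤ)) (r := r) hδ (by exact_mod_cast hb0)
        (by exact_mod_cast hblt) hr (by simpa only [Int.cast_natCast] using hx)
      simpa only [Int.cast_natCast] using this
    have hbR : (0:ℝ) < b := by exact_mod_cast hb0
    have hbR' : (0:ℝ) < q - b := by linarith
    rw [e, volume_piece, phi_algebra hδ (by positivity) (by positivity), Phi]
    rw [mul_pow, Real.sq_sqrt hδ.le]
    have f1 : δ * q ^ 2 * ((b:ℝ) / q) = δ * (q * b) := by field_simp
    have f2 : δ * q ^ 2 * (1 - (b:ℝ) / q) = δ * (q * (q - b)) := by field_simp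
    rw [f1, f2]
  · have hq1 : q = 1 := by omega
    have hb0 : b = 0 := by omega
    have hv : (v : ZMod q).val = 0 := by have := ZMod.val_lt (v : ZMod q); omega
    have e : Jset δ q v = Set.Ioo (-(δ/2)) (δ/2) := by
      ext x
      simp only [Jset, Set.mem_ofPred_eq, hv, Nat.cast_zero, zero_div, sub_zero, Set.mem_Ioo, ← abs_lt]
      refine ⟨fun h => h.1, fun h => ⟨h, ?_⟩⟩
      rw [qmin_eq_iff hδ]
      refine ⟨⟨hq0, 0, by simpa using h⟩, fun s hs hh => ?_⟩
      have := hh.1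
      omega
    rw [e, hb0, hq1, Measure.real, Real.volume_Ioo, ENNReal.toReal_ofReal (by linarith), Phi]
    simp only [Nat.cast_zero, Nat.cast_one, zero_div, mul_zero, mul_one, sub_zero, Real.sq_sqrt hδ.le]
    rw [max_eq_left (zero_le_one), max_eq_left hδ1.le]
    norm_num

lemma Jset_measurable {δ : ℝ} (hδ : 0 < δ) (q : ℕ) (v : (ZMod q)ˣ) : MeasurableSet (Jset δ q v) := by
  unfold Jset
  refine MeasurableSet.inter (s₁ := {x : ℝ | |x - (((v : ZMod q).val : ℕ) : ℝ) / q| < δ / 2})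
    (measurableSet_lt (by fun_prop) measurable_const) ?_
  exact measurable_qmin hδ (measurableSet_singleton q)

lemma unit_coprime {q : ℕ} (v : (ZMod q)ˣ) : IsCoprime ((v : ZMod q).val : ℤ) (q:ℤ) := by
  have := ZMod.val_coe_unit_coprime v
  exact Nat.isCoprime_iff_coprime.2 this

lemma Jset_near {δ : ℝ} (hδ : 0 < δ) (hδ1 : δ < 1) {q : ℕ} (v : (ZMod q)ˣ) {x : ℝ} (hx : x ∈ Jset δ q v) :
    |x - (((v : ZMod q).val : ℕ) : ℝ) / q| < 1 / (2 * q) := by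
  have := near_of_qmin hδ hδ1 (p := ((v : ZMod q).val : ℤ)) (unit_coprime v) (x := x)
    (by simpa only [Int.cast_natCast] using hx.1) hx.2
  simpa only [Int.cast_natCast] using this

lemma Jset_union {δ : ℝ} (hδ : 0 < δ) (hδ1 : δ < 1) {q : ℕ} (hq : 0 < q) :
    Set.Ico (-(1 / (2 * q)) : ℝ) (-(1 / (2 * q)) + 1) ∩ {x | qmin x δ = q} = ⋃ v, Jset δ q v := by
  have : NeZero q := ⟨hq.ne'⟩
  have hqR : (0:ℝ) < q := by exact_mod_cast hq
  have e3 : 1 / (2 * (q:ℝ)) = (1 / q) / 2 := by field_simp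
  ext x
  simp only [Set.mem_inter_iff, Set.mem_Ico, Set.mem_ofPred_eq, Set.mem_iUnion]
  constructor
  · rintro ⟨⟨h1, h2⟩, h3⟩
    obtain ⟨-, p, hp⟩ := qmin_hits hδ x
    rw [h3] at hp
    have hc := coprime_of_qmin hp hq h3
    have hn := abs_lt.1 (near_of_qmin hδ hδ1 hc hp h3)
    have hp0 : 0 ≤ p := by
      have : -(1 / (q:ℝ)) < p / q := by linarith
      have : (-1 : ℝ) < p := by
        rw [← neg_div, div_lt_div_iff_of_pos_right hqR] at this; exact this
      have : (-1 : ℤ) < p := by exact_mod_cast this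
      omega
    have hpq : p < q := by
      have : (p:ℝ) / q < 1 := by linarith
      rw [div_lt_one hqR] at this
      exact_mod_cast this
    lift p to ℕ using hp0
    have hc' : Nat.Coprime p q := Nat.isCoprime_iff_coprime.1 hc
    have hv : ((ZMod.unitOfCoprime p hc' : (ZMod q)ˣ) : ZMod q).val = p := by
      rw [ZMod.coe_unitOfCoprime, ZMod.val_natCast, Nat.mod_eq_of_lt (by exact_mod_cast hpq)]
    refine ⟨ZMod.unitOfCoprime p hc', ?_, h3⟩
    rw [hv]
    simpa only [Int.cast_natCast] using hp
  · rintro ⟨v, hv⟩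
    have hn := abs_lt.1 (Jset_near hδ hδ1 v hv)
    have h1 : (0:ℝ) ≤ (((v : ZMod q).val : ℕ) : ℝ) / q := by positivity
    have h2 : (((v : ZMod q).val : ℕ) : ℝ) / q ≤ 1 - 1 / q := by
      have : (((v : ZMod q).val : ℕ) : ℝ) + 1 ≤ q := by exact_mod_cast ZMod.val_lt (v : ZMod q)
      rw [div_le_iff₀ hqR, sub_mul, one_div, inv_mul_cancel₀ hqR.ne']
      linarith
    exact ⟨⟨by linarith, by linarith⟩, hv.2⟩

lemma Jset_disjoint {δ : ℝ} (hδ : 0 < δ) (hδ1 : δ < 1) {q : ℕ} (hq : 0 < q) :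
    Pairwise (Function.onFun Disjoint (Jset δ q)) := by
  have : NeZero q := ⟨hq.ne'⟩
  have hqR : (0:ℝ) < q := by exact_mod_cast hq
  intro v w hvw
  refine Set.disjoint_left.2 fun x hv hw => hvw ?_
  have h1 := abs_lt.1 (Jset_near hδ hδ1 v hv)
  have h2 := abs_lt.1 (Jset_near hδ hδ1 w hw)
  have e3 : 1 / (2 * (q:ℝ)) = (1 / q) / 2 := by field_simp
  have h3 : (((v : ZMod q).val : ℕ) : ℝ) / q < (((w : ZMod q).val : ℕ) : ℝ) / q + 1 / q := by linarith
  have h4 : (((w : ZMod q).val : ℕ) : ℝ) / q < (((v : ZMod q).val : ℕ) : ℝ) / q + 1 / q := by linarith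
  rw [← add_div, div_lt_div_iff_of_pos_right hqR] at h3 h4
  have h3' : (v : ZMod q).val < (w : ZMod q).val + 1 := by exact_mod_cast h3
  have h4' : (w : ZMod q).val < (v : ZMod q).val + 1 := by exact_mod_cast h4
  exact Units.ext (ZMod.val_injective q (by omega))



lemma integral_level {δ : ℝ} (hδ : 0 < δ) (hδ1 : δ < 1) {q : ℕ} (hq : 0 < q) {w : ℝ → ℂ}
    (hw : Continuous w) (hwp : Function.Periodic w 1) [Fintype (ZMod q)ˣ] :
    ∫ x in (0:ℝ)..1, Set.indicator {x | qmin x δ = q} w x = ∑ v : (ZMod q)ˣ, ∫ x in Jset δ q v, w x := by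
  have hm : MeasurableSet {x | qmin x δ = q} := measurable_qmin hδ (measurableSet_singleton q)
  have hp : Function.Periodic (Set.indicator {x | qmin x δ = q} w) 1 := by
    intro x
    simp only [Set.indicator_apply, Set.mem_ofPred_eq]
    have := qmin_periodic δ x
    simp only at this
    simp only [this, hwp x]
  have h1 := hp.intervalIntegral_add_eq 0 (-(1 / (2 * q)) : ℝ)
  rw [zero_add] at h1
  rw [h1, intervalIntegral.integral_of_le (by linarith), ← integral_Ico_eq_integral_Ioc,
    setIntegral_indicator hm, Jset_union hδ hδ1 hq,
    integral_iUnion_fintype (fun v => Jset_measurable hδ q v) (Jset_disjoint hδ hδ1 hq)]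
  intro v
  refine (hw.integrableOn_Icc (a := (((v : ZMod q).val : ℕ) : ℝ) / q - δ/2)
    (b := (((v : ZMod q).val : ℕ) : ℝ) / q + δ/2)).mono_set ?_
  rintro x ⟨hx, -⟩
  have := abs_lt.1 hx
  exact ⟨by linarith, by linarith⟩

lemma integral_decomp {δ : ℝ} (hδ : 0 < δ) (hδ1 : δ < 1) {N : ℕ} (hN0 : 0 < N) (hN : 1 / (N:ℝ) < δ)
    {w : ℝ → ℂ} (hw : Continuous w) (hwp : Function.Periodic w 1) (G : ℕ → ℂ) :
    ∫ x in (0:ℝ)..1, w x * G (qmin x δ) =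
      ∑ k ∈ Finset.range N, G (k+1) * ∑ v : (ZMod (k+1))ˣ, ∫ x in Jset δ (k+1) v, w x := by
  have e : ∀ x, w x * G (qmin x δ) =
      ∑ k ∈ Finset.range N, G (k+1) * Set.indicator {x | qmin x δ = k+1} w x := by
    intro x
    have h1 : 0 < qmin x δ := (qmin_hits hδ x).1
    have h2 : qmin x δ ≤ N := qmin_le (hitsQ_of_large x hN0 hN)
    rw [Finset.sum_eq_single (qmin x δ - 1)]
    · have : qmin x δ - 1 + 1 = qmin x δ := by omega
      rw [this, Set.indicator_of_mem (by simp only [Set.mem_ofPred_eq]), mul_comm]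
    · intro k _ hk
      rw [Set.indicator_of_notMem, mul_zero]
      simp only [Set.mem_ofPred_eq]
      omega
    · intro h
      exact absurd (Finset.mem_range.2 (by omega)) h
  simp_rw [e]
  rw [intervalIntegral.integral_finsetSum]
  · refine Finset.sum_congr rfl fun k _ => ?_
    rw [intervalIntegral.integral_const_mul, integral_level hδ hδ1 (Nat.succ_pos k) hw hwp]
  · intro k _
    refine IntervalIntegrable.const_mul ?_ _
    have hm : MeasurableSet {x | qmin x δ = k+1} := measurable_qmin hδ (measurableSet_singleton (k+1))
    rw [intervalIntegrable_iff]
    exact (intervalIntegrable_iff.1 (hw.intervalIntegrable 0 1)).indicator hm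



lemma one_div_max_le (x : ℝ) : 1 / max 1 x ≤ 1 := by
  have : (1:ℝ) ≤ max 1 x := le_max_left _ _
  rw [div_le_one (by linarith)]; exact this

lemma Phi_le_one (t a : ℝ) : Phi t a ≤ 1 := by
  unfold Phi
  have h1 := one_div_max_le (t^2 * a)
  have h2 := one_div_max_le (t^2 * (1 - a))
  exact max_le zero_le_one (by linarith)

lemma Phi_le {t a : ℝ} (ht : 0 < t) : Phi t a ≤ 2 / t^2 := by
  unfold Phi
  have h1 := one_div_max_le (t^2 * a)
  have h2 := one_div_max_le (t^2 * (1 - a))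
  refine max_le (by positivity) ?_
  have key : ∀ y : ℝ, 1/2 ≤ y → 1 / max 1 (t^2 * y) ≤ 2 / t^2 := by
    intro y hy
    have h : t^2 / 2 ≤ max 1 (t^2 * y) := by
      refine le_trans ?_ (le_max_right _ _)
      have : 0 < t^2 := by positivity
      nlinarith
    calc 1 / max 1 (t^2 * y) ≤ 1 / (t^2 / 2) := one_div_le_one_div_of_le (by positivity) h
      _ = 2 / t^2 := by field_simp
  rcases le_total a (1/2) with h | h
  · have := key (1 - a) (by linarith); linarith
  · have := key a h; linarith

lemma Phi_zero {t a : ℝ} (ht : 0 < t) (h1 : 2 / t^2 ≤ a) (h2 : 2 / t^2 ≤ 1 - a) : Phi t a = 0 := by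
  unfold Phi
  have ht2 : 0 < t^2 := by positivity
  have key : ∀ y : ℝ, 2 / t^2 ≤ y → 1 / max 1 (t^2 * y) ≤ 1/2 := by
    intro y hy
    refine one_div_le_one_div_of_le (by norm_num) ((?_ : (2:ℝ) ≤ _).trans (le_max_right _ _))
    rw [div_le_iff₀ ht2] at hy
    linarith
  have := key a h1
  have := key _ h2
  exact max_eq_left (by linarith)

lemma Phi_unit {q : ℕ} [NeZero q] (t : ℝ) (v : (ZMod q)ˣ) :
    Phi t ‖ZMod.toAddCircle ((v⁻¹ : (ZMod q)ˣ) : ZMod q)‖ =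
      Phi t ((((v⁻¹ : (ZMod q)ˣ) : ZMod q).val : ℝ) / q) := by
  have hq0 : 0 < q := Nat.pos_of_ne_zero (NeZero.ne q)
  have hqR : (0:ℝ) < q := by exact_mod_cast hq0
  rw [ZMod.toAddCircle_apply, Phi_norm _ (by positivity)]
  rw [div_lt_one hqR]
  exact_mod_cast ZMod.val_lt _

/-- measure of the level set `qmin = q` -/
noncomputable def lev (δ : ℝ) (q : ℕ) [NeZero q] : ℝ := ∑ v : (ZMod q)ˣ, volume.real (Jset δ q v)

lemma lev_nonneg (δ : ℝ) (q : ℕ) [NeZero q] : 0 ≤ lev δ q :=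
  Finset.sum_nonneg fun _ _ => measureReal_nonneg

lemma lev_le_one {δ : ℝ} (hδ : 0 < δ) (hδ1 : δ < 1) (q : ℕ) [NeZero q] :
    lev δ q ≤ Real.sqrt δ * (Real.sqrt δ * q) := by
  unfold lev
  calc _ ≤ ∑ v : (ZMod q)ˣ, δ := by
        refine Finset.sum_le_sum fun v _ => ?_
        rw [Jset_volume hδ hδ1]
        have := Phi_le_one (Real.sqrt δ * q) ‖ZMod.toAddCircle ((v⁻¹ : (ZMod q)ˣ) : ZMod q)‖
        nlinarith
    _ = (q.totient : ℝ) * δ := by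
        rw [Finset.sum_const, Finset.card_univ, ZMod.card_units_eq_totient, nsmul_eq_mul]
    _ ≤ q * δ := by gcongr; exact Nat.totient_le q
    _ = _ := by rw [← mul_assoc, Real.mul_self_sqrt hδ.le]; ring

lemma lev_le_two {δ : ℝ} (hδ : 0 < δ) (hδ1 : δ < 1) (q : ℕ) [NeZero q] (hq : 1 < q) :
    lev δ q ≤ Real.sqrt δ * (8 / (Real.sqrt δ * q)^3) := by
  set h := Real.sqrt δ with hh
  have hh0 : 0 < h := Real.sqrt_pos.2 hδ
  have hδh : δ = h^2 := (Real.sq_sqrt hδ.le).symm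
  have hqR : (0:ℝ) < q := by exact_mod_cast (by omega : 0 < q)
  set t := h * q with ht
  have ht0 : 0 < t := by positivity
  set B := ⌊2 * q / t^2⌋₊ with hB
  have hBle : (B:ℝ) ≤ 2 * q / t^2 := Nat.floor_le (by positivity)
  classical
  set b : (ZMod q)ˣ → ℕ := fun v => ((v⁻¹ : (ZMod q)ˣ) : ZMod q).val with hb
  have hbinj : Function.Injective b := by
    intro v w hvw
    have := ZMod.val_injective q hvw
    exact inv_injective (Units.ext this)
  have hb0 : ∀ v, 0 < b v := fun v => (unit_data hq v).1
  have hbq : ∀ v, b v < q := fun v => (unit_data hq v).2.1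
  set S1 := Finset.univ.filter (fun v => b v ≤ B) with hS1
  set S2 := Finset.univ.filter (fun v => q - b v ≤ B) with hS2
  have c1 : S1.card ≤ B := by
    have := Finset.card_le_card_of_injOn (s := S1) (t := Finset.Icc 1 B) b
      (by intro v hv
          simp only [hS1, Finset.coe_filter, Finset.mem_univ, true_and, Set.mem_ofPred_eq] at hv
          simp only [Finset.coe_Icc, Set.mem_Icc]
          exact ⟨hb0 v, hv⟩) (hbinj.injOn)
    simpa using this
  have c2 : S2.card ≤ B := by
    have := Finset.card_le_card_of_injOn (s := S2) (t := Finset.Icc 1 B) (fun v => q - b v)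
      (by intro v hv
          simp only [hS2, Finset.coe_filter, Finset.mem_univ, true_and, Set.mem_ofPred_eq] at hv
          simp only [Finset.coe_Icc, Set.mem_Icc]
          have := hbq v
          exact ⟨by omega, hv⟩) (by
          intro v _ w _ hvw
          simp only at hvw
          have := hbq v
          have := hbq w
          exact hbinj (by omega))
    simpa using this
  have hterm : ∀ v, volume.real (Jset δ q v) ≤ (if v ∈ S1 then δ * (2 / t^2) else 0) +
      (if v ∈ S2 then δ * (2 / t^2) else 0) := by
    intro v
    rw [Jset_volume hδ hδ1, Phi_unit, ← hh, ← ht]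
    have hP := Phi_le (a := (b v : ℝ) / q) ht0
    have hP0 : 0 ≤ δ * (2 / t^2) := by positivity
    have hP' : δ * Phi t ((b v : ℝ) / q) ≤ δ * (2 / t^2) := by gcongr
    by_cases h1 : v ∈ S1
    · rw [if_pos h1]
      have : 0 ≤ (if v ∈ S2 then δ * (2 / t^2) else 0) := by split_ifs <;> linarith
      exact hP'.trans (by linarith)
    · by_cases h2 : v ∈ S2
      · rw [if_pos h2, if_neg h1, zero_add]; exact hP'
      · rw [if_neg h2, if_neg h1, add_zero]
        have h1' : B < b v := by simpa [hS1] using h1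
        have h2' : B < q - b v := by
          have : B + b v < q := by simpa [hS2] using h2
          omega
        have h1'' := (Nat.floor_lt (by positivity)).1 h1'
        have h2'' := (Nat.floor_lt (by positivity)).1 h2'
        rw [Nat.cast_sub (hbq v).le] at h2''
        have : Phi t ((b v : ℝ) / q) = 0 := by
          refine Phi_zero ht0 ?_ ?_
          · rw [le_div_iff₀ hqR]
            calc 2 / t^2 * q = 2 * q / t^2 := by ring
              _ ≤ _ := h1''.le
          · have : 1 - (b v : ℝ) / q = (q - b v) / q := by field_simp
            rw [this, le_div_iff₀ hqR]
            calc 2 / t^2 * q = 2 * q / t^2 := by ring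
              _ ≤ _ := h2''.le
        change δ * Phi t ((b v : ℝ) / q) ≤ 0
        rw [this, mul_zero]
  unfold lev
  calc _ ≤ ∑ v, ((if v ∈ S1 then δ * (2 / t^2) else 0) + (if v ∈ S2 then δ * (2 / t^2) else 0)) :=
        Finset.sum_le_sum fun v _ => hterm v
    _ = (S1.card + S2.card) * (δ * (2 / t^2)) := by
        rw [Finset.sum_add_distrib, Finset.sum_ite_mem, Finset.sum_ite_mem, Finset.univ_inter,
          Finset.univ_inter, Finset.sum_const, Finset.sum_const]
        simp only [nsmul_eq_mul]; ring
    _ ≤ (B + B) * (δ * (2 / t^2)) := by gcongr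
    _ ≤ (2 * q / t^2 + 2 * q / t^2) * (δ * (2 / t^2)) := by gcongr
    _ = h * (8 / t^3) := by rw [hδh, ht]; field_simp; ring

lemma lev_log_le {δ : ℝ} (hδ : 0 < δ) (hδ1 : δ < 1) (q : ℕ) [NeZero q] (n : ℕ) :
    |Real.log (Real.sqrt δ * q)|^n * lev δ q ≤
      32 * (n.factorial : ℝ) * (Real.sqrt δ / (1 + Real.sqrt δ * q)^2) := by
  have l1 := lev_le_one hδ hδ1 q
  have l2 := lev_le_two hδ hδ1 q
  set h := Real.sqrt δ with hh
  have hh0 : 0 < h := Real.sqrt_pos.2 hδ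
  have hh1 : h < 1 := by rw [hh, Real.sqrt_lt' one_pos]; simpa using hδ1
  have hq0 : 0 < q := Nat.pos_of_ne_zero (NeZero.ne q)
  have hqR : (0:ℝ) < q := by exact_mod_cast hq0
  set t := h * q with ht
  have ht0 : 0 < t := by positivity
  have hlog : |Real.log t|^n ≤ n.factorial * Real.exp |Real.log t| := by
    have := Real.pow_div_factorial_le_exp |Real.log t| (abs_nonneg _) n
    rw [div_le_iff₀ (by positivity)] at this
    linarith
  have hnf : (0:ℝ) < n.factorial := by positivity
  have hL := lev_nonneg δ q
  rcases le_or_gt t 1 with h1 | h1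
  · have e : Real.exp |Real.log t| = 1 / t := by
      rw [abs_of_nonpos (Real.log_nonpos ht0.le h1), Real.exp_neg, Real.exp_log ht0, one_div]
    rw [e] at hlog
    calc _ ≤ (n.factorial * (1 / t)) * (h * t) := by gcongr
      _ = n.factorial * h := by field_simp
      _ ≤ 32 * n.factorial * (h / 4) := by nlinarith
      _ ≤ _ := by
        gcongr
        nlinarith
  · have hq1 : 1 < q := by
      by_contra hc
      have : q = 1 := by omega
      rw [ht, this] at h1
      simp at h1
      linarith
    have e : Real.exp |Real.log t| = t := by
      rw [abs_of_nonneg (Real.log_nonneg h1.le), Real.exp_log ht0]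
    rw [e] at hlog
    calc _ ≤ (n.factorial * t) * (h * (8 / t^3)) := by gcongr; exact l2 hq1
      _ = 32 * n.factorial * (h / (2*t)^2) := by field_simp; norm_num
      _ ≤ _ := by
        gcongr
        linarith

lemma telescope_le {h : ℝ} (hh : 0 < h) (N : ℕ) :
    ∑ k ∈ Finset.range N, h / (1 + h * ((k+1 : ℕ) : ℝ))^2 ≤ 1 := by
  have : ∀ N : ℕ, ∑ k ∈ Finset.range N, h / (1 + h * ((k+1 : ℕ) : ℝ))^2 ≤ 1 - 1 / (1 + h * N) := by
    intro N
    induction N with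
    | zero => simp
    | succ N ih =>
      rw [Finset.sum_range_succ]
      have key : h / (1 + h * ((N+1 : ℕ) : ℝ))^2 ≤ 1 / (1 + h * N) - 1 / (1 + h * ((N+1 : ℕ) : ℝ)) := by
        push_cast
        have p1 : (0:ℝ) < 1 + h * N := by positivity
        have p2 : (0:ℝ) < 1 + h * (N + 1) := by positivity
        have : 1 / (1 + h * N) - 1 / (1 + h * ((N:ℝ)+1)) = h / ((1 + h * N) * (1 + h * (N + 1))) := by
          field_simp; ring
        rw [this, sq]
        gcongr
        linarith
      linarith
  refine (this N).trans ?_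
  have : (0:ℝ) ≤ 1 / (1 + h * N) := by positivity
  linarith

lemma sum_log_lev_le {δ : ℝ} (hδ : 0 < δ) (hδ1 : δ < 1) (N n : ℕ) :
    ∑ k ∈ Finset.range N, |Real.log (Real.sqrt δ * ((k+1 : ℕ) : ℝ))|^n * lev δ (k+1) ≤
      32 * (n.factorial : ℝ) := by
  have hh0 : 0 < Real.sqrt δ := Real.sqrt_pos.2 hδ
  calc _ ≤ ∑ k ∈ Finset.range N, 32 * (n.factorial : ℝ) *
        (Real.sqrt δ / (1 + Real.sqrt δ * ((k+1 : ℕ) : ℝ))^2) :=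
        Finset.sum_le_sum fun k _ => lev_log_le hδ hδ1 (k+1) n
    _ = 32 * (n.factorial : ℝ) * ∑ k ∈ Finset.range N,
        (Real.sqrt δ / (1 + Real.sqrt δ * ((k+1 : ℕ) : ℝ))^2) := by rw [Finset.mul_sum]
    _ ≤ 32 * (n.factorial : ℝ) * 1 := by gcongr; exact telescope_le hh0 N
    _ = _ := mul_one _



/-- the normalized logarithm -/
noncomputable def Xlog (δ x : ℝ) : ℝ := Real.log (Real.sqrt δ * qmin x δ)

lemma Xlog_eq {δ : ℝ} (hδ : 0 < δ) (x : ℝ) :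
    Real.log (qmin x δ) + (1 / 2) * Real.log δ = Xlog δ x := by
  have h : (qmin x δ : ℝ) ≠ 0 := by
    have := (qmin_hits hδ x).1
    positivity
  rw [Xlog, Real.log_mul (Real.sqrt_pos.2 hδ).ne' h, Real.log_sqrt hδ.le]
  ring

lemma Xlog_measurable {δ : ℝ} (hδ : 0 < δ) : Measurable (Xlog δ) := by
  unfold Xlog
  have : Measurable (fun x => (qmin x δ : ℝ)) := measurable_from_nat.comp (measurable_qmin hδ)
  fun_prop

lemma exists_N {δ : ℝ} (hδ : 0 < δ) (M : ℕ) : ∃ N : ℕ, 0 < N ∧ 1 / (N:ℝ) < δ ∧ M ≤ N := by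
  obtain ⟨n, hn⟩ := exists_nat_one_div_lt hδ
  refine ⟨n + 1 + M, by omega, lt_of_le_of_lt ?_ hn, by omega⟩
  apply one_div_le_one_div_of_le (by positivity)
  push_cast
  have : (0:ℝ) ≤ M := by positivity
  linarith

lemma Xlog_bdd {δ : ℝ} (hδ : 0 < δ) : ∃ B, ∀ x, |Xlog δ x| ≤ B := by
  obtain ⟨N, hN0, hN, -⟩ := exists_N hδ 0
  refine ⟨∑ q ∈ Finset.range (N+1), |Real.log (Real.sqrt δ * q)|, fun x => ?_⟩
  have : qmin x δ ≤ N := qmin_le (hitsQ_of_large x hN0 hN)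
  exact Finset.single_le_sum (f := fun q : ℕ => |Real.log (Real.sqrt δ * q)|)
    (fun _ _ => abs_nonneg _) (Finset.mem_range.2 (by omega))

lemma Xlog_moment {δ : ℝ} (hδ : 0 < δ) (hδ1 : δ < 1) (n : ℕ) :
    ∫ x in (0:ℝ)..1, |Xlog δ x|^n ≤ 32 * (n.factorial : ℝ) := by
  obtain ⟨N, hN0, hN, -⟩ := exists_N hδ 0
  have h := integral_decomp hδ hδ1 hN0 hN (w := fun _ => 1) continuous_const (fun _ => rfl)
    (fun q => ((|Real.log (Real.sqrt δ * q)|^n : ℝ) : ℂ))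
  have h1 : ∫ x in (0:ℝ)..1, |Xlog δ x|^n =
      ∑ k ∈ Finset.range N, |Real.log (Real.sqrt δ * ((k+1 : ℕ) : ℝ))|^n * lev δ (k+1) := by
    simp only [one_mul] at h
    rw [intervalIntegral.integral_ofReal] at h
    have h' : ∑ k ∈ Finset.range N, ((|Real.log (Real.sqrt δ * ((k+1 : ℕ) : ℝ))|^n : ℝ) : ℂ) *
        ∑ v : (ZMod (k+1))ˣ, ∫ x in Jset δ (k+1) v, (1:ℂ) =
        ((∑ k ∈ Finset.range N, |Real.log (Real.sqrt δ * ((k+1 : ℕ) : ℝ))|^n * lev δ (k+1) : ℝ) : ℂ) := by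
      rw [Complex.ofReal_sum]
      refine Finset.sum_congr rfl fun k _ => ?_
      rw [Complex.ofReal_mul, lev, Complex.ofReal_sum]
      congr 1
      refine Finset.sum_congr rfl fun v _ => ?_
      simp
    rw [h'] at h
    exact_mod_cast h
  rw [h1]
  exact sum_log_lev_le hδ hδ1 N n

lemma fourier_lip (m : ℤ) (x y : ℝ) :
    ‖fourier m (x : UnitAddCircle) - fourier m (y : UnitAddCircle)‖ ≤ 2 * Real.pi * |(m:ℝ)| * |x - y| := by
  rw [fourier_coe_apply, fourier_coe_apply]
  have e : ∀ z : ℝ, (2 * Real.pi * Complex.I * m * z / ((1:ℝ):ℂ) : ℂ) =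
      Complex.I * ((2 * Real.pi * m * z : ℝ) : ℂ) := by
    intro z; push_cast; ring
  rw [e, e]
  have h2 : Complex.exp (Complex.I * ((2 * Real.pi * m * x : ℝ) : ℂ)) -
      Complex.exp (Complex.I * ((2 * Real.pi * m * y : ℝ) : ℂ)) =
      Complex.exp (Complex.I * ((2 * Real.pi * m * y : ℝ) : ℂ)) *
      (Complex.exp (Complex.I * ((2 * Real.pi * m * (x - y) : ℝ) : ℂ)) - 1) := by
    rw [mul_sub, mul_one, ← Complex.exp_add]
    congr 2
    push_cast; ring
  rw [h2, norm_mul]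
  have h3 := Real.norm_exp_I_mul_ofReal_sub_one_le (x := 2 * Real.pi * m * (x - y))
  rw [mul_comm Complex.I, Complex.norm_exp_ofReal_mul_I, one_mul]
  refine h3.trans (le_of_eq ?_)
  rw [Real.norm_eq_abs, abs_mul, abs_mul, abs_of_pos Real.two_pi_pos]

lemma fourier_period (m : ℤ) : Function.Periodic (fun x : ℝ => fourier m (x : UnitAddCircle)) 1 := by
  intro x
  simp only [AddCircle.coe_add, AddCircle.coe_period, add_zero]

lemma fourier_cont (m : ℤ) : Continuous (fun x : ℝ => fourier m (x : UnitAddCircle)) :=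
  (fourier m).continuous.comp (AddCircle.continuous_mk' 1)

lemma piece_error {δ : ℝ} (q : ℕ) [NeZero q] (v : (ZMod q)ˣ) (m : ℤ) :
    ‖(∫ x in Jset δ q v, fourier m (x : UnitAddCircle)) -
      ZMod.stdAddChar ((m : ZMod q) * (v : ZMod q)) * (volume.real (Jset δ q v) : ℝ)‖ ≤
      (2 * Real.pi * |(m:ℝ)| * (δ / 2)) * volume.real (Jset δ q v) := by
  have hfin : volume (Jset δ q v) < ⊤ := by
    refine lt_of_le_of_lt (measure_mono (t := Set.Icc ((((v : ZMod q).val : ℕ) : ℝ) / q - δ/2)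
      ((((v : ZMod q).val : ℕ) : ℝ) / q + δ/2)) ?_) (by rw [Real.volume_Icc]; exact ENNReal.ofReal_lt_top)
    rintro x ⟨hx, -⟩
    have := abs_lt.1 hx
    exact ⟨by linarith, by linarith⟩
  have e : ZMod.stdAddChar ((m : ZMod q) * (v : ZMod q)) * ((volume.real (Jset δ q v) : ℝ) : ℂ) =
      ∫ x in Jset δ q v, fourier m (((((v : ZMod q).val : ℕ) : ℝ) / q : ℝ) : UnitAddCircle) := by
    rw [← ZMod.toAddCircle_apply, fourier_toAddCircle, setIntegral_const, Complex.real_smul, mul_comm]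
  have hint : IntegrableOn (fun x : ℝ => fourier m (x : UnitAddCircle)) (Jset δ q v) := by
    refine Measure.integrableOn_of_bounded (M := 1) hfin.ne (fourier_cont m).aestronglyMeasurable ?_
    exact Eventually.of_forall fun x => by rw [fourier_apply, Circle.norm_coe]
  rw [e, ← integral_sub hint (integrableOn_const hfin.ne)]
  refine norm_setIntegral_le_of_norm_le_const hfin fun x hx => ?_
  refine (fourier_lip m _ _).trans ?_
  gcongr
  exact hx.1.le



/-- the test function -/
noncomputable def Psi (f : ℝ → ℝ) (hf : Continuous f) (A : ℝ) :
    C(Set.Icc 0 (Real.exp A) × UnitAddCircle, ℂ) where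
  toFun p := ((f (Real.log (max (p.1 : ℝ) (Real.exp (-A-1)))) * Phi (p.1 : ℝ) ‖p.2‖ : ℝ) : ℂ)
  continuous_toFun := by
    refine Complex.continuous_ofReal.comp (Continuous.mul (hf.comp ?_) ?_)
    · refine Continuous.log (by fun_prop) fun p => ?_
      exact (lt_of_lt_of_le (Real.exp_pos _) (le_max_right _ _)).ne'
    · exact Phi_continuous.comp (by fun_prop : Continuous fun p : Set.Icc 0 (Real.exp A) × UnitAddCircle => ((p.1:ℝ), ‖p.2‖))

lemma Psi_apply (f : ℝ → ℝ) (hf : Continuous f) (A : ℝ) (p : Set.Icc 0 (Real.exp A) × UnitAddCircle) :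
    Psi f hf A p = ((f (Real.log (max (p.1 : ℝ) (Real.exp (-A-1)))) * Phi (p.1 : ℝ) ‖p.2‖ : ℝ) : ℂ) := rfl

lemma log_cut {f : ℝ → ℝ} {A : ℝ} (hA : 0 ≤ A) (hfA : ∀ s, A ≤ |s| → f s = 0) {t : ℝ} (ht : 0 < t) :
    f (Real.log (max t (Real.exp (-A-1)))) = f (Real.log t) := by
  rcases le_total t (Real.exp (-A-1)) with h | h
  · rw [max_eq_right h, Real.log_exp, hfA, hfA]
    · have : Real.log t ≤ -A-1 := (Real.log_le_iff_le_exp ht).2 h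
      rw [abs_of_nonpos (by linarith)]; linarith
    · rw [abs_of_nonpos (by linarith)]; linarith
  · rw [max_eq_left h]

lemma sum_eq_LF {f : ℝ → ℝ} (hf : Continuous f) {A : ℝ} (hA : 0 ≤ A)
    (hfA : ∀ s, A ≤ |s| → f s = 0) (m : ℤ) {δ : ℝ} (hδ : 0 < δ) (hδ1 : δ < 1) {N : ℕ}
    (hN : ⌊Real.exp A / Real.sqrt δ⌋₊ ≤ N) :
    ∑ k ∈ Finset.range N, ((f (Real.log (Real.sqrt δ * ((k+1:ℕ):ℝ))) : ℝ) : ℂ) *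
      ∑ v : (ZMod (k+1))ˣ, ZMod.stdAddChar ((m : ZMod (k+1)) * (v : ZMod (k+1))) *
        ((volume.real (Jset δ (k+1) v) : ℝ) : ℂ) =
    LF (Real.exp A) (Real.exp_pos A).le m (Real.sqrt δ) (Psi f hf A) := by
  have hh0 : 0 < Real.sqrt δ := Real.sqrt_pos.2 hδ
  simp only [LF, LinearMap.coe_mk, AddHom.coe_mk]
  rw [← Finset.sum_subset (Finset.range_subset_range.2 hN)]
  · rw [Finset.mul_sum]
    refine Finset.sum_congr rfl fun k hk => ?_
    rw [Finset.mul_sum, Finset.mul_sum]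
    refine Finset.sum_congr rfl fun v _ => ?_
    have hle : Real.sqrt δ * ((k+1:ℕ):ℝ) ≤ Real.exp A := by
      have h1 : k + 1 ≤ ⌊Real.exp A / Real.sqrt δ⌋₊ := Finset.mem_range.1 hk
      have h2 := (Nat.le_floor_iff (by positivity)).1 h1
      rw [le_div_iff₀ hh0] at h2
      linarith
    have hpos : 0 < Real.sqrt δ * ((k+1:ℕ):ℝ) := by positivity
    rw [Psi_apply, Set.projIcc_of_mem _ ⟨hpos.le, hle⟩, Jset_volume hδ hδ1]
    simp only
    rw [log_cut hA hfA hpos]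
    have : ((Real.sqrt δ : ℝ) : ℂ)^2 = ((δ : ℝ) : ℂ) := by
      rw [← Complex.ofReal_pow, Real.sq_sqrt hδ.le]
    rw [this, Complex.ofReal_mul, Complex.ofReal_mul]
    ring
  · intro k _ hk
    have h1 : ⌊Real.exp A / Real.sqrt δ⌋₊ < k + 1 := by simpa [Nat.lt_succ_iff] using hk
    have h2 := (Nat.floor_lt (by positivity)).1 h1
    rw [div_lt_iff₀ hh0] at h2
    have h3 : A ≤ Real.log (Real.sqrt δ * ((k+1:ℕ):ℝ)) := by
      rw [Real.le_log_iff_exp_le (by positivity)]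
      linarith
    rw [hfA _ (h3.trans (le_abs_self _))]
    simp

lemma test_error {f : ℝ → ℝ} (hf : Continuous f) {A : ℝ} (hA : 0 ≤ A)
    (hfA : ∀ s, A ≤ |s| → f s = 0) {C : ℝ} (hC : ∀ s, |f s| ≤ C) (m : ℤ) {δ : ℝ} (hδ : 0 < δ) (hδ1 : δ < 1) :
    ‖(∫ x in (0:ℝ)..1, fourier m (x : UnitAddCircle) * ((f (Xlog δ x) : ℝ) : ℂ)) -
      LF (Real.exp A) (Real.exp_pos A).le m (Real.sqrt δ) (Psi f hf A)‖ ≤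
      C * (2 * Real.pi * |(m:ℝ)| * (δ / 2)) * 32 := by
  obtain ⟨N, hN0, hN, hNle⟩ := exists_N hδ ⌊Real.exp A / Real.sqrt δ⌋₊
  have h := integral_decomp hδ hδ1 hN0 hN (fourier_cont m) (fourier_period m)
    (fun q => ((f (Real.log (Real.sqrt δ * q)) : ℝ) : ℂ))
  rw [← sum_eq_LF hf hA hfA m hδ hδ1 hNle]
  change ‖(∫ x in (0:ℝ)..1, fourier m (x : UnitAddCircle) *
    ((f (Real.log (Real.sqrt δ * qmin x δ)) : ℝ) : ℂ)) - _‖ ≤ _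
  rw [h, ← Finset.sum_sub_distrib]
  have hC0 : 0 ≤ C := (abs_nonneg _).trans (hC 0)
  have hs := sum_log_lev_le hδ hδ1 N 0
  simp only [pow_zero, one_mul, Nat.factorial_zero, Nat.cast_one, mul_one] at hs
  calc _ ≤ ∑ k ∈ Finset.range N, C * (2 * Real.pi * |(m:ℝ)| * (δ / 2)) * lev δ (k+1) := by
        refine (norm_sum_le _ _).trans (Finset.sum_le_sum fun k _ => ?_)
        rw [← mul_sub, ← Finset.sum_sub_distrib, norm_mul, Complex.norm_real, Real.norm_eq_abs,
          mul_assoc]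
        refine mul_le_mul (hC _) ?_ (norm_nonneg _) hC0
        rw [lev, Finset.mul_sum]
        refine (norm_sum_le _ _).trans (Finset.sum_le_sum fun v _ => ?_)
        exact piece_error (k+1) v m
    _ = C * (2 * Real.pi * |(m:ℝ)| * (δ / 2)) * ∑ k ∈ Finset.range N, lev δ (k+1) := by
        rw [Finset.mul_sum]
    _ ≤ _ := by gcongr

/-- the density in integral form -/
noncomputable def eta0 (s : ℝ) : ℝ :=
  6 / Real.pi^2 * Real.exp (2 * s) * ∫ a in (0:ℝ)..1, Phi (Real.exp s) a

lemma int_circle (t : ℝ) : ∫ θ : UnitAddCircle, ((Phi t ‖θ‖ : ℝ) : ℂ) =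
    ((∫ a in (0:ℝ)..1, Phi t a : ℝ) : ℂ) := by
  rw [← UnitAddCircle.intervalIntegral_preimage 0, ← intervalIntegral.integral_ofReal, zero_add,
    intervalIntegral.integral_of_le zero_le_one, intervalIntegral.integral_of_le zero_le_one,
    ← integral_Ico_eq_integral_Ioc, ← integral_Ico_eq_integral_Ioc]
  refine setIntegral_congr_fun measurableSet_Ico fun a ha => ?_
  rw [Phi_norm t ha.1 ha.2]

lemma cont_I : Continuous (fun t : ℝ => ∫ a in (0:ℝ)..1, Phi t a) := by
  exact intervalIntegral.continuous_parametric_intervalIntegral_of_continuous' Phi_continuous 0 1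

lemma LF0_eq {f : ℝ → ℝ} (hf : Continuous f) {A : ℝ} (hA : 0 ≤ A)
    (hfA : ∀ s, A ≤ |s| → f s = 0) :
    LF0 (Real.exp A) (Real.exp_pos A).le 0 (Psi f hf A) = ((∫ s, f s * eta0 s : ℝ) : ℂ) := by
  simp only [LF0, LinearMap.coe_mk, AddHom.coe_mk, if_true]
  set I : ℝ → ℝ := fun t => ∫ a in (0:ℝ)..1, Phi t a with hI
  set g : ℝ → ℝ := fun t => f (Real.log (max t (Real.exp (-A-1)))) with hg
  have hgc : Continuous g := by
    refine hf.comp (Continuous.log (by fun_prop) fun p => ?_)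
    exact (lt_of_lt_of_le (Real.exp_pos _) (le_max_right _ _)).ne'
  have hIc : Continuous I := cont_I
  have e1 : ∫ t in (0:ℝ)..Real.exp A, (t:ℂ) * ∫ θ : UnitAddCircle,
      Psi f hf A (Set.projIcc 0 (Real.exp A) (Real.exp_pos A).le t, θ) =
      ((∫ t in (0:ℝ)..Real.exp A, t * (g t * I t) : ℝ) : ℂ) := by
    rw [← intervalIntegral.integral_ofReal]
    refine intervalIntegral.integral_congr fun t ht => ?_
    rw [Set.uIcc_of_le (Real.exp_pos A).le] at ht
    simp only [Psi_apply]
    rw [Set.projIcc_of_mem _ ht]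
    simp only [Complex.ofReal_mul]
    rw [integral_const_mul, int_circle]
  rw [e1]
  have e2 : ∫ t in (0:ℝ)..Real.exp A, t * (g t * I t) =
      ∫ t in Real.exp (-A)..Real.exp A, t * (g t * I t) := by
    have hc : Continuous (fun t => t * (g t * I t)) := by fun_prop
    rw [← intervalIntegral.integral_add_adjacent_intervals (hc.intervalIntegrable 0 (Real.exp (-A)))
      (hc.intervalIntegrable (Real.exp (-A)) _)]
    rw [add_eq_right]
    rw [intervalIntegral.integral_zero_ae]
    refine Eventually.of_forall fun t ht => ?_
    rw [Set.uIoc_of_le (Real.exp_pos _).le] at ht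
    have : g t = 0 := by
      simp only [hg]
      rw [log_cut hA hfA ht.1]
      apply hfA
      have : Real.log t ≤ -A := (Real.log_le_iff_le_exp ht.1).2 ht.2
      rw [abs_of_nonpos (by linarith)]; linarith
    rw [this]; ring
  have e3 : ∫ t in Real.exp (-A)..Real.exp A, t * (g t * I t) =
      ∫ s in (-A)..A, Real.exp (2 * s) * (f s * I (Real.exp s)) := by
    have hc : Continuous (fun t => t * (g t * I t)) := by fun_prop
    rw [← intervalIntegral.integral_comp_mul_deriv (f := Real.exp) (f' := Real.exp)
      (fun x _ => Real.hasDerivAt_exp x) Real.continuous_exp.continuousOn hc]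
    refine intervalIntegral.integral_congr fun s _ => ?_
    simp only [Function.comp_apply, hg]
    rw [log_cut hA hfA (Real.exp_pos s), Real.log_exp, two_mul, Real.exp_add]
    ring
  have e4 : ∫ s, f s * eta0 s = ∫ s in (-A)..A, f s * eta0 s := by
    rw [intervalIntegral.integral_of_le (by linarith), setIntegral_eq_integral_of_forall_compl_eq_zero]
    intro s hs
    rw [hfA, zero_mul]
    rw [Set.mem_Ioc, not_and_or] at hs
    rcases hs with h | h
    · rw [abs_of_nonpos (by linarith)]; linarith
    · exact (not_le.1 h).le.trans (le_abs_self _)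
  rw [e2, e3, e4]
  have e5 : ∀ s, f s * eta0 s = 6 / Real.pi^2 * (Real.exp (2 * s) * (f s * I (Real.exp s))) := by
    intro s; simp only [eta0, hI]; ring
  simp_rw [e5]
  rw [intervalIntegral.integral_const_mul]
  push_cast
  rfl

open Topology in
lemma test_tendsto {f : ℝ → ℝ} (hf : Continuous f) {A : ℝ} (hA : 0 ≤ A)
    (hfA : ∀ s, A ≤ |s| → f s = 0) (m : ℤ) :
    Tendsto (fun δ : ℝ => ∫ x in (0:ℝ)..1, fourier m (x : UnitAddCircle) * ((f (Xlog δ x) : ℝ) : ℂ))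
      (𝓝[>] 0) (𝓝 (if m = 0 then ((∫ s, f s * eta0 s : ℝ) : ℂ) else 0)) := by
  obtain ⟨C, hC⟩ : ∃ C, ∀ s, |f s| ≤ C := by
    obtain ⟨C, hC⟩ := (isCompact_Icc (a := -A) (b := A)).exists_bound_of_continuousOn hf.continuousOn
    refine ⟨max C 0, fun s => ?_⟩
    by_cases hs : A ≤ |s|
    · rw [hfA s hs]; simp
    · push Not at hs
      exact (hC s ⟨(abs_lt.1 hs).1.le, (abs_lt.1 hs).2.le⟩).trans (le_max_left _ _)
  have hsq : Tendsto Real.sqrt (𝓝[>] 0) (𝓝[>] 0) := by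
    refine tendsto_nhdsWithin_iff.2 ⟨?_, ?_⟩
    · have := Real.continuous_sqrt.tendsto 0
      rw [Real.sqrt_zero] at this
      exact this.mono_left nhdsWithin_le_nhds
    · filter_upwards [self_mem_nhdsWithin] with δ hδ using Real.sqrt_pos.2 hδ
  have h1 := (LF_tendsto (Real.exp_pos A) m (Psi f hf A)).comp hsq
  have h2 : LF0 (Real.exp A) (Real.exp_pos A).le m (Psi f hf A) =
      if m = 0 then ((∫ s, f s * eta0 s : ℝ) : ℂ) else 0 := by
    split_ifs with hm
    · subst hm; exact LF0_eq hf hA hfA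
    · simp [LF0, hm]
  rw [h2] at h1
  have h3 : Tendsto (fun δ : ℝ => C * (2 * Real.pi * |(m:ℝ)| * (δ / 2)) * 32) (𝓝[>] 0) (𝓝 0) := by
    have : Continuous (fun δ : ℝ => C * (2 * Real.pi * |(m:ℝ)| * (δ / 2)) * 32) := by fun_prop
    have := this.tendsto 0
    simp only [zero_div, mul_zero, zero_mul] at this
    exact this.mono_left nhdsWithin_le_nhds
  have h4 : Tendsto (fun δ : ℝ => (∫ x in (0:ℝ)..1, fourier m (x : UnitAddCircle) * ((f (Xlog δ x) : ℝ) : ℂ)) -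
      LF (Real.exp A) (Real.exp_pos A).le m (Real.sqrt δ) (Psi f hf A)) (𝓝[>] 0) (𝓝 0) := by
    refine squeeze_zero_norm' ?_ h3
    filter_upwards [Ioo_mem_nhdsGT (zero_lt_one' ℝ)] with δ hδ
    exact test_error hf hA hfA hC m hδ.1 hδ.2
  have h5 := h4.add h1
  simpa using h5



lemma Phi_cont_a (t : ℝ) : Continuous (Phi t) :=
  Phi_continuous.comp (by fun_prop : Continuous fun a : ℝ => (t, a))

lemma I_half (t : ℝ) : ∫ a in (0:ℝ)..1, Phi t a = 2 * ∫ a in (0:ℝ)..(1/2), Phi t a := by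
  have h1 := intervalIntegral.integral_add_adjacent_intervals
    ((Phi_cont_a t).intervalIntegrable (μ := volume) 0 (1/2)) ((Phi_cont_a t).intervalIntegrable (1/2) 1)
  have h2 := intervalIntegral.integral_comp_sub_left (a := 1/2) (b := 1) (Phi t) 1
  simp only [Phi_symm] at h2
  norm_num at h1 h2
  rw [← h1, h2]; norm_num; ring

lemma I_nonneg (t : ℝ) : 0 ≤ ∫ a in (0:ℝ)..1, Phi t a :=
  intervalIntegral.integral_nonneg zero_le_one fun a _ => Phi_nonneg t a

lemma I_le_one (t : ℝ) : ∫ a in (0:ℝ)..1, Phi t a ≤ 1 := by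
  have := intervalIntegral.integral_mono_on (μ := volume) (zero_le_one' ℝ) ((Phi_cont_a t).intervalIntegrable 0 1)
    (intervalIntegrable_const (c := (1:ℝ))) (fun a _ => Phi_le_one t a)
  simpa using this

lemma I_le {t : ℝ} (ht : 0 < t) : ∫ a in (0:ℝ)..1, Phi t a ≤ 16 / t^4 := by
  rcases le_total t 2 with h | h
  · refine (I_le_one t).trans ?_
    rw [le_div_iff₀ (by positivity)]
    have : t^4 ≤ 2^4 := by gcongr
    linarith
  · rw [I_half]
    have hle : 2 / t^2 ≤ 1/2 := by
      rw [div_le_div_iff₀ (by positivity) (by norm_num)]; nlinarith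
    rw [← intervalIntegral.integral_add_adjacent_intervals
      ((Phi_cont_a t).intervalIntegrable 0 (2/t^2)) ((Phi_cont_a t).intervalIntegrable (2/t^2) (1/2))]
    have z : ∫ a in (2/t^2)..(1/2), Phi t a = 0 := by
      rw [intervalIntegral.integral_zero_ae]
      refine Eventually.of_forall fun a ha => ?_
      rw [Set.uIoc_of_le hle] at ha
      exact Phi_zero ht ha.1.le (by linarith [ha.2])
    have b := intervalIntegral.integral_mono_on (μ := volume) (show (0:ℝ) ≤ 2/t^2 by positivity)
      ((Phi_cont_a t).intervalIntegrable 0 (2/t^2))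
      (intervalIntegrable_const (c := 2/t^2)) (fun a _ => Phi_le ht)
    rw [intervalIntegral.integral_const, sub_zero, smul_eq_mul] at b
    rw [z, add_zero]
    calc _ ≤ 2 * (2/t^2 * (2/t^2)) := by gcongr
      _ = 8 / t^4 := by field_simp; norm_num
      _ ≤ _ := by gcongr; norm_num

lemma eta0_nonneg (s : ℝ) : 0 ≤ eta0 s := by
  unfold eta0
  have := I_nonneg (Real.exp s)
  positivity

lemma eta0_le (s : ℝ) : eta0 s ≤ 16 * Real.exp (-(2 * |s|)) := by
  unfold eta0
  have hpi : 6 / Real.pi^2 ≤ 1 := by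
    have := Real.pi_gt_three
    rw [div_le_one (by positivity)]
    nlinarith
  have h0 := I_nonneg (Real.exp s)
  rcases le_total s 0 with h | h
  · have := I_le_one (Real.exp s)
    rw [abs_of_nonpos h]
    calc _ ≤ 1 * Real.exp (2 * s) * 1 := by gcongr
      _ ≤ 16 * Real.exp (-(2 * -s)) := by
        have : -(2 * -s) = 2 * s := by ring
        rw [this]
        have := Real.exp_pos (2 * s)
        linarith
  · have := I_le (Real.exp_pos s)
    rw [abs_of_nonneg h]
    calc _ ≤ 1 * Real.exp (2 * s) * (16 / Real.exp s^4) := by gcongr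
      _ = 16 * Real.exp (-(2 * s)) := by
        rw [Real.exp_neg, ← Real.exp_nat_mul, one_mul]
        have : ((4:ℕ):ℝ) * s = 2 * s + 2 * s := by push_cast; ring
        rw [this, Real.exp_add]
        field_simp

lemma eta0_cont : Continuous eta0 := by
  unfold eta0
  have := cont_I.comp Real.continuous_exp
  exact (by fun_prop : Continuous fun s => 6 / Real.pi^2 * Real.exp (2 * s)).mul this

lemma integrable_exp_abs : Integrable (fun s : ℝ => Real.exp (-|s|)) := by
  rw [← integrableOn_univ, ← Set.Iic_union_Ioi (a := (0:ℝ))]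
  refine IntegrableOn.union ?_ ?_
  · refine (integrableOn_exp_Iic 0).congr_fun (fun s hs => ?_) measurableSet_Iic
    rw [abs_of_nonpos hs, neg_neg]
  · refine (integrableOn_exp_neg_Ioi 0).congr_fun (fun s hs => ?_) measurableSet_Ioi
    simp only
    rw [abs_of_pos hs]

lemma integrable_moment (n : ℕ) : Integrable (fun s : ℝ => |s|^n * eta0 s) := by
  refine Integrable.mono' (integrable_exp_abs.const_mul (16 * (n.factorial : ℝ)))
    ((continuous_abs.pow n).mul eta0_cont).aestronglyMeasurable (Eventually.of_forall fun s => ?_)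
  have h0 := eta0_nonneg s
  rw [Real.norm_of_nonneg (by positivity)]
  have h1 : |s|^n ≤ n.factorial * Real.exp |s| := by
    have := Real.pow_div_factorial_le_exp |s| (abs_nonneg _) n
    rw [div_le_iff₀ (by positivity)] at this
    linarith
  calc _ ≤ (n.factorial * Real.exp |s|) * (16 * Real.exp (-(2 * |s|))) := by
        gcongr; exact eta0_le s
    _ = 16 * n.factorial * (Real.exp |s| * Real.exp (-(2 * |s|))) := by ring
    _ = _ := by rw [← Real.exp_add]; congr 2; ring

lemma phi1_small {u a : ℝ} (hu : 0 < u) (h : a ≤ u) : 1 / max 1 (u⁻¹ * a) = 1 := by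
  rw [max_eq_left, div_one]
  rw [inv_mul_le_iff₀ hu]; linarith

lemma phi1_large {u a : ℝ} (hu : 0 < u) (h : u ≤ a) : 1 / max 1 (u⁻¹ * a) = u / a := by
  rw [max_eq_right, one_div, mul_inv, inv_inv]
  · rfl
  · rw [le_inv_mul_iff₀ hu]; linarith

lemma Phi_eq {t u : ℝ} (htu : t^2 = u⁻¹) (a : ℝ) :
    Phi t a = max 0 (1 / max 1 (u⁻¹ * a) + 1 / max 1 (u⁻¹ * (1 - a)) - 1) := by
  rw [Phi, htu]

lemma int_phi1 {u : ℝ} (hu : 0 < u) (hu1 : u ≤ 1) :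
    ∫ a in (0:ℝ)..1, 1 / max 1 (u⁻¹ * a) = u - u * Real.log u := by
  have hc : Continuous (fun a : ℝ => 1 / max 1 (u⁻¹ * a)) :=
    continuous_const.div (by fun_prop) fun a => (lt_of_lt_of_le one_pos (le_max_left _ _)).ne'
  rw [← intervalIntegral.integral_add_adjacent_intervals
      (hc.intervalIntegrable 0 u) (hc.intervalIntegrable u 1)]
  have e1 : ∫ a in (0:ℝ)..u, 1 / max 1 (u⁻¹ * a) = ∫ a in (0:ℝ)..u, (1:ℝ) := by
    refine intervalIntegral.integral_congr fun a ha => ?_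
    rw [Set.uIcc_of_le hu.le] at ha
    exact phi1_small hu ha.2
  have e2 : ∫ a in u..1, 1 / max 1 (u⁻¹ * a) = ∫ a in u..1, u * (1 / a) := by
    refine intervalIntegral.integral_congr fun a ha => ?_
    rw [Set.uIcc_of_le hu1] at ha
    rw [phi1_large hu ha.1]; ring
  rw [e1, e2, intervalIntegral.integral_const_mul, integral_one_div_of_pos hu one_pos]
  simp
  ring

lemma I_mid {t u : ℝ} (htu : t^2 = u⁻¹) (hu4 : 1/4 ≤ u) (hu1 : u ≤ 1) :
    ∫ a in (0:ℝ)..1, Phi t a = 2 * (u - u * Real.log u) - 1 := by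
  have hu : 0 < u := by linarith
  have hc : Continuous (fun a : ℝ => 1 / max 1 (u⁻¹ * a)) :=
    continuous_const.div (by fun_prop) fun a => (lt_of_lt_of_le one_pos (le_max_left _ _)).ne'
  have hc' : Continuous (fun a : ℝ => 1 / max 1 (u⁻¹ * (1 - a))) :=
    continuous_const.div (by fun_prop) fun a => (lt_of_lt_of_le one_pos (le_max_left _ _)).ne'
  have e : ∫ a in (0:ℝ)..1, Phi t a =
      ∫ a in (0:ℝ)..1, (1 / max 1 (u⁻¹ * a) + 1 / max 1 (u⁻¹ * (1 - a)) - 1) := by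
    refine intervalIntegral.integral_congr fun a ha => ?_
    rw [Set.uIcc_of_le zero_le_one] at ha
    rw [Phi_eq htu]
    apply max_eq_right
    have p : ∀ x : ℝ, 0 < 1 / max 1 x := fun x => by
      have : 0 < max 1 x := lt_of_lt_of_le one_pos (le_max_left _ _)
      positivity
    rcases le_total a u with h | h
    · rw [phi1_small hu h]
      have := p (u⁻¹ * (1 - a))
      linarith
    · rcases le_total (1 - a) u with h' | h'
      · rw [phi1_small hu h']
        have := p (u⁻¹ * a)
        linarith
      · rw [phi1_large hu h, phi1_large hu h']
        have h1 : 0 < a := by linarith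
        have h2 : 0 < 1 - a := by linarith
        have : u / a + u / (1 - a) = u / (a * (1 - a)) := by field_simp; ring
        rw [this, sub_nonneg, le_div_iff₀ (by positivity)]
        nlinarith [sq_nonneg (a - 1/2)]
  rw [e, intervalIntegral.integral_sub, intervalIntegral.integral_add]
  · have := intervalIntegral.integral_comp_sub_left (a := 0) (b := 1) (fun a : ℝ => 1 / max 1 (u⁻¹ * a)) 1
    rw [this, sub_self, sub_zero, int_phi1 hu hu1]
    simp
    ring
  · exact hc.intervalIntegrable _ _
  · exact hc'.intervalIntegrable _ _
  · exact (hc.add hc').intervalIntegrable _ _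
  · exact intervalIntegrable_const

lemma I_large {t u : ℝ} (htu : t^2 = u⁻¹) (hu : 0 < u) (hu4 : u < 1/4) :
    ∫ a in (0:ℝ)..1, Phi t a = -4 * u * Real.log (1/2 + Real.sqrt (1/4 - u)) + 2 * u - 1
      + 2 * Real.sqrt (1/4 - u) := by
  set c := Real.sqrt (1/4 - u) with hc
  have hc2 : c^2 = 1/4 - u := Real.sq_sqrt (by linarith)
  have hc0 : 0 < c := Real.sqrt_pos.2 (by linarith)
  have hc1 : c < 1/2 := by nlinarith
  set am := 1/2 - c with ham
  have ham0 : 0 < am := by linarith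
  have hap : 0 < 1/2 + c := by linarith
  have hprod : am * (1/2 + c) = u := by rw [ham]; nlinarith
  have huam : u ≤ am := by nlinarith
  rw [I_half, ← intervalIntegral.integral_add_adjacent_intervals
      ((Phi_cont_a t).intervalIntegrable 0 u) ((Phi_cont_a t).intervalIntegrable u (1/2)),
    ← intervalIntegral.integral_add_adjacent_intervals
      ((Phi_cont_a t).intervalIntegrable u am) ((Phi_cont_a t).intervalIntegrable am (1/2))]
  have z : ∫ a in am..(1/2), Phi t a = 0 := by
    rw [intervalIntegral.integral_zero_ae]
    refine Eventually.of_forall fun a ha => ?_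
    rw [Set.uIoc_of_le (by linarith)] at ha
    have h1 : 0 < a := by linarith [ha.1]
    have h2 : 0 < 1 - a := by linarith [ha.2]
    rw [Phi_eq htu, phi1_large hu (by linarith [ha.1]), phi1_large hu (by linarith [ha.2])]
    apply max_eq_left
    have : u / a + u / (1 - a) = u / (a * (1 - a)) := by field_simp; ring
    rw [this, sub_nonpos, div_le_one (by positivity)]
    have h3 : 0 ≤ a - am := by linarith [ha.1]
    have h4 : 0 ≤ 1/2 + c - a := by linarith [ha.2]
    nlinarith [mul_nonneg h3 h4]
  have i1 : ∫ a in (0:ℝ)..u, Phi t a = -u * Real.log (1 - u) := by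
    have : ∫ a in (0:ℝ)..u, Phi t a = ∫ a in (0:ℝ)..u, u / (1 - a) := by
      refine intervalIntegral.integral_congr fun a ha => ?_
      rw [Set.uIcc_of_le hu.le] at ha
      rw [Phi_eq htu, phi1_small hu ha.2, phi1_large hu (by linarith [ha.2]), add_sub_cancel_left]
      apply max_eq_right
      have : 0 < 1 - a := by linarith [ha.2]
      positivity
    rw [this]
    have h := intervalIntegral.integral_comp_sub_left (a := 0) (b := u) (fun a : ℝ => u / a) 1
    rw [h, sub_zero]
    simp_rw [div_eq_mul_one_div u]
    rw [intervalIntegral.integral_const_mul, integral_one_div_of_pos (by linarith) one_pos, one_div,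
      Real.log_inv]
    ring
  have i2 : ∫ a in u..am, Phi t a = u * (Real.log am - Real.log u)
      + u * (Real.log (1 - u) - Real.log (1/2 + c)) - (am - u) := by
    have : ∫ a in u..am, Phi t a = ∫ a in u..am, (u * (1 / a) + u * (1 / (1 - a)) - 1) := by
      refine intervalIntegral.integral_congr fun a ha => ?_
      rw [Set.uIcc_of_le huam] at ha
      have h1 : 0 < a := by linarith [ha.1]
      have h2 : 0 < 1 - a := by linarith [ha.2]
      rw [Phi_eq htu, phi1_large hu ha.1, phi1_large hu (by linarith [ha.2]), max_eq_right]
      · ring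
      · have : u / a + u / (1 - a) = u / (a * (1 - a)) := by field_simp; ring
        rw [this, sub_nonneg, le_div_iff₀ (by positivity)]
        have h3 : 0 ≤ am - a := by linarith [ha.2]
        have h4 : 0 ≤ 1/2 + c - a := by linarith [ha.2]
        nlinarith [mul_nonneg h3 h4]
    rw [this]
    have j1 : IntervalIntegrable (fun a : ℝ => u * (1 / a)) volume u am := by
      apply ContinuousOn.intervalIntegrable
      rw [Set.uIcc_of_le huam]
      refine continuousOn_const.mul (continuousOn_const.div continuousOn_id fun a ha => ?_)
      exact (lt_of_lt_of_le hu ha.1).ne'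
    have j2 : IntervalIntegrable (fun a : ℝ => u * (1 / (1 - a))) volume u am := by
      apply ContinuousOn.intervalIntegrable
      rw [Set.uIcc_of_le huam]
      refine continuousOn_const.mul (continuousOn_const.div (by fun_prop) fun a ha => ?_)
      have := ha.2
      linarith
    rw [intervalIntegral.integral_sub (j1.add j2) intervalIntegrable_const,
      intervalIntegral.integral_add j1 j2, intervalIntegral.integral_const_mul,
      intervalIntegral.integral_const_mul, integral_one_div_of_pos hu ham0]
    have h := intervalIntegral.integral_comp_sub_left (a := u) (b := am) (fun a : ℝ => 1 / a) 1
    rw [h, integral_one_div_of_pos (by linarith) (by linarith), Real.log_div ham0.ne' hu.ne',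
      Real.log_div (by linarith) (by linarith)]
    have : 1 - am = 1/2 + c := by rw [ham]; ring
    rw [this]
    simp
  have hlog : Real.log am = Real.log u - Real.log (1/2 + c) := by
    rw [← hprod, Real.log_mul ham0.ne' hap.ne']; ring
  rw [z, i1, i2, hlog, ham]
  ring

lemma etaLog_eq (s : ℝ) : etaLog s = eta0 s := by
  have htu : (Real.exp s)^2 = (Real.exp (-2 * s))⁻¹ := by
    rw [← Real.exp_neg, ← Real.exp_nat_mul]; congr 1; push_cast; ring
  have hmul : Real.exp (2 * s) * Real.exp (-2 * s) = 1 := by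
    rw [← Real.exp_add]; simp
  set u := Real.exp (-2 * s) with hu
  have hu0 : 0 < u := Real.exp_pos _
  have hlogu : Real.log u = -2 * s := Real.log_exp _
  unfold etaLog eta0
  split_ifs with h1 h2
  · have : ∫ a in (0:ℝ)..1, Phi (Real.exp s) a = ∫ a in (0:ℝ)..1, (1:ℝ) := by
      refine intervalIntegral.integral_congr fun a ha => ?_
      rw [Set.uIcc_of_le zero_le_one] at ha
      have hu1 : 1 ≤ u := by rw [hu]; exact Real.one_le_exp (by linarith)
      rw [Phi_eq htu, phi1_small hu0 (by linarith [ha.2]), phi1_small hu0 (by linarith [ha.1])]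
      norm_num
    rw [this]; simp
  · push Not at h1
    have hu1 : u ≤ 1 := by rw [hu]; exact Real.exp_le_one_iff.2 (by linarith)
    have hu4 : 1/4 ≤ u := by
      rw [hu, ← Real.log_le_iff_le_exp (by norm_num)]
      have : Real.log (1/4) = -2 * Real.log 2 := by
        rw [show (1/4 : ℝ) = (2^2)⁻¹ by norm_num, Real.log_inv, Real.log_pow]; push_cast; ring
      rw [this]; linarith
    rw [I_mid htu hu4 hu1, hlogu]
    linear_combination (-(6 / Real.pi^2) * (2 + 4 * s)) * hmul
  · push Not at h1 h2
    have hu4 : u < 1/4 := by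
      rw [hu, ← Real.lt_log_iff_exp_lt (by norm_num)]
      have : Real.log (1/4) = -2 * Real.log 2 := by
        rw [show (1/4 : ℝ) = (2^2)⁻¹ by norm_num, Real.log_inv, Real.log_pow]; push_cast; ring
      rw [this]; linarith
    rw [I_large htu hu0 hu4]
    linear_combination (-(6 / Real.pi^2) * (2 - 4 * Real.log (1/2 + Real.sqrt (1/4 - u)))) * hmul



/-- cutoff -/
noncomputable def chiR (R s : ℝ) : ℝ := max 0 (min 1 (2 - |s| / R))

lemma chiR_cont (R : ℝ) : Continuous (chiR R) := by unfold chiR; fun_prop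

lemma chiR_zero {R s : ℝ} (hR : 0 < R) (hs : 2 * R ≤ |s|) : chiR R s = 0 := by
  unfold chiR
  have : 2 ≤ |s| / R := by rwa [le_div_iff₀ hR]
  exact max_eq_left ((min_le_right _ _).trans (by linarith))

lemma chiR_diff {R : ℝ} (hR : 0 < R) (s : ℝ) : |1 - chiR R s| ≤ |s| / R := by
  unfold chiR
  have h0 : 0 ≤ |s| / R := by positivity
  have h1 : max 0 (min 1 (2 - |s| / R)) ≤ 1 := max_le zero_le_one (min_le_left _ _)
  rw [abs_of_nonneg (by linarith)]
  by_cases h : |s| / R ≤ 1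
  · rw [min_eq_left (by linarith), max_eq_right zero_le_one]; simpa using h0
  · have := le_max_left 0 (min 1 (2 - |s| / R)); push Not at h; linarith

lemma chiR_pow_diff {R : ℝ} (hR : 0 < R) (n : ℕ) (s : ℝ) :
    |s ^ n - s ^ n * chiR R s| ≤ |s| ^ (n+1) / R := by
  have : s ^ n - s ^ n * chiR R s = s ^ n * (1 - chiR R s) := by ring
  rw [this, abs_mul, abs_pow, pow_succ, mul_div_assoc]
  exact mul_le_mul_of_nonneg_left (chiR_diff hR s) (by positivity)

lemma fourier_meas (m : ℤ) : Measurable (fun x : ℝ => fourier m (x : UnitAddCircle)) :=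
  (fourier_cont m).measurable

lemma bdd_intble {g : ℝ → ℂ} (hg : Measurable g) {B : ℝ} (hB : ∀ x, ‖g x‖ ≤ B) (a b : ℝ) :
    IntervalIntegrable g volume a b := by
  rw [intervalIntegrable_iff]
  exact Measure.integrableOn_of_bounded (M := B) (by simp) hg.aestronglyMeasurable
    (Eventually.of_forall hB)

lemma bdd_intble_real {g : ℝ → ℝ} (hg : Measurable g) {B : ℝ} (hB : ∀ x, |g x| ≤ B) (a b : ℝ) :
    IntervalIntegrable g volume a b := by
  rw [intervalIntegrable_iff]
  exact Measure.integrableOn_of_bounded (M := B) (by simp) hg.aestronglyMeasurable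
    (Eventually.of_forall hB)

lemma Xpow_bdd {δ : ℝ} (hδ : 0 < δ) (n : ℕ) : ∃ B, ∀ x, |Xlog δ x| ^ n ≤ B := by
  obtain ⟨B, hB⟩ := Xlog_bdd hδ
  exact ⟨B ^ n, fun x => pow_le_pow_left₀ (abs_nonneg _) (hB x) n⟩

lemma Xpow_intble {δ : ℝ} (hδ : 0 < δ) (n : ℕ) (a b : ℝ) :
    IntervalIntegrable (fun x => |Xlog δ x| ^ n) volume a b := by
  obtain ⟨B, hB⟩ := Xpow_bdd hδ n
  have hm := Xlog_measurable hδ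
  refine bdd_intble_real (B := B) (by fun_prop) (fun x => ?_) a b
  rw [abs_of_nonneg (by positivity)]; exact hB x

lemma trunc_err {δ : ℝ} (hδ : 0 < δ) (hδ1 : δ < 1) (n : ℕ) (m : ℤ) {R : ℝ} (hR : 0 < R) :
    ‖(∫ x in (0:ℝ)..1, fourier m (x : UnitAddCircle) * ((Xlog δ x ^ n : ℝ) : ℂ))
      - ∫ x in (0:ℝ)..1, fourier m (x : UnitAddCircle) *
        (((Xlog δ x) ^ n * chiR R (Xlog δ x) : ℝ) : ℂ)‖ ≤ 32 * ((n+1).factorial : ℝ) / R := by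
  have hm := Xlog_measurable hδ
  have hfm := fourier_meas m
  have hc := (chiR_cont R).measurable
  have hnorm : ∀ y : UnitAddCircle, ‖fourier m y‖ = 1 := fun y => by
    rw [fourier_apply]; exact Circle.norm_coe _
  obtain ⟨B, hB⟩ := Xpow_bdd hδ n
  have hchi : ∀ s, |chiR R s| ≤ 1 := fun s => by
    unfold chiR
    rw [abs_of_nonneg (le_max_left _ _)]
    exact max_le zero_le_one (min_le_left _ _)
  have i1 := bdd_intble (g := fun x : ℝ => fourier m (x : UnitAddCircle) * ((Xlog δ x ^ n : ℝ) : ℂ))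
    (by fun_prop) (B := B) (fun x => by
      rw [norm_mul, hnorm, one_mul, Complex.norm_real, Real.norm_eq_abs, abs_pow]; exact hB x) 0 1
  have i2 := bdd_intble (g := fun x : ℝ => fourier m (x : UnitAddCircle) *
        (((Xlog δ x) ^ n * chiR R (Xlog δ x) : ℝ) : ℂ))
    (by fun_prop) (B := B) (fun x => by
      rw [norm_mul, hnorm, one_mul, Complex.norm_real, Real.norm_eq_abs, abs_mul, abs_pow]
      exact (mul_le_of_le_one_right (by positivity) (hchi _)).trans (hB x)) 0 1
  rw [← intervalIntegral.integral_sub i1 i2]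
  calc _ ≤ ∫ x in (0:ℝ)..1, |Xlog δ x| ^ (n+1) / R := by
        refine intervalIntegral.norm_integral_le_of_norm_le zero_le_one
          (Eventually.of_forall fun x _ => ?_) ((Xpow_intble hδ (n+1) 0 1).div_const R)
        rw [← mul_sub, norm_mul, hnorm, one_mul, ← Complex.ofReal_sub, Complex.norm_real,
          Real.norm_eq_abs]
        exact chiR_pow_diff hR n _
    _ = (∫ x in (0:ℝ)..1, |Xlog δ x| ^ (n+1)) / R := by
        rw [intervalIntegral.integral_div]
    _ ≤ _ := by
        gcongr
        exact Xlog_moment hδ hδ1 (n+1)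



lemma moment_tendsto (m : ℤ) (n : ℕ) :
    Tendsto (fun δ => ∫ x in (0:ℝ)..1, fourier m (x : UnitAddCircle) * ((Xlog δ x ^ n : ℝ) : ℂ))
      (nhdsWithin 0 (Set.Ioi 0))
      (nhds (if m = 0 then ((∫ s, s ^ n * eta0 s : ℝ) : ℂ) else 0)) := by
  set K : ℝ := ∫ s, |s| ^ (n+1) * eta0 s with hK
  have hK0 : 0 ≤ K := integral_nonneg fun s => mul_nonneg (by positivity) (eta0_nonneg s)
  set C : ℝ := 32 * ((n+1).factorial : ℝ) with hC
  have hC0 : 0 < C := by positivity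
  rw [Metric.tendsto_nhds]
  intro ε hε
  set R : ℝ := 4 * (C + K + 1) / ε with hRdef
  have hR : 0 < R := by positivity
  have hCR : C / R ≤ ε / 4 := by
    rw [div_le_iff₀ hR, hRdef]
    have : ε / 4 * (4 * (C + K + 1) / ε) = C + K + 1 := by field_simp
    rw [this]; linarith
  have hKR : K / R ≤ ε / 4 := by
    rw [div_le_iff₀ hR, hRdef]
    have : ε / 4 * (4 * (C + K + 1) / ε) = C + K + 1 := by field_simp
    rw [this]; linarith
  have ht := test_tendsto (f := fun s => s ^ n * chiR R s)
    ((continuous_id.pow n).mul (chiR_cont R)) (A := 2 * R) (by positivity)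
    (fun s hs => by simp only [chiR_zero hR hs, mul_zero]) m
  rw [Metric.tendsto_nhds] at ht
  have hchi : ∀ s, |chiR R s| ≤ 1 := fun s => by
    unfold chiR
    rw [abs_of_nonneg (le_max_left _ _)]
    exact max_le zero_le_one (min_le_left _ _)
  have hlim : dist (if m = 0 then ((∫ s, s ^ n * chiR R s * eta0 s : ℝ) : ℂ) else 0)
      (if m = 0 then ((∫ s, s ^ n * eta0 s : ℝ) : ℂ) else 0) ≤ ε / 4 := by
    split_ifs with h
    · rw [dist_comm, Complex.dist_eq, ← Complex.ofReal_sub, Complex.norm_real]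
      have i1 : Integrable (fun s : ℝ => s ^ n * eta0 s) := by
        refine (integrable_moment n).mono ((continuous_id.pow n).mul eta0_cont).aestronglyMeasurable
          (Eventually.of_forall fun s => ?_)
        simp [abs_mul]
      have i2 : Integrable (fun s : ℝ => s ^ n * chiR R s * eta0 s) := by
        refine (integrable_moment n).mono
          (((continuous_id.pow n).mul (chiR_cont R)).mul eta0_cont).aestronglyMeasurable
          (Eventually.of_forall fun s => ?_)
        rw [Real.norm_eq_abs, Real.norm_eq_abs, abs_mul, abs_mul, abs_mul, abs_pow, abs_pow, abs_abs]
        exact mul_le_mul_of_nonneg_right (mul_le_of_le_one_right (by positivity) (hchi s))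
          (abs_nonneg _)
      rw [← integral_sub i1 i2]
      calc _ ≤ ∫ s, |s| ^ (n+1) * eta0 s / R := by
            refine norm_integral_le_of_norm_le ((integrable_moment (n+1)).div_const R)
              (Eventually.of_forall fun s => ?_)
            rw [← sub_mul, Real.norm_eq_abs, abs_mul, abs_of_nonneg (eta0_nonneg s)]
            calc _ ≤ |s| ^ (n+1) / R * eta0 s :=
                  mul_le_mul_of_nonneg_right (chiR_pow_diff hR n s) (eta0_nonneg s)
              _ = _ := by ring
        _ = K / R := by rw [integral_div]
        _ ≤ _ := hKR
    · simp; positivity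
  have h1 : ∀ᶠ δ : ℝ in nhdsWithin 0 (Set.Ioi 0), δ ∈ Set.Ioo (0:ℝ) 1 :=
    Ioo_mem_nhdsGT one_pos
  filter_upwards [ht (ε / 4) (by positivity), h1] with δ hδ hδ1
  have e1 := (trunc_err hδ1.1 hδ1.2 n m hR).trans hCR
  rw [← Complex.dist_eq] at e1
  have := add_lt_add_of_lt_of_le (add_lt_add_of_le_of_lt e1 hδ) hlim
  refine (dist_triangle4 _ _ _ _).trans_lt (this.trans ?_)
  linarith



/-- integration against a fixed integrable function, as a functional on continuous functions -/
noncomputable def Lmap (φ : ℝ → ℂ) (h : IntervalIntegrable φ volume 0 1) :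
    C(UnitAddCircle, ℂ) →ₗ[ℂ] ℂ where
  toFun g := ∫ x in (0:ℝ)..1, g (x : UnitAddCircle) * φ x
  map_add' g k := by
    have hg : Continuous fun x : ℝ => g (x : UnitAddCircle) :=
      g.continuous.comp (AddCircle.continuous_mk' 1)
    have hk : Continuous fun x : ℝ => k (x : UnitAddCircle) :=
      k.continuous.comp (AddCircle.continuous_mk' 1)
    rw [← intervalIntegral.integral_add (h.continuousOn_mul hg.continuousOn)
      (h.continuousOn_mul hk.continuousOn)]
    simp only [ContinuousMap.add_apply, add_mul]
  map_smul' c g := by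
    simp only [ContinuousMap.smul_apply, smul_eq_mul, mul_assoc, RingHom.id_apply]
    rw [intervalIntegral.integral_const_mul]

lemma Lmap_apply (φ : ℝ → ℂ) (h : IntervalIntegrable φ volume 0 1) (g : C(UnitAddCircle, ℂ)) :
    Lmap φ h g = ∫ x in (0:ℝ)..1, g (x : UnitAddCircle) * φ x := rfl

lemma Lmap_bound (φ : ℝ → ℂ) (h : IntervalIntegrable φ volume 0 1) {C : ℝ}
    (hC : ∫ x in (0:ℝ)..1, ‖φ x‖ ≤ C) (g : C(UnitAddCircle, ℂ)) : ‖Lmap φ h g‖ ≤ C * ‖g‖ := by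
  rw [Lmap_apply]
  calc _ ≤ ∫ x in (0:ℝ)..1, ‖g‖ * ‖φ x‖ := by
        refine intervalIntegral.norm_integral_le_of_norm_le zero_le_one
          (Eventually.of_forall fun x _ => ?_) (h.norm.const_mul _)
        rw [norm_mul]
        exact mul_le_mul_of_nonneg_right (g.norm_coe_le_norm _) (norm_nonneg _)
    _ = (∫ x in (0:ℝ)..1, ‖φ x‖) * ‖g‖ := by rw [intervalIntegral.integral_const_mul, mul_comm]
    _ ≤ _ := by gcongr

lemma Xpow_intble_c {δ : ℝ} (hδ : 0 < δ) (n : ℕ) :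
    IntervalIntegrable (fun x => ((Xlog δ x ^ n : ℝ) : ℂ)) volume 0 1 := by
  obtain ⟨B, hB⟩ := Xpow_bdd hδ n
  have hm := Xlog_measurable hδ
  refine bdd_intble (B := B) (by fun_prop) (fun x => ?_) _ _
  rw [Complex.norm_real, Real.norm_eq_abs, abs_pow]; exact hB x

lemma int_fourier (m : ℤ) : ∫ x in (0:ℝ)..1, fourier m (x : UnitAddCircle) = if m = 0 then 1 else 0 := by
  have := UnitAddCircle.intervalIntegral_preimage 0 (fourier m : UnitAddCircle → ℂ)
  rw [zero_add] at this
  split_ifs with h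
  · subst h; simp
  · rw [this]
    exact integral_eq_zero_of_add_right_eq_neg (fourier_add_half_inv_index h one_pos)

lemma cont_tendsto (n : ℕ) (g : C(UnitAddCircle, ℂ)) :
    Tendsto (fun δ => ∫ x in (0:ℝ)..1, g (x : UnitAddCircle) * ((Xlog δ x ^ n : ℝ) : ℂ))
      (nhdsWithin 0 (Set.Ioi 0))
      (nhds (∫ x in (0:ℝ)..1, g (x : UnitAddCircle) * ((∫ s, s ^ n * eta0 s : ℝ) : ℂ))) := by
  classical
  set μ : ℝ := ∫ s, s ^ n * eta0 s with hμ
  have hc : IntervalIntegrable (fun _ : ℝ => (μ : ℂ)) volume 0 1 := intervalIntegrable_const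
  let T : ℝ → C(UnitAddCircle, ℂ) →ₗ[ℂ] ℂ := fun δ =>
    if h : 0 < δ then Lmap _ (Xpow_intble_c h n) else 0
  have hTp : ∀ δ (h : 0 < δ), T δ = Lmap _ (Xpow_intble_c h n) := fun δ h => dif_pos h
  have h1 : ∀ᶠ δ : ℝ in nhdsWithin 0 (Set.Ioi 0), δ ∈ Set.Ioo (0:ℝ) 1 :=
    Ioo_mem_nhdsGT one_pos
  have key := closure_tendsto T (Lmap _ hc) (l := nhdsWithin 0 (Set.Ioi 0))
    (32 * (n.factorial : ℝ) + |μ|) ?_ ?_ (Set.range (fourier (T := 1))) span_fourier_closure_eq_top ?_ g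
  · refine Tendsto.congr' ?_ key
    filter_upwards [h1] with δ hδ
    rw [hTp δ hδ.1, Lmap_apply]
  · filter_upwards [h1] with δ hδ x
    rw [hTp δ hδ.1]
    refine Lmap_bound _ _ ?_ x
    have := Xlog_moment hδ.1 hδ.2 n
    simp only [Complex.norm_real, Real.norm_eq_abs, abs_pow]
    have := abs_nonneg μ
    linarith
  · intro x
    refine Lmap_bound _ _ ?_ x
    simp only [Complex.norm_real, Real.norm_eq_abs, intervalIntegral.integral_const, sub_zero, one_smul]
    have : (0:ℝ) ≤ 32 * (n.factorial : ℝ) := by positivity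
    linarith
  · rintro _ ⟨m, rfl⟩
    have := moment_tendsto m n
    have e : Lmap _ hc (fourier m) = if m = 0 then (μ : ℂ) else 0 := by
      rw [Lmap_apply, intervalIntegral.integral_mul_const, int_fourier]
      split_ifs <;> simp
    rw [e]
    refine Tendsto.congr' ?_ this
    filter_upwards [h1] with δ hδ
    rw [hTp δ hδ.1, Lmap_apply]



lemma real_tendsto (n : ℕ) {g : ℝ → ℝ} (hg : Continuous g) (h01 : g 0 = g 1) :
    Tendsto (fun δ => ∫ x in (0:ℝ)..1, g x * Xlog δ x ^ n)
      (nhdsWithin 0 (Set.Ioi 0))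
      (nhds ((∫ x in (0:ℝ)..1, g x) * ∫ s, s ^ n * eta0 s)) := by
  have hc : Continuous (AddCircle.liftIoc (1:ℝ) 0 (fun x => (g x : ℂ))) :=
    AddCircle.liftIoc_zero_continuous (by rw [h01]) (by fun_prop)
  have key := cont_tendsto n ⟨_, hc⟩
  have hval : ∀ x ∈ Set.Ioc (0:ℝ) 1, AddCircle.liftIoc (1:ℝ) 0 (fun x => (g x : ℂ)) (x : UnitAddCircle) = (g x : ℂ) :=
    fun x hx => AddCircle.liftIoc_coe_apply (by simpa using hx)
  have e : ∀ φ : ℝ → ℝ, ∫ x in (0:ℝ)..1, (⟨_, hc⟩ : C(UnitAddCircle, ℂ)) (x : UnitAddCircle) * (φ x : ℂ)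
      = ((∫ x in (0:ℝ)..1, g x * φ x : ℝ) : ℂ) := by
    intro φ
    rw [← intervalIntegral.integral_ofReal]
    refine intervalIntegral.integral_congr_ae (Eventually.of_forall fun x hx => ?_)
    rw [Set.uIoc_of_le zero_le_one] at hx
    rw [ContinuousMap.coe_mk, hval x hx, Complex.ofReal_mul]
  rw [e (fun _ => ∫ s, s ^ n * eta0 s)] at key
  simp_rw [fun δ => e (fun x => Xlog δ x ^ n)] at key
  have k2 := (Complex.continuous_re.tendsto _).comp key
  rw [Complex.ofReal_re, intervalIntegral.integral_mul_const] at k2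
  exact k2

/-- trapezoid -/
noncomputable def trap (a b r x : ℝ) : ℝ := max 0 (min 1 (min ((x - a) / r) ((b - x) / r)))

lemma trap_cont (a b r : ℝ) : Continuous (trap a b r) := by unfold trap; fun_prop

lemma trap_left {a b r x : ℝ} (hr : 0 < r) (hx : x ≤ a) : trap a b r x = 0 :=
  max_eq_left ((min_le_right _ _).trans ((min_le_left _ _).trans
    (div_nonpos_of_nonpos_of_nonneg (by linarith) hr.le)))

lemma trap_right {a b r x : ℝ} (hr : 0 < r) (hx : b ≤ x) : trap a b r x = 0 :=
  max_eq_left ((min_le_right _ _).trans ((min_le_right _ _).trans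
    (div_nonpos_of_nonpos_of_nonneg (by linarith) hr.le)))

lemma trap_mid {a b r x : ℝ} (hr : 0 < r) (h1 : a + r ≤ x) (h2 : x ≤ b - r) : trap a b r x = 1 := by
  have e1 : 1 ≤ (x - a) / r := by rw [le_div_iff₀ hr]; linarith
  have e2 : 1 ≤ (b - x) / r := by rw [le_div_iff₀ hr]; linarith
  unfold trap
  rw [min_eq_left (le_min e1 e2), max_eq_right zero_le_one]

lemma trap_nonneg (a b r x : ℝ) : 0 ≤ trap a b r x := le_max_left _ _
lemma trap_le_one (a b r x : ℝ) : trap a b r x ≤ 1 := max_le zero_le_one (min_le_left _ _)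

lemma trap_diff {a b r : ℝ} (hr : 0 < r) (x : ℝ) :
    |(Set.Ioc a b).indicator 1 x - trap a b r x| ≤
      (Set.Icc a (a + r)).indicator 1 x + (Set.Icc (b - r) b).indicator 1 x := by
  have n1 : (0:ℝ) ≤ (Set.Icc a (a + r)).indicator 1 x := Set.indicator_nonneg (fun _ _ => zero_le_one) x
  have n2 : (0:ℝ) ≤ (Set.Icc (b - r) b).indicator 1 x := Set.indicator_nonneg (fun _ _ => zero_le_one) x
  by_cases hx : x ∈ Set.Ioc a b
  · rw [Set.indicator_of_mem hx]
    have t0 := trap_nonneg a b r x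
    have t1 := trap_le_one a b r x
    rw [Pi.one_apply, abs_of_nonneg (by linarith)]
    by_cases h1 : x ≤ a + r
    · rw [Set.indicator_of_mem (show x ∈ Set.Icc a (a + r) from ⟨hx.1.le, h1⟩), Pi.one_apply]; linarith
    by_cases h2 : b - r ≤ x
    · rw [Set.indicator_of_mem (show x ∈ Set.Icc (b - r) b from ⟨h2, hx.2⟩), Pi.one_apply]; linarith
    rw [trap_mid hr (by linarith) (by linarith)]; linarith
  · rw [Set.indicator_of_notMem hx]
    have : trap a b r x = 0 := by
      by_cases h : x ≤ a
      · exact trap_left hr h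
      · refine trap_right hr ?_
        by_contra h'
        exact hx ⟨by linarith, by linarith⟩
    rw [this]; simp only [sub_zero, abs_zero]; linarith

lemma ind_int_le {c d : ℝ} (h : c ≤ d) : ∫ x in (0:ℝ)..1, (Set.Icc c d).indicator (1 : ℝ → ℝ) x ≤ d - c := by
  rw [intervalIntegral.integral_of_le zero_le_one, setIntegral_indicator measurableSet_Icc]
  simp only [Pi.one_apply, setIntegral_const, smul_eq_mul, mul_one]
  calc _ ≤ volume.real (Set.Icc c d) := measureReal_mono Set.inter_subset_right (by simp)
    _ = d - c := by rw [Real.volume_real_Icc_of_le h]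

lemma ind_intble (S : Set ℝ) (hS : MeasurableSet S) (a b : ℝ) :
    IntervalIntegrable (S.indicator (1 : ℝ → ℝ)) volume a b := by
  refine bdd_intble_real (measurable_one.indicator hS) (B := 1) (fun x => ?_) a b
  by_cases h : x ∈ S <;> simp [h]

lemma ind_mul {a b : ℝ} (ha : 0 ≤ a) (hab : a ≤ b) (hb : b ≤ 1) (φ : ℝ → ℝ) :
    ∫ x in (0:ℝ)..1, (Set.Ioc a b).indicator 1 x * φ x = ∫ x in a..b, φ x := by
  have : ∀ x, (Set.Ioc a b).indicator 1 x * φ x = (Set.Ioc a b).indicator φ x := fun x => by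
    by_cases h : x ∈ Set.Ioc a b <;> simp [h]
  simp_rw [this]
  rw [intervalIntegral.integral_of_le zero_le_one, setIntegral_indicator measurableSet_Ioc,
    intervalIntegral.integral_of_le hab, Set.inter_eq_right.mpr (Set.Ioc_subset_Ioc ha hb)]

lemma interval_tendsto (n : ℕ) {a b : ℝ} (ha : 0 ≤ a) (hab : a ≤ b) (hb : b ≤ 1) :
    Tendsto (fun δ => ∫ x in a..b, Xlog δ x ^ n) (nhdsWithin 0 (Set.Ioi 0))
      (nhds ((b - a) * ∫ s, s ^ n * eta0 s)) := by
  set μ : ℝ := ∫ s, s ^ n * eta0 s with hμ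
  set C : ℝ := 32 * ((2 * n).factorial : ℝ) with hC
  have hC0 : 0 < C := by positivity
  rw [Metric.tendsto_nhds]
  intro ε hε
  set M : ℝ := 8 * C / ε with hM
  have hM0 : 0 < M := by positivity
  set r : ℝ := ε / (16 * (M + |μ| + 1)) with hr
  have hr0 : 0 < r := by positivity
  have hCM : C / M = ε / 8 := by rw [hM]; field_simp
  have hsum : (M + |μ| + 1) * (2 * r) = ε / 8 := by
    rw [hr]; field_simp; norm_num
  have hMr : M * (2 * r) ≤ ε / 8 := by
    rw [← hsum]; gcongr; have := abs_nonneg μ; linarith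
  have hμr : |μ| * (2 * r) ≤ ε / 8 := by
    rw [← hsum]; gcongr; linarith
  set g := trap a b r with hg
  set h : ℝ → ℝ := (Set.Ioc a b).indicator 1 with hh
  set w : ℝ → ℝ := fun x => (Set.Icc a (a + r)).indicator 1 x + (Set.Icc (b - r) b).indicator 1 x with hw
  have hgc : Continuous g := trap_cont a b r
  have hhi : IntervalIntegrable h volume 0 1 := ind_intble _ measurableSet_Ioc _ _
  have hwi : IntervalIntegrable w volume 0 1 :=
    (ind_intble _ measurableSet_Icc _ _).add (ind_intble _ measurableSet_Icc _ _)
  have hwint : ∫ x in (0:ℝ)..1, w x ≤ 2 * r := by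
    rw [hw, intervalIntegral.integral_add (ind_intble _ measurableSet_Icc _ _)
      (ind_intble _ measurableSet_Icc _ _)]
    have e1 := ind_int_le (c := a) (d := a + r) (by linarith)
    have e2 := ind_int_le (c := b - r) (d := b) (by linarith)
    linarith
  have hdiff : ∀ x, |h x - g x| ≤ w x := fun x => trap_diff hr0 x
  have hle1 : ∀ x, |h x - g x| ≤ 1 := fun x => by
    have t0 := trap_nonneg a b r x
    have t1 := trap_le_one a b r x
    rw [hh, hg, abs_le]
    by_cases hx : x ∈ Set.Ioc a b
    · rw [Set.indicator_of_mem hx, Pi.one_apply]; constructor <;> linarith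
    · rw [Set.indicator_of_notMem hx]; constructor <;> linarith
  have hh1 : ∫ x in (0:ℝ)..1, h x = b - a := by
    have := ind_mul ha hab hb (fun _ => 1)
    simpa using this
  have hgh : |(∫ x in (0:ℝ)..1, g x) - (b - a)| ≤ 2 * r := by
    rw [← hh1, abs_sub_comm, ← intervalIntegral.integral_sub hhi (hgc.intervalIntegrable _ _)]
    refine le_trans ?_ hwint
    rw [← Real.norm_eq_abs]
    exact intervalIntegral.norm_integral_le_of_norm_le zero_le_one
          (Eventually.of_forall fun x _ => hdiff x) hwi
  have ht := real_tendsto n hgc (by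
    rw [hg, trap_left hr0 ha, trap_right hr0 hb])
  rw [Metric.tendsto_nhds] at ht
  have h1 : ∀ᶠ δ : ℝ in nhdsWithin 0 (Set.Ioi 0), δ ∈ Set.Ioo (0:ℝ) 1 :=
    Ioo_mem_nhdsGT one_pos
  filter_upwards [ht (ε / 8) (by positivity), h1] with δ hδ hδ1
  obtain ⟨B, hB⟩ := Xpow_bdd hδ1.1 n
  have hXm := Xlog_measurable hδ1.1
  have hX : IntervalIntegrable (fun x => Xlog δ x ^ n) volume 0 1 :=
    bdd_intble_real (B := B) (by fun_prop) (fun x => by rw [abs_pow]; exact hB x) 0 1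
  have i1 : IntervalIntegrable (fun x => h x * Xlog δ x ^ n) volume 0 1 := by
    refine bdd_intble_real (B := B) ?_ (fun x => ?_) 0 1
    · exact (measurable_one.indicator measurableSet_Ioc).mul (hXm.pow_const n)
    · rw [abs_mul, abs_pow]
      have : |h x| ≤ 1 := by rw [hh]; by_cases hx : x ∈ Set.Ioc a b <;> simp [hx]
      exact (mul_le_of_le_one_left (by positivity) this).trans (hB x)
  have i2 : IntervalIntegrable (fun x => g x * Xlog δ x ^ n) volume 0 1 :=
    hX.continuousOn_mul hgc.continuousOn
  have e1 : |(∫ x in (0:ℝ)..1, h x * Xlog δ x ^ n) - ∫ x in (0:ℝ)..1, g x * Xlog δ x ^ n| ≤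
      ε / 8 + ε / 8 := by
    rw [← intervalIntegral.integral_sub i1 i2, ← Real.norm_eq_abs]
    have j1 : IntervalIntegrable (fun x => M * w x) volume 0 1 := hwi.const_mul M
    have j2 : IntervalIntegrable (fun x => |Xlog δ x| ^ (2 * n) / M) volume 0 1 :=
      (Xpow_intble hδ1.1 (2 * n) 0 1).div_const M
    calc _ ≤ ∫ x in (0:ℝ)..1, (M * w x + |Xlog δ x| ^ (2 * n) / M) := by
          refine intervalIntegral.norm_integral_le_of_norm_le zero_le_one
            (Eventually.of_forall fun x _ => ?_) (j1.add j2)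
          rw [← sub_mul, Real.norm_eq_abs, abs_mul, abs_pow]
          set u := |h x - g x|
          have hu0 : 0 ≤ u := abs_nonneg _
          have hu1 : u ≤ 1 := hle1 x
          have huw : u ≤ w x := hdiff x
          rw [mul_comm 2 n, pow_mul]
          set y := |Xlog δ x| ^ n
          have hy : 0 ≤ y := by positivity
          by_cases hyM : y ≤ M
          · have : u * y ≤ w x * M := by gcongr; exact hu0.trans huw
            have : 0 ≤ y ^ 2 / M := by positivity
            nlinarith
          · push Not at hyM
            have p1 : u * y ≤ y := mul_le_of_le_one_left hy hu1
            have p2 : y ≤ y ^ 2 / M := by rw [le_div_iff₀ hM0]; nlinarith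
            have p3 : 0 ≤ M * w x := mul_nonneg hM0.le (hu0.trans huw)
            linarith
      _ = M * (∫ x in (0:ℝ)..1, w x) + (∫ x in (0:ℝ)..1, |Xlog δ x| ^ (2 * n)) / M := by
          rw [intervalIntegral.integral_add j1 j2, intervalIntegral.integral_const_mul,
            intervalIntegral.integral_div]
      _ ≤ M * (2 * r) + C / M := by
          gcongr
          exact Xlog_moment hδ1.1 hδ1.2 (2 * n)
      _ ≤ _ := by rw [hCM]; linarith
  have e0 : ∫ x in a..b, Xlog δ x ^ n = ∫ x in (0:ℝ)..1, h x * Xlog δ x ^ n :=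
    (ind_mul ha hab hb _).symm
  have e3 : |(∫ x in (0:ℝ)..1, g x) * μ - (b - a) * μ| ≤ ε / 8 := by
    rw [← sub_mul, abs_mul, mul_comm]
    exact (mul_le_mul_of_nonneg_left hgh (abs_nonneg _)).trans hμr
  rw [Real.dist_eq] at hδ ⊢
  rw [e0]
  rw [abs_lt] at *
  rw [abs_le] at e1 e3
  constructor <;> linarith [e1.1, e1.2, e3.1, e3.2, hδ.1, hδ.2]

lemma set_ae_Ioc {D : Set ℝ} (hD : D ⊆ Set.Icc 0 1) (hDI : D.OrdConnected) :
    ∃ a b : ℝ, 0 ≤ a ∧ a ≤ b ∧ b ≤ 1 ∧ D =ᵐ[volume] Set.Ioc a b := by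
  rcases D.eq_empty_or_nonempty with rfl | hne
  · exact ⟨0, 0, le_rfl, le_rfl, zero_le_one, by simp⟩
  have hbb : BddBelow D := ⟨0, fun x hx => (hD hx).1⟩
  have hba : BddAbove D := ⟨1, fun x hx => (hD hx).2⟩
  refine ⟨sInf D, sSup D, le_csInf hne fun x hx => (hD hx).1, csInf_le_csSup hne hbb hba,
    csSup_le hne fun x hx => (hD hx).2, ?_⟩
  have s1 : Set.Ioo (sInf D) (sSup D) ⊆ D := fun x hx => by
    obtain ⟨y, hy, hyx⟩ := exists_lt_of_csInf_lt hne hx.1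
    obtain ⟨z, hz, hxz⟩ := exists_lt_of_lt_csSup hne hx.2
    exact hDI.out hy hz ⟨hyx.le, hxz.le⟩
  have s2 : D ⊆ Set.Icc (sInf D) (sSup D) := fun x hx => ⟨csInf_le hbb hx, le_csSup hba hx⟩
  have a1 : Set.Ioo (sInf D) (sSup D) =ᵐ[volume] Set.Icc (sInf D) (sSup D) := Ioo_ae_eq_Icc
  have a2 : Set.Ioo (sInf D) (sSup D) =ᵐ[volume] Set.Ioc (sInf D) (sSup D) := Ioo_ae_eq_Ioc
  have l1 : Set.Ioo (sInf D) (sSup D) ≤ᵐ[volume] D := LE.le.eventuallyLE s1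
  have l2 : D ≤ᵐ[volume] Set.Ioo (sInf D) (sSup D) :=
    (LE.le.eventuallyLE s2).trans a1.symm.le
  exact (l2.antisymm l1).trans a2

theorem smallest_denominator_log_moments
    (D : Set ℝ) (hD : D ⊆ Set.Icc 0 1) (hDI : D.OrdConnected) (n : ℕ) :
    Tendsto (fun δ : ℝ =>
        ∫ x in D, (Real.log (qmin x δ) + (1 / 2) * Real.log δ) ^ n)
      (nhdsWithin 0 (Set.Ioi 0))
      (nhds ((∫ s : ℝ, s ^ n * etaLog s) * (volume D).toReal)) := by
  obtain ⟨a, b, ha, hab, hb, hae⟩ := set_ae_Ioc hD hDI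
  have hv : (volume D).toReal = b - a := by
    rw [measure_congr hae, Real.volume_Ioc, ENNReal.toReal_ofReal (by linarith)]
  have := interval_tendsto n ha hab hb
  simp_rw [etaLog_eq]
  rw [hv, mul_comm]
  refine Tendsto.congr' ?_ this
  filter_upwards [self_mem_nhdsWithin] with δ hδ
  rw [setIntegral_congr_set hae, intervalIntegral.integral_of_le hab]
  simp_rw [Xlog_eq hδ]
end

section
/- The function η_log is nonnegative on ℝ and ∫_ℝ η_log(s) ds = 1; that is, η_log is a probability density on ℝ. -/
open MeasureTheory

namespace EtaAux

open Set Filter Topology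

/-- The dilogarithm series. -/
noncomputable def li (x : ℝ) : ℝ := ∑' n : ℕ, x ^ (n + 1) / ((n : ℝ) + 1) ^ 2

lemma summable_sq : Summable (fun n : ℕ => 1 / ((n : ℝ) + 1) ^ 2) := by
  have h := (summable_nat_add_iff 1).2 (Real.summable_one_div_nat_pow.2 (one_lt_two))
  simpa using h

lemma term_bound {x : ℝ} (hx : |x| ≤ 1) (n : ℕ) :
    ‖x ^ (n + 1) / ((n : ℝ) + 1) ^ 2‖ ≤ 1 / ((n : ℝ) + 1) ^ 2 := by
  rw [norm_div, norm_pow, Real.norm_eq_abs, Real.norm_of_nonneg (by positivity)]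
  gcongr
  exact pow_le_one₀ (abs_nonneg x) hx

lemma li_continuousOn : ContinuousOn li (Icc 0 1) := by
  unfold li
  refine continuousOn_tsum (fun n => by fun_prop) summable_sq ?_
  intro n x hx
  exact term_bound (by rw [abs_of_nonneg hx.1]; exact hx.2) n

lemma li_one : li 1 = Real.pi ^ 2 / 6 := by
  have h := hasSum_zeta_two
  have h2 := (hasSum_nat_add_iff' 1).2 h
  unfold li
  have := h2.tsum_eq
  simpa using this

lemma li_zero : li 0 = 0 := by simp [li]

lemma li_hasDerivAt {x : ℝ} (h0 : 0 < x) (h1 : x < 1) :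
    HasDerivAt li (-Real.log (1 - x) / x) x := by
  obtain ⟨r, hxr, hr1⟩ := exists_between h1
  have hr0 : 0 < r := h0.trans hxr
  have key : HasDerivAt (fun y : ℝ => ∑' n : ℕ, y ^ (n + 1) / ((n : ℝ) + 1) ^ 2)
      (∑' n : ℕ, x ^ n / ((n : ℝ) + 1)) x := by
    refine hasDerivAt_tsum_of_isPreconnected (u := fun n : ℕ => r ^ n) (t := Ioo (-r) r)
      (g := fun n (y : ℝ) => y ^ (n + 1) / ((n : ℝ) + 1) ^ 2)
      (g' := fun n (y : ℝ) => y ^ n / ((n : ℝ) + 1)) (y₀ := 0)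
      (summable_geometric_of_lt_one hr0.le hr1) isOpen_Ioo isPreconnected_Ioo ?_ ?_ ?_ ?_ ?_
    · intro n y _
      have := (hasDerivAt_pow (n + 1) y).div_const (((n : ℝ) + 1) ^ 2)
      refine HasDerivAt.congr_deriv this ?_
      have : (n : ℝ) + 1 ≠ 0 := by positivity
      push_cast
      field_simp
    · intro n y hy
      rw [norm_div, norm_pow, Real.norm_eq_abs, Real.norm_of_nonneg (by positivity)]
      have hy' : |y| ≤ r := (abs_lt.2 hy).le
      calc |y| ^ n / ((n : ℝ) + 1) ≤ |y| ^ n := div_le_self (by positivity) (by simp)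
        _ ≤ r ^ n := by gcongr
    · exact ⟨by linarith, hr0⟩
    · simp
    · exact ⟨by linarith, hxr⟩
  have hs := (Real.hasSum_pow_div_log_of_abs_lt_one (x := x) (by rw [abs_of_pos h0]; exact h1))
  have hs2 := (hs.div_const x).tsum_eq
  rw [← hs2]
  refine HasDerivAt.congr_deriv key (tsum_congr fun n => ?_)
  field_simp
  ring

lemma loglog_cont : ContinuousOn (fun x : ℝ => Real.log x * Real.log (1 - x)) (Icc 0 (1/2)) := by
  intro x hx
  apply ContinuousAt.continuousWithinAt
  rcases hx.1.eq_or_lt with h | h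
  · subst h
    let f : ℝ → ℝ := fun x => Real.log (1 - x)
    have hd : DifferentiableAt ℝ f 0 := by
      refine DifferentiableAt.log (by fun_prop) (by norm_num)
    have hc : ContinuousAt (dslope f 0) 0 := continuousAt_dslope_same.2 hd
    have : (fun x : ℝ => Real.log x * Real.log (1 - x)) =
        fun x => (x * Real.log x) * dslope f 0 x := by
      funext y
      have h := sub_smul_dslope f 0 y
      simp only [f, smul_eq_mul, sub_zero, Real.log_one] at h
      rw [← h]; ring
    rw [this]
    exact (Real.continuous_mul_log.continuousAt).mul hc
  · have h2 := hx.2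
    exact (Real.continuousAt_log h.ne').mul
      (ContinuousAt.log (by fun_prop) (by linarith))

lemma li_half : 2 * li (1/2) = Real.pi ^ 2 / 6 - Real.log 2 ^ 2 := by
  let F : ℝ → ℝ := fun x => li x + li (1 - x) + Real.log x * Real.log (1 - x)
  have hc : ContinuousOn F (Icc 0 (1/2)) := by
    refine ContinuousOn.add (ContinuousOn.add ?_ ?_) loglog_cont
    · exact li_continuousOn.mono (Icc_subset_Icc le_rfl (by norm_num))
    · refine li_continuousOn.comp (by fun_prop) ?_
      intro x hx
      exact ⟨by linarith [hx.2], by linarith [hx.1]⟩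
  have hd : ∀ x ∈ Ioo (0:ℝ) (1/2), HasDerivAt F ((fun _ => (0:ℝ)) x) x := by
    intro x hx
    obtain ⟨h0, h1⟩ := hx
    have e1 := li_hasDerivAt h0 (by linarith)
    have hs : HasDerivAt (fun y : ℝ => 1 - y) (-1) x := by
      simpa using (hasDerivAt_id x).const_sub 1
    have e2 := (li_hasDerivAt (x := 1 - x) (by linarith) (by linarith)).comp x hs
    have e3 := (Real.hasDerivAt_log h0.ne').mul (hs.log (by linarith))
    have := (e1.add e2).add e3
    refine HasDerivAt.congr_deriv this ?_
    have : 1 - x ≠ 0 := by linarith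
    have := h0.ne'
    simp only [sub_sub_cancel]
    field_simp
    ring
  obtain ⟨c, _, hc2⟩ := exists_hasDerivAt_eq_slope F (fun _ => 0) (by norm_num) hc hd
  have h1 : F (1/2) = F 0 := by
    field_simp at hc2
    linarith
  simp only [F, li_zero, sub_zero, li_one, Real.log_zero] at h1
  rw [show (1:ℝ) - 1/2 = 1/2 by norm_num, show (1:ℝ)/2 = 2⁻¹ by norm_num, Real.log_inv] at h1
  rw [show (1:ℝ)/2 = 2⁻¹ by norm_num]
  nlinarith [h1]

/-- Antiderivative in the variable `p`. -/
noncomputable def A (p : ℝ) : ℝ :=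
  -2 * Real.log p - 1 / p - 2 * li (1 - p) + Real.log p ^ 2

noncomputable def P (s : ℝ) : ℝ := 1 / 2 + Real.sqrt (1 / 4 - Real.exp (-2 * s))

noncomputable def g3 (s : ℝ) : ℝ := -Real.exp (2 * s) + 2
    + 2 * Real.exp (2 * s) * Real.sqrt (1 / 4 - Real.exp (-2 * s))
    - 4 * Real.log (1 / 2 + Real.sqrt (1 / 4 - Real.exp (-2 * s)))

lemma exp_log2 : Real.exp (-2 * Real.log 2) = 1 / 4 := by
  rw [show -2 * Real.log 2 = -(Real.log 2 + Real.log 2) by ring, Real.exp_neg, Real.exp_add,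
    Real.exp_log (by norm_num)]
  norm_num

lemma exp_log2' : Real.exp (2 * Real.log 2) = 4 := by
  rw [show 2 * Real.log 2 = (Real.log 2 + Real.log 2) by ring, Real.exp_add,
    Real.exp_log (by norm_num)]
  norm_num

lemma exp_lt {s : ℝ} (hs : Real.log 2 < s) : Real.exp (-2 * s) < 1 / 4 := by
  rw [← exp_log2]; exact Real.exp_lt_exp.2 (by linarith)

lemma P_facts {s : ℝ} (hs : Real.log 2 < s) : 1 / 2 < P s ∧ P s < 1 ∧
    Real.exp (-2 * s) = P s * (1 - P s) := by
  have h := exp_lt hs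
  have hp := Real.exp_pos (-2 * s)
  have hsq := Real.sq_sqrt (show 0 ≤ 1 / 4 - Real.exp (-2 * s) by linarith)
  have hpos := Real.sqrt_pos.2 (show 0 < 1 / 4 - Real.exp (-2 * s) by linarith)
  unfold P
  set t := Real.sqrt (1 / 4 - Real.exp (-2 * s))
  refine ⟨by linarith, by nlinarith, by nlinarith⟩

lemma g3_eq {s : ℝ} (hs : Real.log 2 < s) : g3 s = 2 - 2 / P s - 4 * Real.log (P s) := by
  obtain ⟨h1, h2, h3⟩ := P_facts hs
  have ht : Real.sqrt (1 / 4 - Real.exp (-2 * s)) = P s - 1 / 2 := by unfold P; ring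
  have he : Real.exp (2 * s) = 1 / (P s * (1 - P s)) := by
    rw [← h3, show -2 * s = -(2 * s) by ring, Real.exp_neg]; simp
  unfold g3
  rw [ht, he]
  have a1 : P s ≠ 0 := by linarith
  have a2 : 1 - P s ≠ 0 := by linarith
  rw [show 1 / 2 + (P s - 1 / 2) = P s by ring]
  field_simp
  ring

lemma h_nonneg {p : ℝ} (h1 : 1 / 2 < p) (h2 : p < 1) : 0 ≤ 2 - 2 / p - 4 * Real.log p := by
  have hanti : AntitoneOn (fun p : ℝ => 2 - 2 / p - 4 * Real.log p) (Icc (1/2) 1) := by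
    have hd : ∀ x : ℝ, 0 < x → HasDerivAt (fun p : ℝ => 2 - 2 / p - 4 * Real.log p)
        ((2 - 4 * x) / x ^ 2) x := by
      intro x hx
      have e := (((hasDerivAt_inv hx.ne').const_mul 2).const_sub 2).sub
        ((Real.hasDerivAt_log hx.ne').const_mul 4)
      simp only [div_eq_mul_inv]
      refine HasDerivAt.congr_deriv e ?_
      field_simp
    refine antitoneOn_of_deriv_nonpos (convex_Icc _ _) ?_ ?_ ?_
    · intro x hx
      exact (hd x (by linarith [hx.1])).continuousAt.continuousWithinAt
    · intro x hx
      rw [interior_Icc] at hx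
      exact (hd x (by linarith [hx.1])).differentiableAt.differentiableWithinAt
    · intro x hx
      rw [interior_Icc] at hx
      rw [(hd x (by linarith [hx.1])).deriv]
      exact div_nonpos_of_nonpos_of_nonneg (by linarith [hx.1]) (by positivity)
  have := hanti (a := p) (b := 1) ⟨h1.le, h2.le⟩ ⟨by norm_num, le_rfl⟩ h2.le
  simpa using this

lemma g3_nonneg {s : ℝ} (hs : Real.log 2 < s) : 0 ≤ g3 s := by
  rw [g3_eq hs]
  exact h_nonneg (P_facts hs).1 (P_facts hs).2.1

lemma AP_deriv {s : ℝ} (hs : Real.log 2 < s) : HasDerivAt (fun s => A (P s)) (g3 s) s := by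
  obtain ⟨h1, h2, h3⟩ := P_facts hs
  have hlt := exp_lt hs
  have ht : Real.sqrt (1 / 4 - Real.exp (-2 * s)) = P s - 1 / 2 := by unfold P; ring
  have hP : HasDerivAt P (P s * (1 - P s) / (P s - 1 / 2)) s := by
    have e0 : HasDerivAt (fun s : ℝ => -2 * s) (-2) s := by
      simpa using (hasDerivAt_id s).const_mul (-2)
    have e := ((e0.exp.const_sub (1/4)).sqrt (by linarith)).const_add (1/2)
    rw [ht, h3] at e
    unfold P at e ⊢
    refine HasDerivAt.congr_deriv e ?_
    ring
  have hA : HasDerivAt A (-2 / P s + 1 / P s ^ 2 - 2 * (Real.log (P s) / (1 - P s))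
      + 2 * Real.log (P s) / P s) (P s) := by
    generalize P s = p at *
    have hp : p ≠ 0 := by linarith
    have hs : HasDerivAt (fun y : ℝ => 1 - y) (-1) p := by
      simpa using (hasDerivAt_id p).const_sub 1
    have e2 := (li_hasDerivAt (x := 1 - p) (by linarith) (by linarith)).comp p hs
    have el := Real.hasDerivAt_log hp
    have e := (((el.const_mul (-2)).sub (hasDerivAt_inv hp)).sub (e2.const_mul 2)).add (el.pow 2)
    unfold A
    simp only [one_div]
    refine HasDerivAt.congr_deriv e ?_
    have : 1 - p ≠ 0 := by linarith
    simp only [sub_sub_cancel]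
    field_simp
    norm_num
    try ring
  have := hA.comp s hP
  refine HasDerivAt.congr_deriv this ?_
  rw [g3_eq hs]
  generalize P s = p at *
  have hp : p ≠ 0 := by linarith
  have : 1 - p ≠ 0 := by linarith
  have : p - 1 / 2 ≠ 0 := by linarith
  have : 2 * p - 1 ≠ 0 := by linarith
  field_simp
  ring

lemma A_cont : ContinuousOn A (Icc (1/2) 1) := by
  have hl : ContinuousOn Real.log (Icc (1/2) 1) :=
    Real.continuousOn_log.mono (fun x hx => by
      have := hx.1
      simp only [mem_compl_iff, mem_singleton_iff]; linarith)
  have hli : ContinuousOn (fun p => li (1 - p)) (Icc (1/2) 1) := by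
    refine li_continuousOn.comp (by fun_prop) ?_
    intro x hx
    exact ⟨by linarith [hx.2], by linarith [hx.1]⟩
  have hi : ContinuousOn (fun p : ℝ => 1 / p) (Icc (1/2) 1) :=
    continuousOn_const.div continuousOn_id (fun x hx => by
      have := hx.1
      exact (by linarith : x ≠ 0))
  unfold A
  exact (((continuousOn_const.mul hl).sub hi).sub (continuousOn_const.mul hli)).add (hl.pow 2)

lemma P_cont : Continuous P := by unfold P; fun_prop

lemma P_log2 : P (Real.log 2) = 1 / 2 := by unfold P; rw [exp_log2]; simp

lemma P_mem {s : ℝ} (hs : Real.log 2 ≤ s) : P s ∈ Icc (1/2 : ℝ) 1 := by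
  rcases hs.eq_or_lt with h | h
  · rw [← h, P_log2]; norm_num
  · exact ⟨(P_facts h).1.le, (P_facts h).2.1.le⟩

lemma AP_cont : ContinuousWithinAt (fun s => A (P s)) (Ici (Real.log 2)) (Real.log 2) := by
  have : ContinuousOn (fun s => A (P s)) (Ici (Real.log 2)) :=
    A_cont.comp P_cont.continuousOn (fun s hs => P_mem hs)
  exact this _ self_mem_Ici

lemma AP_tendsto : Tendsto (fun s => A (P s)) atTop (𝓝 (A 1)) := by
  have h1 : Tendsto P atTop (𝓝 1) := by
    have e0 : Tendsto (fun s : ℝ => Real.exp (-2 * s)) atTop (𝓝 0) :=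
      Real.tendsto_exp_atBot.comp (tendsto_id.const_mul_atTop_of_neg (by norm_num))
    have e := ((e0.const_sub (1/4)).sqrt).const_add (1/2)
    have h4 : Real.sqrt (1 / 4 - 0) = 1 / 2 := by
      rw [show (1:ℝ) / 4 - 0 = (1 / 2) ^ 2 by norm_num]
      exact Real.sqrt_sq (by norm_num)
    rw [h4] at e
    norm_num at e
    unfold P
    norm_num
    exact e
  have h2 : Tendsto P atTop (𝓝[Icc (1/2) 1] 1) := by
    refine tendsto_nhdsWithin_iff.2 ⟨h1, ?_⟩
    filter_upwards [eventually_ge_atTop (Real.log 2)] with s hs using P_mem hs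
  exact (A_cont 1 (by norm_num)).tendsto.comp h2

lemma int3 : IntegrableOn g3 (Ioi (Real.log 2)) :=
  integrableOn_Ioi_deriv_of_nonneg AP_cont (fun _ hx => AP_deriv hx) (fun _ hx => g3_nonneg hx)
    AP_tendsto

lemma val3 : ∫ s in Ioi (Real.log 2), g3 s =
    1 - 2 * Real.log 2 - 2 * Real.log 2 ^ 2 + Real.pi ^ 2 / 6 := by
  rw [integral_Ioi_of_hasDerivAt_of_nonneg AP_cont (fun _ hx => AP_deriv hx)
    (fun _ hx => g3_nonneg hx) AP_tendsto, P_log2]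
  have h := li_half
  unfold A
  rw [sub_self, li_zero, show (1:ℝ) - 1/2 = 1/2 by norm_num, Real.log_one]
  have : Real.log (1/2) = - Real.log 2 := by rw [one_div, Real.log_inv]
  rw [this]
  norm_num at h ⊢
  linarith

lemma val2 : ∫ s in Ioc 0 (Real.log 2), (-Real.exp (2 * s) + 2 + 4 * s) =
    -3 / 2 + 2 * Real.log 2 + 2 * Real.log 2 ^ 2 := by
  rw [← intervalIntegral.integral_of_le (Real.log_nonneg (by norm_num))]
  rw [intervalIntegral.integral_eq_sub_of_hasDerivAt
    (f := fun s => -Real.exp (2 * s) / 2 + 2 * s + 2 * s ^ 2)]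
  · rw [exp_log2']; simp; ring
  · intro x _
    have e0 : HasDerivAt (fun s : ℝ => 2 * s) 2 x := by
      simpa using (hasDerivAt_id x).const_mul 2
    have e := ((e0.exp.neg.div_const 2).add e0).add ((hasDerivAt_pow 2 x).const_mul 2)
    refine HasDerivAt.congr_deriv e ?_
    norm_num
    ring
  · exact Continuous.intervalIntegrable (by fun_prop) _ _

lemma mid_nonneg {s : ℝ} (h0 : 0 ≤ s) (h1 : s ≤ Real.log 2) :
    0 ≤ -Real.exp (2 * s) + 2 + 4 * s := by
  have hl : 0 < Real.log 2 := Real.log_pos (by norm_num)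
  have hl2 := Real.log_two_gt_d9
  -- convexity of exp : exp (2 s) ≤ 1 + 3 s / log 2
  have hc := convexOn_exp.2 (mem_univ (0:ℝ)) (mem_univ (2 * Real.log 2))
    (show 0 ≤ 1 - s / Real.log 2 by rw [sub_nonneg, div_le_one hl]; exact h1)
    (show 0 ≤ s / Real.log 2 by positivity) (by ring)
  simp only [smul_eq_mul, mul_zero, zero_add, Real.exp_zero, exp_log2'] at hc
  rw [show s / Real.log 2 * (2 * Real.log 2) = 2 * s by field_simp] at hc
  have hs : s / Real.log 2 * Real.log 2 = s := by field_simp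
  have hle : s / Real.log 2 ≤ 1 := by rw [div_le_one hl]; exact h1
  have hge : 0 ≤ s / Real.log 2 := by positivity
  set r := s / Real.log 2
  nlinarith

end EtaAux

open EtaAux Set in
theorem etaLog_isProbabilityDensity :
    (∀ s : ℝ, 0 ≤ etaLog s) ∧ Integrable etaLog ∧ (∫ s : ℝ, etaLog s) = 1 := by
  have hl : 0 < Real.log 2 := Real.log_pos (by norm_num)
  have q1 : EqOn etaLog (fun s => 6 / Real.pi ^ 2 * Real.exp (2 * s)) (Iic 0) := by
    intro s hs
    simp only [etaLog, if_pos (mem_Iic.1 hs)]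
  have q2 : EqOn etaLog (fun s => 6 / Real.pi ^ 2 * (-Real.exp (2 * s) + 2 + 4 * s))
      (Ioc 0 (Real.log 2)) := by
    intro s hs
    simp only [etaLog, if_neg (not_le.2 hs.1), if_pos hs.2]
  have q3 : EqOn etaLog (fun s => 6 / Real.pi ^ 2 * g3 s) (Ioi (Real.log 2)) := by
    intro s hs
    have hs' := mem_Ioi.1 hs
    simp only [etaLog, if_neg (not_le.2 (hl.trans hs')), if_neg (not_le.2 hs'), g3]
  have i1 : IntegrableOn etaLog (Iic 0) :=
    IntegrableOn.congr_fun ((integrableOn_exp_mul_Iic (by norm_num) 0).const_mul _) q1.symm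
      measurableSet_Iic
  have i2 : IntegrableOn etaLog (Ioc 0 (Real.log 2)) := by
    refine IntegrableOn.congr_fun ?_ q2.symm measurableSet_Ioc
    exact (Continuous.integrableOn_Icc (by fun_prop)).mono_set Ioc_subset_Icc_self
  have i3 : IntegrableOn etaLog (Ioi (Real.log 2)) :=
    IntegrableOn.congr_fun (int3.const_mul _) q3.symm measurableSet_Ioi
  have i23 : IntegrableOn etaLog (Ioi 0) := by
    rw [← Ioc_union_Ioi_eq_Ioi hl.le]; exact i2.union i3
  have i : Integrable etaLog := by
    rw [← integrableOn_univ, ← Iic_union_Ioi (a := (0:ℝ))]; exact i1.union i23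
  refine ⟨?_, i, ?_⟩
  · intro s
    have hc : 0 ≤ 6 / Real.pi ^ 2 := by positivity
    rcases le_or_gt s 0 with h | h
    · rw [q1 h]; positivity
    rcases le_or_gt s (Real.log 2) with h' | h'
    · rw [q2 ⟨h, h'⟩]; exact mul_nonneg hc (mid_nonneg h.le h')
    · rw [q3 h']; exact mul_nonneg hc (g3_nonneg h')
  · rw [← intervalIntegral.integral_Iic_add_Ioi i1 i23, ← Ioc_union_Ioi_eq_Ioi hl.le,
      setIntegral_union (Ioc_disjoint_Ioi le_rfl) measurableSet_Ioi i2 i3,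
      setIntegral_congr_fun measurableSet_Iic q1, setIntegral_congr_fun measurableSet_Ioc q2,
      setIntegral_congr_fun measurableSet_Ioi q3, integral_const_mul, integral_const_mul,
      integral_const_mul, val2, val3, integral_exp_mul_Iic (by norm_num)]
    have := Real.pi_ne_zero
    simp
    field_simp
    ring
end
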